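/- arXiv:2302.13420 — 2 statements merged into one kernel-verified Lean document; each statement's English description precedes it below -/
import Mathlib

section
/- Let C ⊂ ℙ² be a plane curve of degree d ≥ 3 defined over the prime field 𝔽_p by a homogeneous polynomial F ∈ 𝔽_p[x,y,z] of degree d that is irreducible over 𝔽_p. If p ≥ 4(d-1)²(d-2)², then C is not tangent-filling over 𝔽_p. -/
open MvPolynomial

/-- `Q` is a smooth point (given by a nonzero coordinate representative) of the plane
curve defined by the homogeneous polynomial `F`. -/
def SmoothPoint {K : Type*} [CommRing K] (F : MvPolynomial (Fin 3) K) (Q : Fin 3 → K) : Prop :=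
  Q ≠ 0 ∧ eval Q F = 0 ∧ ∃ i : Fin 3, eval Q (pderiv i F) ≠ 0

/-- The point with coordinates `P` lies on the tangent line to the curve `{F = 0}` at the
point with coordinates `Q`. -/
def OnTangentLine {K : Type*} [CommRing K] (F : MvPolynomial (Fin 3) K) (Q P : Fin 3 → K) : Prop :=
  eval Q (pderiv 0 F) * P 0 + eval Q (pderiv 1 F) * P 1 + eval Q (pderiv 2 F) * P 2 = 0

/-- The curve `{F = 0}` is tangent-filling: every point of the projective plane lies on the
tangent line at some smooth point of the curve. -/
def TangentFilling {K : Type*} [CommRing K] (F : MvPolynomial (Fin 3) K) : Prop :=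
  ∀ P : Fin 3 → K, P ≠ 0 → ∃ Q : Fin 3 → K, SmoothPoint F Q ∧ OnTangentLine F Q P

/-!
If the `N` rational smooth points of `F = 0` have tangent lines covering the plane, these lines form
a dual blocking set. The tangents through a given point `P` touch the curve on its polar with
respect to `P`, so by Bézout fewer than `p` of them pass through `P`; Blokhuis' theorem on blocking
sets in planes of prime order, dualized, then gives `3 * (p + 1) ≤ 2 * N`.

The method of Stöhr and Voloch gives the opposite estimate `2 * N ≤ 3 * p + 2`. Each smooth point
is the center of a formal arc along the curve. Among the forms of degree `3 * (d - 2)`, those that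
vanish to high order at one chosen point have a Wronskian with one row replaced by the
Frobenius twist; it vanishes to high order at every rational point, extra-highly at the chosen one,
but not identically on the curve, and Bézout bounds `N`.
-/

section Lacunary

open Polynomial (wronskian derivative)
open scoped Polynomial

section FiniteField

variable {K : Type*} [Field K] [Fintype K]

lemma splits_dvd_X_pow_card_sub_X_mul_derivative {h : K[X]} (hs : h.Splits) :
    h ∣ (Polynomial.X ^ Fintype.card K - Polynomial.X) * derivative h := by
  induction hs using Submonoid.closure_induction with
  | mem h hh =>
    obtain ⟨a, rfl⟩ | ⟨a, rfl⟩ := hh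
    · simp
    · suffices Polynomial.X + Polynomial.C a ∣ Polynomial.X ^ Fintype.card K - Polynomial.X by
        simpa using this
      rw [← sub_neg_eq_add, ← Polynomial.C_neg, Polynomial.dvd_iff_isRoot]
      simp [Polynomial.IsRoot, FiniteField.pow_card]
  | one => simp
  | mul a b _ _ ha hb =>
    rw [Polynomial.derivative_mul, mul_add, ← mul_assoc, mul_left_comm]
    exact dvd_add (mul_dvd_mul_right ha b) (mul_dvd_mul_left a hb)

lemma splits_dvd_mul_wronskian {f g : K[X]} (hs : (Polynomial.X ^ Fintype.card K * f + g).Splits) :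
    Polynomial.X ^ Fintype.card K * f + g ∣ (Polynomial.X * f + g) * wronskian f g := by
  set h := Polynomial.X ^ Fintype.card K * f + g with h_def
  have h_deriv : derivative h = Polynomial.X ^ Fintype.card K * derivative f + derivative g := by
    simp [h_def, Polynomial.derivative_X_pow]
  obtain ⟨k, hk⟩ := splits_dvd_X_pow_card_sub_X_mul_derivative hs
  refine ⟨wronskian f g + (Polynomial.X ^ Fintype.card K - Polynomial.X) * f * derivative f -
    f ^ 2 * k, ?_⟩
  simp only [wronskian]
  linear_combination (-f ^ 2) * hk + f ^ 2 *
    (Polynomial.X ^ Fintype.card K - Polynomial.X) * h_deriv -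
    (f * derivative g - derivative f * g) * h_def -
    (Polynomial.X ^ Fintype.card K - Polynomial.X) * f * derivative f * h_def

end FiniteField

lemma eq_C_of_derivative_eq_zero_of_natDegree_lt {R : Type*} [CommRing R] [NoZeroDivisors R]
    (p : ℕ) [CharP R p] {f : R[X]} (hderiv : derivative f = 0)
    (hdeg : f.natDegree < p) : f = Polynomial.C (f.coeff 0) := by
  have hexpand := Polynomial.expand_contract p hderiv (Nat.ne_zero_of_lt hdeg)
  have hnatDegree := Polynomial.natDegree_expand p (Polynomial.contract p f)
  rw [hexpand] at hnatDegree
  refine Polynomial.eq_C_of_natDegree_eq_zero (hnatDegree.trans ?_)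
  have hcontract : (Polynomial.contract p f).natDegree = 0 :=
    Nat.lt_one_iff.1 (lt_of_mul_lt_mul_right (by omega) p.zero_le)
  rw [hcontract, zero_mul]

lemma natDegree_modByMonic_X_pow_le {R : Type*} [CommRing R] {h : R[X]} {e n : ℕ}
    (hgap : ∀ j, e < j → j < n → h.coeff j = 0) :
    (h %ₘ Polynomial.X ^ n).natDegree ≤ e := by
  nontriviality R
  refine Polynomial.natDegree_le_iff_coeff_eq_zero.2 fun j hj ↦ ?_
  by_cases hjn : j < n
  · have hj0 := hgap j hj hjn
    rw [← Polynomial.modByMonic_add_div h (Polynomial.X ^ n), Polynomial.coeff_add,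
      Polynomial.coeff_X_pow_mul'] at hj0
    simpa [not_le.2 hjn] using hj0
  · refine Polynomial.coeff_eq_zero_of_degree_lt
      ((Polynomial.degree_modByMonic_lt h (Polynomial.monic_X_pow n)).trans_le ?_)
    rw [Polynomial.degree_X_pow]
    exact_mod_cast not_lt.1 hjn

variable {p : ℕ} [Fact p.Prime]

lemma lacunary_dichotomy_of_isCoprime (hp2 : p ≠ 2) {f g : (ZMod p)[X]} (hf : f ≠ 0)
    (hfp : f.natDegree < p) (hgf : g.natDegree ≤ f.natDegree) (hfg : IsCoprime f g)
    (hg0 : g.coeff 0 ≠ 0) (hs : (Polynomial.X ^ p * f + g).Splits) :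
    p + 1 ≤ 2 * f.natDegree ∨
      ∃ β, (Polynomial.X - Polynomial.C β) ^ p ∣ Polynomial.X ^ p * f + g := by
  have hp : p.Prime := Fact.out
  by_cases hw : wronskian f g = 0
  · obtain ⟨hf', hg'⟩ := hfg.wronskian_eq_zero_iff.1 hw
    obtain ⟨a, rfl⟩ : ∃ a, f = Polynomial.C a :=
      ⟨_, eq_C_of_derivative_eq_zero_of_natDegree_lt p hf' hfp⟩
    obtain ⟨b, rfl⟩ : ∃ b, g = Polynomial.C b :=
      ⟨_, eq_C_of_derivative_eq_zero_of_natDegree_lt p hg' (hgf.trans_lt hfp)⟩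
    have ha : a ≠ 0 := by simpa using hf
    have hba : Polynomial.C b = Polynomial.C (b / a) * Polynomial.C a := by
      rw [← Polynomial.C_mul, div_mul_cancel₀ _ ha]
    refine .inr ⟨-(b / a), Polynomial.C a, ?_⟩
    rw [sub_pow_char, ← Polynomial.C_pow, ZMod.pow_card, Polynomial.C_neg]
    linear_combination hba
  · have hne : Polynomial.X * f + g ≠ 0 := fun h ↦ hg0 (by simpa using congrArg (·.coeff 0) h)
    have hle := Polynomial.natDegree_le_of_dvd
      (by simpa only [ZMod.card] using splits_dvd_mul_wronskian (K := ZMod p) (by simpa using hs))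
      (mul_ne_zero hne hw)
    have h_left : (Polynomial.X ^ p * f + g).natDegree = f.natDegree + p := by
      rw [Polynomial.natDegree_add_eq_left_of_natDegree_lt] <;>
        rw [Polynomial.natDegree_X_pow_mul _ hf]
      have := hp.pos
      omega
    have h_fac : (Polynomial.X * f + g).natDegree ≤ f.natDegree + 1 :=
      (Polynomial.natDegree_add_le _ _).trans
        (max_le (Polynomial.natDegree_X_mul hf).le (by omega))
    have h_wronskian := Polynomial.natDegree_wronskian_lt_add hw
    have h_mul := Polynomial.natDegree_mul_le (p := Polynomial.X * f + g) (q := wronskian f g)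
    have h_odd := hp.eq_two_or_odd
    omega

lemma lacunary_dichotomy {h : (ZMod p)[X]} {e : ℕ} (hp2 : p ≠ 2) (hdeg : h.natDegree = p + e)
    (h0 : h.coeff 0 ≠ 0) (hs : h.Splits) (hgap : ∀ j, e < j → j < p → h.coeff j = 0) :
    p + 1 ≤ 2 * e ∨ ∃ β, (Polynomial.X - Polynomial.C β) ^ p ∣ h := by
  have hp : p.Prime := Fact.out
  have hp0 := hp.two_le
  obtain hpe | hep := le_or_gt p e
  · omega
  have hXp : (Polynomial.X ^ p : (ZMod p)[X]).Monic := Polynomial.monic_X_pow p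
  set f := h /ₘ Polynomial.X ^ p
  set g := h %ₘ Polynomial.X ^ p
  have hfg : h = Polynomial.X ^ p * f + g := by rw [add_comm, Polynomial.modByMonic_add_div]
  have hf_deg : f.natDegree = e := by simp [f, Polynomial.natDegree_divByMonic _ hXp, hdeg]
  have hg_deg : g.natDegree ≤ e := natDegree_modByMonic_X_pow_le hgap
  obtain ⟨f₁, g₁, hf₁, hg₁, hunit⟩ := extract_gcd f g
  set c := gcd f g
  have hcop : IsCoprime f₁ g₁ := (gcd_isUnit_iff _ _).1 hunit
  have hch : h = c * (Polynomial.X ^ p * f₁ + g₁) := by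
    linear_combination hfg + Polynomial.X ^ p * hf₁ + hg₁
  have hg₁0 : g₁.coeff 0 ≠ 0 := fun h1 ↦ h0 (by
    simp [hch, Polynomial.mul_coeff_zero, h1, hp.ne_zero.symm])
  have hf : f ≠ 0 := by
    intro hf
    rw [hfg, hf, mul_zero, zero_add] at hdeg
    omega
  have hc : c ≠ 0 := left_ne_zero_of_mul (hf₁ ▸ hf)
  have hf₁0 : f₁ ≠ 0 := right_ne_zero_of_mul (hf₁ ▸ hf)
  have hg₁_ne : g₁ ≠ 0 := by rintro rfl; simp at hg₁0
  have hf_eq : c.natDegree + f₁.natDegree = e := by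
    rw [← Polynomial.natDegree_mul hc hf₁0, ← hf₁, hf_deg]
  have hg_le : c.natDegree + g₁.natDegree ≤ e := by
    rwa [← Polynomial.natDegree_mul hc hg₁_ne, ← hg₁]
  have hh : h ≠ 0 := by rintro rfl; simp at h0
  have hs₁ := hs.of_dvd hh (Dvd.intro_left c hch.symm)
  obtain hle | ⟨β, hβ⟩ :=
    lacunary_dichotomy_of_isCoprime hp2 hf₁0 (by omega) (by omega) hcop hg₁0 hs₁
  · left; omega
  · exact .inr ⟨β, hβ.trans (Dvd.intro_left c hch.symm)⟩

end Lacunary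

section BlockingSets

lemma totalDegree_C_mul_X_le {R σ : Type*} [CommSemiring R] (a : R) (i : σ) :
    (C a * X i).totalDegree ≤ 1 := by
  rw [C_mul_X_eq_monomial]
  exact (totalDegree_monomial_le _ _).trans (by simp)

/-- The product of the affine linear forms `x + bᵢ y + cᵢ` in the two variables `x = X 0` and
`y = X 1`. Its zeros are the points of the affine plane covered by the corresponding lines, all of
which are transversal to the `x`-direction. -/
noncomputable def affineProd {R ι : Type*} [CommRing R] (s : Finset ι) (b c : ι → R) :
    MvPolynomial (Fin 2) R :=
  ∏ i ∈ s, (X 0 + C (b i) * X 1 + C (c i))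

lemma totalDegree_affineProd_le {R ι : Type*} [CommRing R] (s : Finset ι) (b c : ι → R) :
    (affineProd s b c).totalDegree ≤ s.card := by
  refine (totalDegree_finsetProd _ _).trans ?_
  rw [Finset.card_eq_sum_ones]
  refine Finset.sum_le_sum fun i _ ↦ (totalDegree_add _ _).trans (max_le ?_ (by simp))
  refine (totalDegree_add _ _).trans (max_le ?_ (totalDegree_C_mul_X_le _ _))
  simpa using totalDegree_C_mul_X_le (1 : R) (0 : Fin 2)

lemma coeff_affineProd {R ι : Type*} [CommRing R] (s : Finset ι) (b c : ι → R) {m : Fin 2 →₀ ℕ}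
    (hm : m.degree = s.card) :
    coeff m (affineProd s b c) =
      (∏ i ∈ s, (Polynomial.X + Polynomial.C (b i))).coeff (m 0) := by
  nontriviality R
  classical
  induction s using Finset.induction_on generalizing m with
  | empty =>
    obtain rfl : m = 0 := (Finsupp.degree_eq_zero_iff m).1 (by simpa using hm)
    simp [affineProd]
  | insert a s ha ih =>
    set P := affineProd s b c
    set h := ∏ i ∈ s, (Polynomial.X + Polynomial.C (b i)) with h_def
    have hsum : m 0 + m 1 = s.card + 1 := by
      simpa [Finsupp.degree_eq_sum, Finset.card_insert_of_notMem ha] using hm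
    have hP : coeff m P = 0 := coeff_eq_zero_of_totalDegree_lt (by
      have hle : P.totalDegree ≤ s.card := totalDegree_affineProd_le s b c
      rw [← Finsupp.degree_apply, hm, Finset.card_insert_of_notMem ha]
      omega)
    have hX0 : coeff m (X 0 * P) = (Polynomial.X * h).coeff (m 0) := by
      rw [coeff_X_mul']
      obtain hm0 | ⟨k, hk⟩ : m 0 = 0 ∨ ∃ k, m 0 = k + 1 := by cases m 0 <;> simp
      · simp [hm0]
      · rw [if_pos (by simp [hk]), ih (by simp [Finsupp.degree_eq_sum]; omega), hk]
        simp [hk]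
    have hX1 : coeff m (X 1 * P) = h.coeff (m 0) := by
      rw [coeff_X_mul']
      by_cases hm1 : m 1 = 0
      · have hdeg : h.natDegree = s.card := by
          simpa using Polynomial.natDegree_prod_of_monic s _
            fun i _ ↦ Polynomial.monic_X_add_C (b i)
        rw [if_neg (by simp [hm1]), Polynomial.coeff_eq_zero_of_natDegree_lt (by omega)]
      · rw [if_pos (by simp [hm1]), ih (by simp [Finsupp.degree_eq_sum]; omega)]
        simp
    rw [affineProd, Finset.prod_insert ha, Finset.prod_insert ha, ← h_def]
    change coeff m (_ * P) = _
    rw [add_mul, add_mul, coeff_add, coeff_add, mul_assoc, coeff_C_mul, coeff_C_mul, hP, hX0, hX1]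
    simp [add_mul]

section FiniteField

variable {K : Type*} [Field K] [Fintype K] {ι : Type*}

lemma coeff_prod_eq_zero_of_affine_cover {s : Finset ι} {b c : ι → K}
    (hcover : ∀ x y, ∃ i ∈ s, x + b i * y + c i = 0) {j : ℕ} (hj : j < Fintype.card K)
    (hjs : j ≤ s.card) (hsj : s.card < j + Fintype.card K) :
    (∏ i ∈ s, (Polynomial.X + Polynomial.C (b i))).coeff j = 0 := by
  by_contra hne
  set m : Fin 2 →₀ ℕ := Finsupp.single 0 j + Finsupp.single 1 (s.card - j)
  have hm0 : m 0 = j := by simp [m]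
  have hm1 : m 1 = s.card - j := by simp [m]
  have hm : m.degree = s.card := by
    rw [Finsupp.degree_eq_sum, Fin.sum_univ_two, hm0, hm1, Nat.add_sub_cancel' hjs]
  rw [← hm0, ← coeff_affineProd s b c hm] at hne
  have hdeg : (affineProd s b c).totalDegree = m.degree :=
    le_antisymm (hm ▸ totalDegree_affineProd_le s b c) (by
      simpa [Finsupp.degree_apply, Finsupp.sum] using le_totalDegree (mem_support_iff.2 hne))
  obtain ⟨x, -, hx⟩ := combinatorial_nullstellensatz_exists_eval_nonzero _ m hne hdeg
    (fun _ ↦ (Finset.univ : Finset K)) (by simp only [Fin.forall_fin_two, Finset.card_univ]; omega)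
  obtain ⟨i, hi, h0⟩ := hcover (x 0) (x 1)
  exact hx (by simpa [affineProd, map_prod] using Finset.prod_eq_zero hi h0)

lemma jamison {σ : Type*} [Fintype σ] {s : Finset ι} (hs : s.Nonempty) (v : ι → σ → K)
    (hv : ∀ x : σ → K, x ≠ 0 → ∀ a, ∃ i ∈ s, x ⬝ᵥ v i = a) :
    Fintype.card σ * (Fintype.card K - 1) < s.card := by
  classical
  obtain ⟨i₀, hi₀⟩ := hs
  by_contra! hcard
  set H : MvPolynomial σ K := ∏ i ∈ s.erase i₀, (1 + ∑ k, C (v i k - v i₀ k) * X k) with H_def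
  have hdeg : H.totalDegree ≤ (s.erase i₀).card := by
    refine (totalDegree_finsetProd _ _).trans ?_
    rw [Finset.card_eq_sum_ones]
    refine Finset.sum_le_sum fun i _ ↦ (totalDegree_add _ _).trans (max_le (by simp) ?_)
    exact totalDegree_finsetSum_le fun k _ ↦ totalDegree_C_mul_X_le _ _
  have heval (x : σ → K) : eval x H = ∏ i ∈ s.erase i₀, (1 + x ⬝ᵥ v i - x ⬝ᵥ v i₀) := by
    simp only [H_def, map_prod, map_add, map_one, map_sum, map_mul, eval_C, eval_X]
    refine Finset.prod_congr rfl fun i _ ↦ ?_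
    rw [add_sub_assoc, ← dotProduct_sub, dotProduct_comm]
    rfl
  have hsum := MvPolynomial.sum_eval_eq_zero H (by
    have := Finset.card_erase_lt_of_mem hi₀
    rw [mul_comm]; omega)
  rw [Finset.sum_eq_single 0 _ (by simp), heval] at hsum
  · simp at hsum
  · intro x _ hx
    obtain ⟨i, hi, hxi⟩ := hv x hx (x ⬝ᵥ v i₀ - 1)
    rw [heval]
    refine Finset.prod_eq_zero (Finset.mem_erase.2 ⟨?_, hi⟩) (by rw [hxi]; ring)
    rintro rfl
    exact one_ne_zero (sub_eq_self.1 hxi.symm)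

variable {V : Type*} [AddCommGroup V] [Module K V] [FiniteDimensional K V]

lemma dual_jamison {s : Finset ι} (hs : s.Nonempty) {L : ι → Module.Dual K V} {P : V}
    (hP : ∀ i ∈ s, L i P ≠ 0) (hcover : ∀ Q ∉ K ∙ P, ∃ i ∈ s, L i Q = 0) :
    (Module.finrank K V - 1) * (Fintype.card K - 1) < s.card := by
  obtain ⟨i₀, hi₀⟩ := id hs
  have hP0 : P ≠ 0 := by rintro rfl; exact hP i₀ hi₀ (map_zero _)
  obtain ⟨W, hW⟩ := Submodule.exists_isCompl (K ∙ P)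
  let w := Module.finBasis K W
  have hrank : Module.finrank K W = Module.finrank K V - 1 := by
    have hadd := Submodule.finrank_add_eq_of_isCompl hW
    rw [finrank_span_singleton hP0] at hadd
    omega
  rw [← hrank, ← Fintype.card_fin (Module.finrank K W)]
  refine jamison hs (fun i k ↦ L i (w k) / L i P) fun x hx a ↦ ?_
  set Q : W := ∑ k, x k • w k with hQ
  have hQP : (Q : V) - a • P ∉ K ∙ P := fun hmem ↦ hx (by
    have hQ_mem : (Q : V) ∈ K ∙ P :=
      (Submodule.sub_mem_iff_left _
        (Submodule.smul_mem _ a (Submodule.mem_span_singleton_self P))).1 hmem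
    have hQ0 : Q = 0 := Subtype.ext (Submodule.disjoint_def.1 hW.disjoint _ hQ_mem Q.2)
    exact funext (Fintype.linearIndependent_iff.1 w.linearIndependent x (hQ ▸ hQ0)))
  obtain ⟨i, hi, h0⟩ := hcover _ hQP
  refine ⟨i, hi, ?_⟩
  have hLQ : L i Q = a * L i P := by simpa [sub_eq_zero] using h0
  have hLw : L i Q = ∑ k, x k * L i (w k) := by simp [hQ]
  rw [dotProduct]
  simp_rw [mul_div_assoc']
  rw [← Finset.sum_div, ← hLw, hLQ, mul_div_cancel_right₀ _ (hP i hi)]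

end FiniteField

section PrimeField

variable {p : ℕ} [Fact p.Prime] {ι : Type*}

lemma le_card_filter_of_pow_dvd_prod {s : Finset ι} {b : ι → ZMod p} {β : ZMod p} {n : ℕ}
    (h : (Polynomial.X - Polynomial.C β) ^ n ∣ ∏ i ∈ s, (Polynomial.X + Polynomial.C (b i))) :
    n ≤ (s.filter fun i ↦ b i = -β).card := by
  have h_roots : (∏ i ∈ s, (Polynomial.X + Polynomial.C (b i))).roots = s.val.map (-b ·) := by
    simpa using Polynomial.roots_multiset_prod_X_sub_C (s.val.map (-b ·))
  have hne : ∏ i ∈ s, (Polynomial.X + Polynomial.C (b i)) ≠ 0 :=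
    (Polynomial.monic_prod_of_monic _ _ fun i _ ↦ Polynomial.monic_X_add_C _).ne_zero
  rw [← Polynomial.le_rootMultiplicity_iff hne, ← Polynomial.count_roots, h_roots,
    Multiset.count_map] at h
  simp only [eq_comm (a := β), neg_eq_iff_eq_neg] at h
  rw [Finset.card_def, Finset.filter_val]
  convert h

lemma le_two_mul_card_of_affine_cover (hp2 : p ≠ 2) {s : Finset ι} {b c : ι → ZMod p}
    (hb : ∀ i ∈ s, b i ≠ 0) (hcover : ∀ x y, ∃ i ∈ s, x + b i * y + c i = 0)
    (hmult : ∀ β, (s.filter fun i ↦ b i = β).card < p) : 3 * p + 1 ≤ 2 * s.card := by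
  set h : Polynomial (ZMod p) := ∏ i ∈ s, (Polynomial.X + Polynomial.C (b i)) with h_def
  have hmonic : h.Monic := Polynomial.monic_prod_of_monic _ _ fun i _ ↦ Polynomial.monic_X_add_C _
  have hdeg : h.natDegree = s.card := by
    simpa using Polynomial.natDegree_prod_of_monic s _ fun i _ ↦ Polynomial.monic_X_add_C (b i)
  have hgap {j : ℕ} (hj : j < p) (hjs : j ≤ s.card) (hsj : s.card < j + p) : h.coeff j = 0 :=
    coeff_prod_eq_zero_of_affine_cover hcover (by rwa [ZMod.card]) hjs (by rwa [ZMod.card])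
  have hps : p ≤ s.card := by
    by_contra! hlt
    have hlead := hmonic.coeff_natDegree
    rw [hdeg, hgap hlt le_rfl (by omega)] at hlead
    exact zero_ne_one hlead
  have h0 : h.coeff 0 ≠ 0 := by
    rw [Polynomial.coeff_zero_eq_eval_zero, h_def, Polynomial.eval_prod]
    exact Finset.prod_ne_zero_iff.2 fun i hi ↦ by simpa using hb i hi
  obtain hle | ⟨β, hβ⟩ := lacunary_dichotomy (e := s.card - p) hp2 (by omega) h0
    (Polynomial.Splits.prod fun i _ ↦ Polynomial.Splits.X_add_C _)
    (fun j hj hjp ↦ hgap hjp (by omega) (by omega))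
  · omega
  · exact absurd (hmult (-β)) (le_card_filter_of_pow_dvd_prod hβ).not_gt

variable {V : Type*} [AddCommGroup V] [Module (ZMod p) V]

lemma le_two_mul_card_of_minimal_cover (hp2 : p ≠ 2) (hV : Module.finrank (ZMod p) V = 3)
    {L : ι → Module.Dual (ZMod p) V} {s : Finset ι} {e : ι} {P : V} (hP : P ≠ 0)
    (hLe : L e ≠ 0) (hLP : ∀ i ∈ s, L i P ≠ 0)
    (hcover : ∀ Q ≠ 0, L e Q = 0 ∨ ∃ i ∈ s, L i Q = 0)
    (hmult : ∀ Q ≠ 0, (s.filter fun i ↦ L i Q = 0).card < p) : 3 * p + 1 ≤ 2 * s.card := by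
  have hp : p.Prime := Fact.out
  have : FiniteDimensional (ZMod p) V := .of_finrank_pos (by omega)
  have hLeP : L e P = 0 := (hcover P hP).resolve_right fun ⟨i, hi, h0⟩ ↦ hLP i hi h0
  obtain ⟨R, hR⟩ : ∃ R, L e R ≠ 0 := by
    contrapose! hLe
    exact LinearMap.ext hLe
  have hs : s.Nonempty :=
    have ⟨i, hi, _⟩ := (hcover R fun h ↦ hR (by rw [h, map_zero])).resolve_left hR
    ⟨i, hi⟩
  by_contra! hlt
  obtain ⟨Q, hQP, hLQ⟩ : ∃ Q ∉ (ZMod p) ∙ P, ∀ i ∈ s, L i Q ≠ 0 := by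
    by_contra! hcon
    have hjam := dual_jamison hs hLP hcon
    rw [hV, ZMod.card] at hjam
    have := hp.two_le
    omega
  have hQ0 : Q ≠ 0 := by rintro rfl; exact hQP (Submodule.zero_mem _)
  have hLeQ : L e Q = 0 := (hcover Q hQ0).resolve_right fun ⟨i, hi, h0⟩ ↦ hLQ i hi h0
  refine hlt.not_ge (le_two_mul_card_of_affine_cover hp2 (b := fun i ↦ L i Q / L i P)
    (c := fun i ↦ L i R / L i P) (fun i hi ↦ div_ne_zero (hLQ i hi) (hLP i hi)) ?_ fun β ↦ ?_)
  · intro x y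
    have hLe_ne : L e (x • P + y • Q + R) ≠ 0 := by simpa [hLeP, hLeQ] using hR
    obtain ⟨i, hi, h0⟩ :=
      (hcover (x • P + y • Q + R) fun h ↦ hLe_ne (by rw [h, map_zero])).resolve_left hLe_ne
    refine ⟨i, hi, ?_⟩
    have := hLP i hi
    simp only [map_add, map_smul, smul_eq_mul] at h0
    field_simp
    linear_combination h0
  · have hne : Q - β • P ≠ 0 := fun h ↦
      hQP (Submodule.mem_span_singleton.2 ⟨β, (sub_eq_zero.1 h).symm⟩)
    convert hmult _ hne using 2
    refine Finset.filter_congr fun i hi ↦ ?_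
    rw [div_eq_iff (hLP i hi)]
    simp [sub_eq_zero]

theorem dual_blokhuis (hp2 : p ≠ 2) (hV : Module.finrank (ZMod p) V = 3)
    {L : ι → Module.Dual (ZMod p) V} {s : Finset ι} (hL : ∀ i ∈ s, L i ≠ 0)
    (hcover : ∀ P ≠ 0, ∃ i ∈ s, L i P = 0)
    (hmult : ∀ P ≠ 0, (s.filter fun i ↦ L i P = 0).card < p) : 3 * (p + 1) ≤ 2 * s.card := by
  classical
  induction s using Finset.strongInduction with
  | H s ih =>
  have hmult_erase (e : ι) (P : V) (hP : P ≠ 0) :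
      ((s.erase e).filter fun i ↦ L i P = 0).card < p :=
    (Finset.card_le_card (Finset.filter_subset_filter _ (s.erase_subset e))).trans_lt (hmult P hP)
  by_cases hmin : ∃ e ∈ s, ∀ P ≠ 0, ∃ i ∈ s.erase e, L i P = 0
  · obtain ⟨e, he, hcover_erase⟩ := hmin
    have hle := ih (s.erase e) (Finset.erase_ssubset he)
      (fun i hi ↦ hL i (Finset.mem_of_mem_erase hi)) hcover_erase (hmult_erase e)
    exact hle.trans (Nat.mul_le_mul_left 2 Finset.card_erase_le)
  · push Not at hmin
    have : Nontrivial V := Module.nontrivial_of_finrank_pos (R := ZMod p) (by omega)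
    obtain ⟨P₀, hP₀⟩ := exists_ne (0 : V)
    obtain ⟨e, he, -⟩ := hcover P₀ hP₀
    obtain ⟨P, hP, hLP⟩ := hmin e he
    have hle := le_two_mul_card_of_minimal_cover hp2 hV hP (hL e he) hLP
      (fun Q hQ ↦ by
        obtain ⟨i, hi, h0⟩ := hcover Q hQ
        obtain rfl | hie := eq_or_ne i e
        · exact .inl h0
        · exact .inr ⟨i, Finset.mem_erase.2 ⟨hie, hi⟩, h0⟩)
      (hmult_erase e)
    have hcard := Finset.card_erase_add_one he
    omega

end PrimeField

end BlockingSets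

section FrobeniusWronskian

open scoped PowerSeries

section CommRing

variable {R : Type*} [CommRing R]

/-- The Euler derivation `t d/dt` on power series. Unlike `d/dt` it does not lower orders, and it
acts on the leading coefficient of a power series of order `j` as multiplication by `j`. -/
noncomputable def theta (R : Type*) [CommRing R] : Derivation R R⟦X⟧ R⟦X⟧ :=
  (PowerSeries.X : R⟦X⟧) • PowerSeries.derivative R

lemma theta_apply (u : R⟦X⟧) : theta R u = PowerSeries.X * PowerSeries.derivative R u := rfl

lemma theta_X_pow_mul (c : ℕ) (v : R⟦X⟧) :
    theta R (PowerSeries.X ^ c * v) = PowerSeries.X ^ c * (theta R v + (c : R⟦X⟧) * v) := by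
  cases c with
  | zero => simp
  | succ c =>
    simp only [theta_apply, Derivation.leibniz, Derivation.leibniz_pow, PowerSeries.derivative_X,
      smul_eq_mul, nsmul_eq_mul, Nat.add_sub_cancel]
    ring

lemma exists_theta_pow_X_pow_mul (c : ℕ) (v : R⟦X⟧) (j : ℕ) :
    ∃ w, ((theta R).toLinearMap ^ j) (PowerSeries.X ^ c * v) = PowerSeries.X ^ c * w ∧
      PowerSeries.constantCoeff w = (c : R) ^ j * PowerSeries.constantCoeff v := by
  induction j with
  | zero => exact ⟨v, by simp⟩
  | succ j ih =>
    obtain ⟨w, hw, hw0⟩ := ih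
    refine ⟨theta R w + (c : R⟦X⟧) * w, ?_, ?_⟩
    · rw [pow_succ', Module.End.mul_apply, hw]
      exact theta_X_pow_mul c w
    · simp [theta_apply, hw0, pow_succ', mul_assoc]

/-- The Frobenius–Wronskian matrix of Stöhr and Voloch: its first row consists of the `q`-th powers
of the given power series, the following rows of their iterated Euler derivatives. -/
noncomputable def frobeniusWronskian (q : ℕ) {n : ℕ} (u : Fin (n + 1) → R⟦X⟧) :
    Matrix (Fin (n + 1)) (Fin (n + 1)) R⟦X⟧ :=
  Matrix.of (Fin.cons (fun i ↦ u i ^ q) fun j : Fin n ↦ fun i ↦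
    ((theta R).toLinearMap ^ (j : ℕ)) (u i))

lemma frobeniusWronskian_zero (q : ℕ) {n : ℕ} (u : Fin (n + 1) → R⟦X⟧) (i : Fin (n + 1)) :
    frobeniusWronskian q u 0 i = u i ^ q := rfl

lemma frobeniusWronskian_succ (q : ℕ) {n : ℕ} (u : Fin (n + 1) → R⟦X⟧) (j : Fin n)
    (i : Fin (n + 1)) :
    frobeniusWronskian q u j.succ i = ((theta R).toLinearMap ^ (j : ℕ)) (u i) := rfl

end CommRing

variable {K : Type*} [Field K]

lemma det_ne_zero_of_vandermonde_rows {n : ℕ} {M : Matrix (Fin (n + 1)) (Fin (n + 1)) K}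
    {a c : Fin (n + 1) → K} (ha : Function.Injective a) (hc : ∀ i, c i ≠ 0) (h00 : M 0 0 ≠ 0)
    (h0 : ∀ i, i ≠ 0 → M 0 i = 0) (hM : ∀ (j : Fin n) i, M j.succ i = a i ^ (j : ℕ) * c i) :
    M.det ≠ 0 := by
  have hsub : M.submatrix Fin.succ (Fin.succAbove 0) =
      (Matrix.vandermonde (a ∘ Fin.succ)).transpose * Matrix.diagonal (c ∘ Fin.succ) := by
    ext1 j i
    simp [Matrix.mul_diagonal, hM, Matrix.vandermonde_apply]
  rw [Matrix.det_succ_row_zero, Finset.sum_eq_single 0 (fun i _ hi ↦ by simp [h0 i hi]) (by simp),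
    hsub, Matrix.det_mul, Matrix.det_transpose, Matrix.det_diagonal]
  exact mul_ne_zero (by simpa using h00)
    (mul_ne_zero (Matrix.det_vandermonde_ne_zero_iff.2 (ha.comp (Fin.succ_injective n)))
      (Finset.prod_ne_zero_iff.2 fun i _ ↦ hc _))

lemma exists_det_frobeniusWronskian_X_pow_mul {q n : ℕ} (hq : 1 < q) {J : Fin (n + 1) → ℕ}
    {v : Fin (n + 1) → K⟦X⟧} (hJ : StrictMono J) (hJK : Function.Injective fun i ↦ (J i : K))
    (hv : ∀ i, PowerSeries.constantCoeff (v i) ≠ 0) :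
    ∃ w : K⟦X⟧, PowerSeries.constantCoeff w ≠ 0 ∧
      (frobeniusWronskian q fun i ↦ PowerSeries.X ^ J i * v i).det =
        PowerSeries.X ^ ((q - 1) * J 0 + ∑ i, J i) * w := by
  choose W hW hW0 using fun (i : Fin (n + 1)) (j : ℕ) ↦ exists_theta_pow_X_pow_mul (J i) (v i) j
  let M : Matrix (Fin (n + 1)) (Fin (n + 1)) K⟦X⟧ :=
    Matrix.of (Fin.cons (fun i ↦ PowerSeries.X ^ ((q - 1) * (J i - J 0)) * v i ^ q)
      fun j : Fin n ↦ fun i ↦ W i j)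
  let A : Fin (n + 1) → K⟦X⟧ := Fin.cons (PowerSeries.X ^ ((q - 1) * J 0)) fun _ ↦ 1
  have hfac : (frobeniusWronskian q fun i ↦ PowerSeries.X ^ J i * v i) =
      Matrix.diagonal A * M * Matrix.diagonal fun i ↦ PowerSeries.X ^ J i := by
    ext1 r i
    rw [Matrix.mul_diagonal, Matrix.diagonal_mul]
    refine Fin.cases ?_ (fun j ↦ ?_) r
    · have hexp : J i * q = (q - 1) * J 0 + (q - 1) * (J i - J 0) + J i := by
        rw [← mul_add, Nat.add_sub_cancel' (hJ.monotone (Fin.zero_le i)), mul_comm, ← Nat.succ_mul,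
          Nat.succ_eq_add_one, Nat.sub_add_cancel hq.le]
      simp only [frobeniusWronskian_zero, A, M, Fin.cons_zero, Matrix.of_apply]
      rw [mul_pow, ← pow_mul, hexp]
      ring
    · simp only [frobeniusWronskian_succ, A, M, Fin.cons_succ, Matrix.of_apply, hW]
      ring
  refine ⟨M.det, ?_, ?_⟩
  · rw [RingHom.map_det]
    refine det_ne_zero_of_vandermonde_rows hJK hv (by simp [M, hv]) (fun i hi ↦ ?_)
      fun j i ↦ by simp [M, hW0]
    have hpos : (q - 1) * (J i - J 0) ≠ 0 :=
      Nat.mul_ne_zero (by omega) (Nat.sub_ne_zero_of_lt (hJ (Fin.pos_of_ne_zero hi)))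
    simp [M, hpos]
  · rw [hfac, Matrix.det_mul, Matrix.det_mul, Matrix.det_diagonal, Matrix.det_diagonal,
      Fin.prod_univ_succ, Finset.prod_pow_eq_pow_sum, pow_add]
    simp only [A, Fin.cons_zero, Fin.cons_succ, Finset.prod_const_one]
    ring

lemma exists_X_pow_mul_mem_of_ne_bot {U : Submodule K K⟦X⟧} (hU : U ≠ ⊥) :
    ∃ (j : ℕ) (v : K⟦X⟧), PowerSeries.constantCoeff v ≠ 0 ∧ PowerSeries.X ^ j * v ∈ U ∧
      ∀ u ∈ U, PowerSeries.X ^ j ∣ u := by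
  obtain ⟨u₀, hu₀⟩ := (Submodule.ne_bot_iff U).1 hU
  obtain ⟨u, ⟨hu, hu0⟩, hmin⟩ := exists_minimalFor_of_wellFoundedLT
    (fun u ↦ u ∈ U ∧ u ≠ 0) (fun u : K⟦X⟧ ↦ u.order.toNat) ⟨u₀, hu₀⟩
  refine ⟨u.order.toNat, u.divXPowOrder, ?_, ?_, fun w hw ↦ ?_⟩
  · rwa [Ne, PowerSeries.constantCoeff_divXPowOrder_eq_zero_iff]
  · rwa [PowerSeries.X_pow_order_mul_divXPowOrder]
  · by_cases hw0 : w = 0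
    · exact hw0 ▸ dvd_zero _
    · have hle : u.order.toNat ≤ w.order.toNat := (le_total _ _).elim id (hmin ⟨hw, hw0⟩)
      exact (pow_dvd_pow _ hle).trans PowerSeries.X_pow_order_dvd

lemma le_finrank_inf_ker {V W : Type*} [AddCommGroup V] [Module K V] [AddCommGroup W] [Module K W]
    [FiniteDimensional K W] {N : ℕ} (U : Submodule K V) [FiniteDimensional K U] (φ : V →ₗ[K] W)
    (hN : N + Module.finrank K W ≤ Module.finrank K U) :
    N ≤ Module.finrank K (U ⊓ LinearMap.ker φ : Submodule K V) := by
  have hker : (LinearMap.ker (φ ∘ₗ U.subtype)).map U.subtype = U ⊓ LinearMap.ker φ := by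
    rw [LinearMap.ker_comp, Submodule.map_comap_subtype]
  rw [← hker, Submodule.finrank_map_subtype_eq]
  have := LinearMap.finrank_range_add_finrank_ker (φ ∘ₗ U.subtype)
  have := Submodule.finrank_le (LinearMap.range (φ ∘ₗ U.subtype))
  omega

lemma exists_strictMono_X_pow_mul_mem {N : ℕ} (U : Submodule K K⟦X⟧) [FiniteDimensional K U]
    (hU : N ≤ Module.finrank K U) :
    ∃ (J : Fin N → ℕ) (v : Fin N → K⟦X⟧), StrictMono J ∧
      ∀ i, PowerSeries.constantCoeff (v i) ≠ 0 ∧ PowerSeries.X ^ J i * v i ∈ U := by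
  induction N generalizing U with
  | zero => exact ⟨Fin.elim0, Fin.elim0, Subsingleton.strictMono _, fun i ↦ i.elim0⟩
  | succ N ih =>
    have hbot : U ≠ ⊥ := by
      rintro rfl
      simp at hU
    obtain ⟨j, v₀, hv₀, hmem, hdvd⟩ := exists_X_pow_mul_mem_of_ne_bot hbot
    obtain ⟨J, v, hJ, hv⟩ := ih (U ⊓ LinearMap.ker (PowerSeries.coeff j))
      (le_finrank_inf_ker U _ (by rwa [Module.finrank_self]))
    refine ⟨Fin.cons j J, Fin.cons v₀ v, Fin.strictMono_cons.2 ⟨fun i ↦ ?_, hJ⟩, ?_⟩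
    · obtain ⟨hU, hker⟩ := (hv i).2
      by_contra! hle
      have hlow : ∀ l ≤ j, PowerSeries.coeff l (PowerSeries.X ^ J i * v i) = 0 := by
        intro l hl
        rcases hl.lt_or_eq with hl | rfl
        · exact PowerSeries.X_pow_dvd_iff.1 (hdvd _ hU) l hl
        · exact hker
      exact (hv i).1 (by simpa [PowerSeries.coeff_X_pow_mul'] using hlow _ hle)
    · exact Fin.cases ⟨hv₀, hmem⟩ fun i ↦ ⟨(hv i).1, (hv i).2.1⟩

section FiniteField

variable [Fintype K] {n : ℕ}

lemma frobeniusWronskian_sum_smul (u : Fin (n + 1) → K⟦X⟧)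
    (A : Matrix (Fin (n + 1)) (Fin (n + 1)) K) :
    (frobeniusWronskian (Fintype.card K) fun i ↦ ∑ l, A l i • u l) =
      frobeniusWronskian (Fintype.card K) u * A.map (PowerSeries.C (R := K)) := by
  ext1 r i
  simp only [Matrix.mul_apply, Matrix.map_apply, mul_comm _ (PowerSeries.C _),
    ← PowerSeries.smul_eq_C_mul]
  refine Fin.cases ?_ (fun j ↦ ?_) r
  · simp only [frobeniusWronskian_zero, ← FiniteField.frobeniusAlgHom_apply K, map_sum, map_smul]
  · simp only [frobeniusWronskian_succ, map_sum, map_smul]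

lemma sum_val_fin (n : ℕ) : ∑ i : Fin n, (i : ℕ) = n.choose 2 := by
  rw [Fin.sum_univ_eq_sum_range fun i ↦ i, Finset.sum_range_id, Nat.choose_two_right]

lemma mul_add_choose_two_le {q r : ℕ} (hq : 1 ≤ q) {J : Fin (n + 1) → ℕ} (hJ : StrictMono J)
    (hr : r ≤ J 0) :
    (q + n) * r + (n + 1).choose 2 ≤ (q - 1) * J 0 + ∑ i, J i := by
  have hle : ∀ i : Fin (n + 1), r + (i : ℕ) ≤ J i := by
    intro i
    induction i using Fin.induction with
    | zero => simpa using hr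
    | succ i ih =>
      have := hJ i.castSucc_lt_succ
      simp only [Fin.val_castSucc, Fin.val_succ] at ih ⊢
      omega
  calc (q + n) * r + (n + 1).choose 2
      = (q - 1) * r + ∑ i : Fin (n + 1), (r + (i : ℕ)) := by
        rw [Finset.sum_add_distrib, sum_val_fin, Finset.sum_const, Finset.card_fin, smul_eq_mul,
          ← add_assoc, ← add_mul]
        congr 2
        omega
    _ ≤ _ := add_le_add (Nat.mul_le_mul_left _ hr) (Finset.sum_le_sum fun i _ ↦ hle i)

/-- The hypothesis `hlow` keeps the orders of the nonzero elements of the span distinct modulo the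
characteristic. -/
theorem X_pow_dvd_det_frobeniusWronskian (p : ℕ) [CharP K p] {r : ℕ} {u : Fin (n + 1) → K⟦X⟧}
    (hu : LinearIndependent K u) (hr : ∀ i, PowerSeries.X ^ r ∣ u i)
    (hlow : ∀ w ∈ Submodule.span K (Set.range u), PowerSeries.X ^ p ∣ w → w = 0) :
    (frobeniusWronskian (Fintype.card K) u).det ≠ 0 ∧
      PowerSeries.X ^ ((Fintype.card K + n) * r + (n + 1).choose 2) ∣
        (frobeniusWronskian (Fintype.card K) u).det := by
  have : FiniteDimensional K (Submodule.span K (Set.range u)) :=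
    FiniteDimensional.span_of_finite K (Set.finite_range u)
  obtain ⟨J, v, hJ, hJv⟩ := exists_strictMono_X_pow_mul_mem (Submodule.span K (Set.range u))
    (finrank_span_eq_card hu |>.trans (Fintype.card_fin _)).ge
  have hv0 : ∀ i, v i ≠ 0 := fun i hi ↦ (hJv i).1 (by simp [hi])
  have hJp : ∀ i, J i < p := by
    intro i
    by_contra! hp
    have := hlow _ (hJv i).2 ((pow_dvd_pow _ hp).mul_right _)
    simp [hv0] at this
  have hrJ : r ≤ J 0 := by
    have hspan : Submodule.span K (Set.range u) ≤
        (Ideal.span {(PowerSeries.X : K⟦X⟧) ^ r}).restrictScalars K :=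
      Submodule.span_le.2 <| Set.range_subset_iff.2 fun i ↦ Ideal.mem_span_singleton.2 (hr i)
    by_contra! hlt
    have := PowerSeries.X_pow_dvd_iff.1 (Ideal.mem_span_singleton.1 (hspan (hJv 0).2)) (J 0) hlt
    exact (hJv 0).1 (by simpa [PowerSeries.coeff_X_pow_mul'] using this)
  obtain ⟨w, hw0, hw⟩ := exists_det_frobeniusWronskian_X_pow_mul
    (Fintype.one_lt_card (α := K)) hJ
    (fun i j hij ↦ hJ.injective (CharP.natCast_injOn_Iio K p (hJp i) (hJp j) hij))
    fun i ↦ (hJv i).1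
  choose A hA using fun i ↦ (Submodule.mem_span_range_iff_exists_fun K).1 (hJv i).2
  have hdet := frobeniusWronskian_sum_smul u (Matrix.of fun l i ↦ A i l)
  simp only [Matrix.of_apply, hA] at hdet
  rw [hdet, Matrix.det_mul] at hw
  have hne : (frobeniusWronskian (Fintype.card K) u).det *
      ((Matrix.of fun l i ↦ A i l).map (PowerSeries.C (R := K))).det ≠ 0 := by
    rw [hw]
    exact mul_ne_zero (pow_ne_zero _ PowerSeries.X_ne_zero) fun h ↦ hw0 (by simp [h])
  have hunit : IsUnit ((Matrix.of fun l i ↦ A i l).map (PowerSeries.C (R := K))).det := by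
    rw [← RingHom.mapMatrix_apply, ← RingHom.map_det] at hne ⊢
    exact (Ne.isUnit fun h ↦ hne (by simp [h])).map _
  refine ⟨left_ne_zero_of_mul hne, (hunit.dvd_mul_right).1 (hw ▸ ?_)⟩
  exact (pow_dvd_pow _ (mul_add_choose_two_le Fintype.card_pos hJ hrJ)).mul_right _

end FiniteField

end FrobeniusWronskian

section PlaneForms

variable {K : Type*} [Field K]

instance (L : ℕ) : FiniteDimensional K (homogeneousSubmodule (Fin 3) K L) :=
  Module.Finite.iff_fg.2 (homogeneousSubmodule_fg _ _ L)

lemma finrank_homogeneousSubmodule_fin_three (L : ℕ) :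
    Module.finrank K (homogeneousSubmodule (Fin 3) K L) = (L + 2).choose 2 := by
  have hset : {m : Fin 3 →₀ ℕ | m.degree = L} =
      ((Finset.univ : Finset (Fin 3)).finsuppAntidiag L : Set (Fin 3 →₀ ℕ)) := by
    ext m
    simp [Finset.mem_finsuppAntidiag, Finsupp.degree_eq_sum]
  rw [homogeneousSubmodule_eq_finsupp_supported]
  refine (AddMonoidAlgebra.supportedEquivFinsupp (R := K) (S := K) _).finrank_eq.trans ?_
  rw [hset, Module.finrank_finsupp_self, ← Set.toFinset_card, Finset.toFinset_coe,
    Finset.card_finsuppAntidiag_nat_eq_choose, Finset.card_univ, Fintype.card_fin,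
    show 3 + L - 1 = L + 2 by omega, Nat.choose_symm_of_eq_add (show L + 2 = L + 2 by rfl)]

lemma not_dvd_of_isHomogeneous_of_lt {R σ : Type*} [CommRing R] [IsDomain R]
    {F G : MvPolynomial σ R} {d e : ℕ}
    (hF : F.IsHomogeneous d) (hF0 : F ≠ 0) (hG : G.IsHomogeneous e) (hG0 : G ≠ 0) (hed : e < d) :
    ¬ F ∣ G := by
  intro h
  have := totalDegree_le_of_dvd_of_isDomain h hG0
  rw [hF.totalDegree hF0, hG.totalDegree hG0] at this
  omega

lemma mul_homogeneousComponent_of_isHomogeneous {R σ : Type*} [CommRing R]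
    {F q : MvPolynomial σ R} {d L : ℕ}
    (hF : F.IsHomogeneous d) (hFq : (F * q).IsHomogeneous (d + L)) :
    F * homogeneousComponent L q = F * q := by
  let := MvPolynomial.gradedAlgebra (σ := σ) (R := R)
  have hmul : homogeneousComponent (d + L) (F * q) = F * homogeneousComponent L q := by
    simpa only [DirectSum.decompose, Equiv.coe_fn_mk, decomposition.decompose'_apply] using
      DirectSum.coe_decompose_mul_add_of_left_mem (homogeneousSubmodule σ R)
        (j := L) (b := q) ((mem_homogeneousSubmodule _ _).2 hF)
  rw [← hmul, homogeneousComponent_eq_self hFq]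

lemma exists_eq_sum_X_pow_mul {g : MvPolynomial (Fin 3) K} {L T : ℕ} (hT : 2 * T ≤ L)
    (hg : g.IsHomogeneous (L + T)) :
    ∃ h : Fin 3 → MvPolynomial (Fin 3) K,
      (∀ k, (h k).IsHomogeneous L) ∧ g = ∑ k, X k ^ T * h k := by
  rw [g.as_sum]
  refine Finset.sum_induction _ (fun g ↦ ∃ h : Fin 3 → MvPolynomial (Fin 3) K,
    (∀ k, (h k).IsHomogeneous L) ∧ g = ∑ k, X k ^ T * h k) ?_ ?_ fun m hm ↦ ?_
  · rintro _ _ ⟨h, hh, rfl⟩ ⟨h', hh', rfl⟩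
    exact ⟨h + h', fun k ↦ (hh k).add (hh' k), by simp [mul_add, Finset.sum_add_distrib]⟩
  · exact ⟨0, fun _ ↦ isHomogeneous_zero _ _ _, by simp⟩
  · have hdeg : m.degree = L + T := (hg.degree_eq_sum_deg_support hm).symm
    obtain ⟨k, hk⟩ : ∃ i, T ≤ m i := by
      by_contra! hlt
      rw [Finsupp.degree_eq_sum, Fin.sum_univ_three] at hdeg
      have := hlt 0
      have := hlt 1
      have := hlt 2
      omega
    obtain ⟨m', rfl⟩ := exists_add_of_le (Finsupp.single_le_iff.2 hk)
    have hdeg' : m'.degree = L := by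
      rw [map_add, Finsupp.degree_single] at hdeg
      omega
    refine ⟨Pi.single k (monomial m' (coeff (Finsupp.single k T + m') g)), fun l ↦ ?_, ?_⟩
    · obtain rfl | hl := eq_or_ne l k
      · simpa using isHomogeneous_monomial _ hdeg'
      · simpa [hl] using isHomogeneous_zero _ _ _
    · rw [Finset.sum_eq_single k (fun l _ hl ↦ by simp [hl]) (by simp), Pi.single_eq_same,
        X_pow_eq_monomial, monomial_mul, one_mul]

/-- The image of a space `V` of forms in the homogeneous coordinate ring of the curve `F = 0`. -/
noncomputable def formClasses (F : MvPolynomial (Fin 3) K)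
    (V : Submodule K (MvPolynomial (Fin 3) K)) :
    Submodule K (MvPolynomial (Fin 3) K ⧸ Ideal.span {F}) :=
  V.map (Ideal.Quotient.mkₐ K (Ideal.span {F})).toLinearMap

instance (F : MvPolynomial (Fin 3) K) (V : Submodule K (MvPolynomial (Fin 3) K))
    [FiniteDimensional K V] : FiniteDimensional K (formClasses F V) :=
  Module.Finite.map V _

lemma mk_span_singleton_eq_zero_iff {F G : MvPolynomial (Fin 3) K} :
    Ideal.Quotient.mkₐ K (Ideal.span {F}) G = 0 ↔ F ∣ G := by
  rw [Ideal.Quotient.mkₐ_eq_mk, Ideal.Quotient.eq_zero_iff_dvd]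

lemma finrank_formClasses_add_choose_two {F : MvPolynomial (Fin 3) K} {d L : ℕ}
    (hF : F.IsHomogeneous d) (hF0 : F ≠ 0) {V : Submodule K (MvPolynomial (Fin 3) K)}
    (hV : V ≤ homogeneousSubmodule (Fin 3) K (d + L))
    (hFV : ∀ q : MvPolynomial (Fin 3) K, q.IsHomogeneous L → F * q ∈ V) :
    Module.finrank K (formClasses F V) + (L + 2).choose 2 = Module.finrank K V := by
  have : FiniteDimensional K V := Submodule.finiteDimensional_of_le hV
  let f := (Ideal.Quotient.mkₐ K (Ideal.span {F})).toLinearMap ∘ₗ V.subtype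
  have hrange : LinearMap.range f = formClasses F V := by
    rw [LinearMap.range_comp, Submodule.range_subtype, formClasses]
  have hker : (LinearMap.ker f).map V.subtype =
      (homogeneousSubmodule (Fin 3) K L).map (LinearMap.mulLeft K F) := by
    ext G
    simp only [f, LinearMap.ker_comp, Submodule.map_comap_subtype, Submodule.mem_inf,
      LinearMap.mem_ker, AlgHom.toLinearMap_apply, mk_span_singleton_eq_zero_iff,
      Submodule.mem_map, mem_homogeneousSubmodule, LinearMap.mulLeft_apply]
    constructor
    · rintro ⟨hG, q, rfl⟩
      exact ⟨_, homogeneousComponent_isHomogeneous L q,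
        mul_homogeneousComponent_of_isHomogeneous hF (hV hG)⟩
    · rintro ⟨q, hq, rfl⟩
      exact ⟨hFV q hq, dvd_mul_right F q⟩
  rw [← LinearMap.finrank_range_add_finrank_ker f, hrange, ← Submodule.finrank_map_subtype_eq V,
    hker, ← finrank_homogeneousSubmodule_fin_three (K := K),
    (Submodule.equivMapOfInjective (.mulLeft K F) (mul_right_injective₀ hF0) _).finrank_eq]

lemma choose_two_add (m n : ℕ) : (m + n).choose 2 = m.choose 2 + m * n + n.choose 2 := by
  qify
  simp only [Nat.cast_choose_two]
  push_cast
  ring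

lemma finrank_formClasses_homogeneousSubmodule {F : MvPolynomial (Fin 3) K} {d : ℕ}
    (hF : F.IsHomogeneous d) (hF0 : F ≠ 0) (L : ℕ) :
    Module.finrank K (formClasses F (homogeneousSubmodule (Fin 3) K (d + L))) =
      (L + 2) * d + d.choose 2 := by
  have := finrank_formClasses_add_choose_two hF hF0 le_rfl fun q hq ↦ hF.mul (n := L) hq
  rw [finrank_homogeneousSubmodule_fin_three, add_assoc, choose_two_add d] at this
  linarith

end PlaneForms

section Bezout

open scoped PowerSeries

variable {K : Type*} [Field K]

/-- The linear form with coefficients `c`. -/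
noncomputable def linForm {R σ : Type*} [CommSemiring R] [Fintype σ] (c : σ → R) :
    MvPolynomial σ R :=
  ∑ i, C (c i) * X i

lemma isHomogeneous_linForm {R σ : Type*} [CommSemiring R] [Fintype σ] (c : σ → R) :
    (linForm c).IsHomogeneous 1 :=
  IsHomogeneous.sum _ _ _ fun _ _ ↦ isHomogeneous_C_mul_X _ _

/-- A formal arc in the projective plane, given by homogeneous coordinates `x` that have no common
zero at `t = 0`, whose velocity at `t = 0` is not zero: some linear form vanishes on it to order
exactly one. -/
structure IsRegularArc (x : Fin 3 → K⟦X⟧) : Prop where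
  center_ne_zero : PowerSeries.constantCoeff ∘ x ≠ 0
  exists_param : ∃ c, c ⬝ᵥ (PowerSeries.constantCoeff ∘ x) = 0 ∧ c ⬝ᵥ (PowerSeries.coeff 1 ∘ x) ≠ 0

lemma coeff_aeval_linForm (c : Fin 3 → K) (x : Fin 3 → K⟦X⟧) (n : ℕ) :
    PowerSeries.coeff n (aeval x (linForm c)) = c ⬝ᵥ (PowerSeries.coeff n ∘ x) := by
  simp [linForm, dotProduct]

lemma constantCoeff_aeval_linForm (c : Fin 3 → K) (x : Fin 3 → K⟦X⟧) :
    PowerSeries.constantCoeff (aeval x (linForm c)) =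
      c ⬝ᵥ (PowerSeries.constantCoeff ∘ x) := by
  simp [linForm, dotProduct]

lemma exists_dotProduct_eq_zero_and_ne_zero {P Q : Fin 3 → K} (hPQ : P ∉ Submodule.span K {Q}) :
    ∃ c : Fin 3 → K, c ⬝ᵥ Q = 0 ∧ c ⬝ᵥ P ≠ 0 := by
  obtain ⟨φ, hφP, hφQ⟩ := Submodule.exists_le_ker_of_notMem hPQ
  obtain ⟨c, rfl⟩ := (dotProductEquiv K (Fin 3)).surjective φ
  exact ⟨c, hφQ (Submodule.mem_span_singleton_self Q), hφP⟩

variable {ι : Type*} {x : ι → Fin 3 → K⟦X⟧}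

/-- A family of regular arcs whose centers are pairwise distinct points of the projective plane. -/
structure IsArcSystem (x : ι → Fin 3 → K⟦X⟧) : Prop where
  regular : ∀ i, IsRegularArc (x i)
  separated : Pairwise fun i j ↦
    PowerSeries.constantCoeff ∘ x i ∉ Submodule.span K {PowerSeries.constantCoeff ∘ x j}

/-- The forms of degree `L` that vanish to order at least `a i` along each arc `x i`. -/
noncomputable def vanishingForms (x : ι → Fin 3 → K⟦X⟧) (a : ι → ℕ) (L : ℕ) :
    Submodule K (MvPolynomial (Fin 3) K) :=
  homogeneousSubmodule (Fin 3) K L ⊓ ⨅ i,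
    ((Ideal.span {(PowerSeries.X : K⟦X⟧) ^ a i}).restrictScalars K).comap (aeval (x i)).toLinearMap

lemma mem_vanishingForms {a : ι → ℕ} {L : ℕ} {G : MvPolynomial (Fin 3) K} :
    G ∈ vanishingForms x a L ↔ G.IsHomogeneous L ∧ ∀ i, PowerSeries.X ^ a i ∣ aeval (x i) G := by
  simp [vanishingForms, Ideal.mem_span_singleton]

lemma vanishingForms_le (x : ι → Fin 3 → K⟦X⟧) (a : ι → ℕ) (L : ℕ) :
    vanishingForms x a L ≤ homogeneousSubmodule (Fin 3) K L :=
  inf_le_left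

instance (x : ι → Fin 3 → K⟦X⟧) (a : ι → ℕ) (L : ℕ) :
    FiniteDimensional K (vanishingForms x a L) :=
  Submodule.finiteDimensional_of_le (vanishingForms_le x a L)

lemma exists_linForm_of_isRegularArc [DecidableEq ι] (hx : IsArcSystem x) (i₀ i : ι) :
    ∃ (c : Fin 3 → K) (w : K⟦X⟧), PowerSeries.X ∣ aeval (x i) (linForm c) ∧
      aeval (x i₀) (linForm c) = PowerSeries.X ^ (if i = i₀ then 1 else 0) * w ∧
      PowerSeries.constantCoeff w ≠ 0 := by
  obtain rfl | hi := eq_or_ne i i₀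
  · obtain ⟨c, hc0, hc1⟩ := (hx.regular i).exists_param
    obtain ⟨w, hw⟩ : PowerSeries.X ∣ aeval (x i) (linForm c) := by
      rwa [PowerSeries.X_dvd_iff, constantCoeff_aeval_linForm]
    refine ⟨c, w, ⟨w, hw⟩, by simpa using hw, fun hw0 ↦ hc1 ?_⟩
    rw [← coeff_aeval_linForm, hw, PowerSeries.coeff_succ_X_mul 0,
      PowerSeries.coeff_zero_eq_constantCoeff_apply, hw0]
  · obtain ⟨c, hc, hc'⟩ := exists_dotProduct_eq_zero_and_ne_zero (hx.separated hi.symm)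
    refine ⟨c, aeval (x i₀) (linForm c), ?_, by simp [hi], ?_⟩
    · rwa [PowerSeries.X_dvd_iff, constantCoeff_aeval_linForm]
    · rwa [constantCoeff_aeval_linForm]

lemma map_mulLeft_formClasses_le {F : MvPolynomial (Fin 3) K} {G : Fin 3 → MvPolynomial (Fin 3) K}
    {a : ι → ℕ} {e L T : ℕ} (hT : 2 * T ≤ L) (hG : ∀ k, (G k).IsHomogeneous e)
    (hcomp : ∀ k l, F ∣ X k ^ T * G l - X l ^ T * G k)
    (ha : ∀ k i, PowerSeries.X ^ a i ∣ aeval (x i) (G k)) (k : Fin 3) :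
    (formClasses F (homogeneousSubmodule (Fin 3) K (L + T))).map
        (LinearMap.mulLeft K (Ideal.Quotient.mkₐ K (Ideal.span {F}) (G k))) ≤
      (formClasses F (vanishingForms x a (L + e))).map
        (LinearMap.mulLeft K (Ideal.Quotient.mkₐ K (Ideal.span {F}) (X k ^ T))) := by
  rintro _ ⟨_, ⟨g, hg, rfl⟩, rfl⟩
  obtain ⟨h, hh, rfl⟩ := exists_eq_sum_X_pow_mul hT hg
  refine ⟨_, ⟨∑ l, h l * G l, Submodule.sum_mem _ fun l _ ↦ mem_vanishingForms.2
    ⟨(hh l).mul (hG l), fun i ↦ ?_⟩, rfl⟩, ?_⟩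
  · rw [map_mul]
    exact (ha l i).mul_left _
  · simp only [AlgHom.toLinearMap_apply, LinearMap.mulLeft_apply]
    rw [← sub_eq_zero, ← map_mul, ← map_mul, ← map_sub, mk_span_singleton_eq_zero_iff,
      Finset.mul_sum, Finset.mul_sum, ← Finset.sum_sub_distrib]
    refine Finset.dvd_sum fun l _ ↦ ?_
    convert (hcomp k l).mul_left (h l) using 1
    ring

variable [Fintype ι]

lemma exists_mem_vanishingForms_not_dvd (hx : IsArcSystem x) {a : ι → ℕ} {L : ℕ}
    (hL : ∑ i, a i ≤ L) (i₀ : ι) :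
    ∃ G ∈ vanishingForms x a L, ¬ PowerSeries.X ^ (a i₀ + 1) ∣ aeval (x i₀) G := by
  classical
  obtain ⟨k, hk⟩ := Function.ne_iff.1 (hx.regular i₀).center_ne_zero
  choose c w hc hcw hw using exists_linForm_of_isRegularArc hx i₀
  refine ⟨(∏ i, linForm (c i) ^ a i) * X k ^ (L - ∑ i, a i), mem_vanishingForms.2
    ⟨?_, fun i ↦ ?_⟩, fun hdvd ↦ ?_⟩
  · convert (IsHomogeneous.prod Finset.univ _ _ fun i _ ↦ (isHomogeneous_linForm (c i)).pow
      (a i)).mul (isHomogeneous_X_pow (R := K) k (L - ∑ i, a i)) using 1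
    simp only [one_mul]
    omega
  · rw [map_mul, map_prod]
    refine Dvd.dvd.mul_right (dvd_trans ?_ (Finset.dvd_prod_of_mem _ (Finset.mem_univ i))) _
    rw [map_pow]
    exact pow_dvd_pow_of_dvd (hc i) _
  · have hval : aeval (x i₀) ((∏ i, linForm (c i) ^ a i) * X k ^ (L - ∑ i, a i)) =
        PowerSeries.X ^ a i₀ * ((∏ i, w i ^ a i) * x i₀ k ^ (L - ∑ i, a i)) := by
      simp only [map_mul, map_prod, map_pow, aeval_X, hcw, mul_pow, Finset.prod_mul_distrib]
      rw [Finset.prod_eq_single i₀ (fun i _ hi ↦ by simp [hi]) (by simp)]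
      simp [mul_assoc]
    rw [hval, pow_succ, mul_dvd_mul_iff_left (pow_ne_zero _ PowerSeries.X_ne_zero),
      PowerSeries.X_dvd_iff, map_mul, map_pow, map_prod] at hdvd
    refine mul_ne_zero (Finset.prod_ne_zero_iff.2 fun i _ ↦ ?_) (pow_ne_zero _ hk) hdvd
    simpa using pow_ne_zero _ (hw i)

lemma finrank_vanishingForms_add_sum_le (hx : IsArcSystem x) {a : ι → ℕ} {L : ℕ}
    (hL : ∑ i, a i ≤ L) :
    Module.finrank K (vanishingForms x a L) + ∑ i, a i ≤ (L + 2).choose 2 := by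
  classical
  induction hS : ∑ i, a i generalizing a with
  | zero =>
    rw [← finrank_homogeneousSubmodule_fin_three (K := K)]
    exact Submodule.finrank_mono (vanishingForms_le x a L)
  | succ S ih =>
    obtain ⟨i₀, -, hi₀⟩ := Finset.exists_ne_zero_of_sum_ne_zero (by omega : ∑ i, a i ≠ 0)
    obtain ⟨b, rfl⟩ : ∃ b, a = b + Pi.single i₀ 1 := by
      refine ⟨a - Pi.single i₀ 1, (tsub_add_cancel_of_le fun i ↦ ?_).symm⟩
      obtain rfl | hi := eq_or_ne i i₀
      · simpa using Nat.one_le_iff_ne_zero.2 hi₀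
      · simp [hi]
    have hsum : ∑ i, b i = S := by simpa [Finset.sum_add_distrib] using hS
    obtain ⟨G, hG, hGdvd⟩ :=
      exists_mem_vanishingForms_not_dvd hx (a := b) (L := L) (by omega) i₀
    have hlt : vanishingForms x (b + Pi.single i₀ 1) L < vanishingForms x b L := by
      refine SetLike.lt_iff_le_and_exists.2 ⟨fun H hH ↦ ?_, G, hG, fun hG' ↦ hGdvd ?_⟩
      · rw [mem_vanishingForms] at hH ⊢
        exact ⟨hH.1, fun i ↦ (pow_dvd_pow _ (by simp)).trans (hH.2 i)⟩
      · simpa using (mem_vanishingForms.1 hG').2 i₀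
    have := Submodule.finrank_lt_finrank_of_lt hlt
    have := ih (by omega) hsum
    omega

/-- Bézout's theorem for sections of `𝒪(e - T)` on the curve `F = 0`. Such a section is given by
forms `G 0, G 1, G 2` of degree `e`, to be thought of as its products with `X 0 ^ T, X 1 ^ T,
X 2 ^ T`; this allows for sections that are not represented by a single form. -/
theorem sum_add_mul_le_mul_of_pow_dvd_aeval (hx : IsArcSystem x) {F : MvPolynomial (Fin 3) K}
    {d : ℕ} (hd : 1 < d) (hF : F.IsHomogeneous d) (hirr : Irreducible F)
    (hFx : ∀ i, aeval (x i) F = 0) {a : ι → ℕ} {e T : ℕ}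
    {G : Fin 3 → MvPolynomial (Fin 3) K} (hG : ∀ k, (G k).IsHomogeneous e)
    (hcomp : ∀ k l, F ∣ X k ^ T * G l - X l ^ T * G k) (hne : ∃ k, ¬ F ∣ G k)
    (ha : ∀ k i, PowerSeries.X ^ a i ∣ aeval (x i) (G k)) :
    ∑ i, a i + T * d ≤ e * d := by
  have hF0 := hirr.ne_zero
  have := (Ideal.span_singleton_prime hF0).2 hirr.prime
  obtain ⟨k, hk⟩ := hne
  have hX : ¬ F ∣ X k ^ T := fun h ↦
    not_dvd_of_isHomogeneous_of_lt hF hF0 (isHomogeneous_X K k) (X_ne_zero k) hd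
      (hirr.prime.dvd_of_dvd_pow h)
  have hinj : ∀ G : MvPolynomial (Fin 3) K, ¬ F ∣ G → Function.Injective
      (LinearMap.mulLeft K (Ideal.Quotient.mkₐ K (Ideal.span {F}) G)) :=
    fun G hG ↦ mul_right_injective₀ (mk_span_singleton_eq_zero_iff.not.2 hG)
  obtain ⟨N, hN⟩ : ∃ N, N = ∑ i, a i + 2 * T := ⟨_, rfl⟩
  have hle := Submodule.finrank_mono
    (map_mulLeft_formClasses_le (L := d + N) (by omega) hG hcomp ha k)
  rw [← (Submodule.equivMapOfInjective _ (hinj _ hk) _).finrank_eq,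
    ← (Submodule.equivMapOfInjective _ (hinj _ hX) _).finrank_eq, add_assoc d, add_assoc d] at hle
  have hdom := finrank_formClasses_add_choose_two hF hF0 (L := N + T) le_rfl
    fun q hq ↦ hF.mul hq
  have hcod := finrank_formClasses_add_choose_two hF hF0 (L := N + e)
    (vanishingForms_le x a (d + (N + e)))
    fun q hq ↦ mem_vanishingForms.2 ⟨hF.mul hq, fun i ↦ by simp [hFx]⟩
  have hvan := finrank_vanishingForms_add_sum_le hx (a := a) (L := d + (N + e)) (by omega)
  rw [finrank_homogeneousSubmodule_fin_three, add_assoc d, choose_two_add d] at hdom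
  rw [add_assoc d, choose_two_add d] at hvan
  have : d * (N + T + 2) + ∑ i, a i ≤ d * (N + e + 2) := by omega
  nlinarith

lemma sum_le_mul_of_pow_dvd_aeval (hx : IsArcSystem x) {F G : MvPolynomial (Fin 3) K} {d e : ℕ}
    (hd : 1 < d) (hF : F.IsHomogeneous d) (hirr : Irreducible F) (hFx : ∀ i, aeval (x i) F = 0)
    (hG : G.IsHomogeneous e) (hFG : ¬ F ∣ G) {a : ι → ℕ}
    (ha : ∀ i, PowerSeries.X ^ a i ∣ aeval (x i) G) : ∑ i, a i ≤ e * d := by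
  simpa using sum_add_mul_le_mul_of_pow_dvd_aeval hx hd hF hirr hFx (T := 0) (G := fun _ ↦ G)
    (fun _ ↦ hG) (by simp) ⟨0, hFG⟩ fun _ ↦ ha

end Bezout

section Arcs

open scoped PowerSeries Polynomial Matrix

lemma exists_mem_maximalIdeal_eval_eq_zero {A : Type*} [CommRing A] [IsLocalRing A]
    [IsAdicComplete (IsLocalRing.maximalIdeal A) A] {f : A[X]}
    (hf₀ : f.coeff 0 ∈ IsLocalRing.maximalIdeal A) (hf₁ : IsUnit (f.coeff 1)) :
    ∃ a ∈ IsLocalRing.maximalIdeal A, f.eval a = 0 := by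
  have horder : ((f : A⟦X⟧).map (IsLocalRing.residue A)).order = 1 := by
    refine PowerSeries.order_eq_nat.2 ⟨?_, fun i hi ↦ ?_⟩
    · simpa [IsLocalRing.residue_ne_zero_iff_isUnit] using hf₁
    · simpa [Nat.lt_one_iff.1 hi] using hf₀
  have hne : (f : A⟦X⟧).map (IsLocalRing.residue A) ≠ 0 := by
    rintro h
    simp [h] at horder
  obtain ⟨g, h, H⟩ := PowerSeries.exists_isWeierstrassFactorization hne
  have hdeg : g.natDegree = 1 := H.natDegree_eq_toNat_order_map.trans (by simp [horder])
  have hg : g = Polynomial.X - Polynomial.C (-g.coeff 0) := by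
    conv_lhs => rw [H.isDistinguishedAt.monic.eq_X_add_C hdeg]
    simp
  refine ⟨-g.coeff 0, neg_mem (H.isDistinguishedAt.mem (by simp [hdeg])), ?_⟩
  obtain ⟨q, hq⟩ := Polynomial.X_sub_C_dvd_sub_C_eval (p := f) (a := -g.coeff 0)
  rw [← hg] at hq
  have hgq : (g : A⟦X⟧) * (h - q) = Polynomial.C (f.eval (-g.coeff 0)) := by
    rw [mul_sub, ← H.eq_mul, ← Polynomial.coe_mul, ← hq, Polynomial.coe_sub, sub_sub_cancel]
  have hgorder := H.isDistinguishedAt.coe_natDegree_eq_order_map (g : A⟦X⟧) 1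
    (by simp) (mul_one _).symm
  refine Polynomial.C_eq_zero.1
    (H.isDistinguishedAt.isWeierstrassDivisorAt'.eq_zero_of_mul_eq ?_ hgq).2
  rw [← hgorder, hdeg]
  exact Polynomial.degree_C_lt

lemma derivation_aeval {k A M σ : Type*} [CommRing k] [CommRing A] [Algebra k A] [Fintype σ]
    [AddCommGroup M] [Module A M] [Module k M] [IsScalarTower k A M]
    (D : Derivation k A M) (x : σ → A) (F : MvPolynomial σ k) :
    D (aeval x F) = ∑ i, aeval x (pderiv i F) • D (x i) := by
  classical
  induction F using MvPolynomial.induction_on with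
  | C a => simp
  | add f g hf hg => simp only [hf, hg, map_add, add_smul, Finset.sum_add_distrib]
  | mul_X f j hf =>
    simp [hf, add_smul, Pi.single_apply, apply_ite, ite_smul, Finset.sum_add_distrib,
      Finset.smul_sum, mul_smul, smul_comm (x j)]

variable {K : Type*} [Field K]

lemma constantCoeff_aeval {R σ : Type*} [CommRing R] (x : σ → R⟦X⟧) (G : MvPolynomial σ R) :
    PowerSeries.constantCoeff (aeval x G) = eval (PowerSeries.constantCoeff ∘ x) G := by
  rw [map_aeval]
  exact congrArg (eval₂Hom · _ G) (RingHom.ext fun _ ↦ by simp)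

lemma exists_aeval_add_mul_eq_zero {F : MvPolynomial (Fin 3) K} {y : Fin 3 → K⟦X⟧} {u : Fin 3 → K}
    (hF : eval (PowerSeries.constantCoeff ∘ y) F = 0)
    (hu : (fun i ↦ eval (PowerSeries.constantCoeff ∘ y) (pderiv i F)) ⬝ᵥ u ≠ 0) :
    ∃ s : K⟦X⟧, PowerSeries.constantCoeff s = 0 ∧
      aeval (fun i ↦ y i + s * PowerSeries.C (u i)) F = 0 := by
  let Y : Fin 3 → K⟦X⟧[X] := fun i ↦
    Polynomial.C (y i) + Polynomial.X * Polynomial.C (PowerSeries.C (u i))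
  have heval (s : K⟦X⟧) (G : MvPolynomial (Fin 3) K) :
      (aeval Y G).eval s = aeval (fun i ↦ y i + s * PowerSeries.C (u i)) G := by
    rw [← Polynomial.coe_evalRingHom, map_aeval, aeval_def, coe_eval₂Hom]
    exact congrArg₂ (eval₂ · · G) (RingHom.ext fun _ ↦ by simp [Polynomial.algebraMap_apply])
      (funext fun _ ↦ by simp [Y, mul_comm s])
  have hcoeff₀ : (aeval Y F).coeff 0 = aeval y F := by
    rw [Polynomial.coeff_zero_eq_eval_zero, heval]
    simp
  have hcoeff₁ : (aeval Y F).coeff 1 = ∑ i, aeval y (pderiv i F) * PowerSeries.C (u i) := by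
    have hderiv : Polynomial.derivative (aeval Y F) =
        ∑ i, aeval Y (pderiv i F) * Polynomial.C (PowerSeries.C (u i)) := by
      simpa [Y] using derivation_aeval (Polynomial.derivative'.restrictScalars K) Y F
    have := congrArg (Polynomial.eval 0) hderiv
    simpa [← Polynomial.coeff_zero_eq_eval_zero, Polynomial.coeff_derivative,
      Polynomial.eval_finsetSum, heval] using this
  have : IsAdicComplete (IsLocalRing.maximalIdeal K⟦X⟧) K⟦X⟧ := by
    rw [PowerSeries.maximalIdeal_eq_span_X]
    infer_instance
  obtain ⟨s, hs, hFs⟩ := exists_mem_maximalIdeal_eval_eq_zero (f := aeval Y F)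
    (by rw [hcoeff₀, IsLocalRing.mem_maximalIdeal, mem_nonunits_iff,
      PowerSeries.isUnit_iff_constantCoeff, constantCoeff_aeval, hF]; simp)
    (by rw [hcoeff₁, PowerSeries.isUnit_iff_constantCoeff]
        simpa only [map_sum, map_mul, constantCoeff_aeval, PowerSeries.constantCoeff_C,
          isUnit_iff_ne_zero, ne_eq, dotProduct] using hu)
  refine ⟨s, ?_, by rw [← heval, hFs]⟩
  rwa [PowerSeries.maximalIdeal_eq_span_X, Ideal.mem_span_singleton, PowerSeries.X_dvd_iff] at hs

lemma exists_isRegularArc {F : MvPolynomial (Fin 3) K} {d : ℕ} (hF : F.IsHomogeneous d)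
    {Q : Fin 3 → K} (hQ : Q ≠ 0) (hFQ : eval Q F = 0) (hgrad : (fun i ↦ eval Q (pderiv i F)) ≠ 0) :
    ∃ x : Fin 3 → K⟦X⟧, PowerSeries.constantCoeff ∘ x = Q ∧ IsRegularArc x ∧ aeval x F = 0 := by
  have heuler : (fun i ↦ eval Q (pderiv i F)) ⬝ᵥ Q = 0 := by
    have := congrArg (eval Q) hF.sum_X_mul_pderiv
    simpa [hFQ, dotProduct, mul_comm] using this
  obtain ⟨u, hu⟩ : ∃ u, (fun i ↦ eval Q (pderiv i F)) ⬝ᵥ u ≠ 0 := by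
    by_contra! h
    exact hgrad (dotProduct_eq_zero _ h)
  have hQu : Q ⨯₃ u ≠ 0 := by
    rw [crossProduct_ne_zero_iff_linearIndependent, LinearIndependent.pair_iff' hQ]
    rintro a rfl
    exact hu (by rw [dotProduct_smul, heuler, smul_zero])
  obtain ⟨v, hv⟩ : ∃ v, Q ⨯₃ u ⬝ᵥ v ≠ 0 := by
    by_contra! h
    exact hQu (dotProduct_eq_zero _ h)
  let y : Fin 3 → K⟦X⟧ := fun i ↦ PowerSeries.C (Q i) + PowerSeries.X * PowerSeries.C (v i)
  have hy : PowerSeries.constantCoeff ∘ y = Q := funext fun i ↦ by simp [y]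
  obtain ⟨s, hs, hFs⟩ := exists_aeval_add_mul_eq_zero (F := F) (y := y) (u := u) (by rwa [hy])
    (by rwa [hy])
  have hcenter : PowerSeries.constantCoeff ∘ (fun i ↦ y i + s * PowerSeries.C (u i)) = Q :=
    funext fun i ↦ by simp [hs, y]
  have hvelocity : PowerSeries.coeff 1 ∘ (fun i ↦ y i + s * PowerSeries.C (u i)) =
      v + PowerSeries.coeff 1 s • u := funext fun i ↦ by simp [y]
  refine ⟨_, hcenter, ⟨by rwa [hcenter], Q ⨯₃ u, ?_, ?_⟩, hFs⟩
  · rw [hcenter, dotProduct_comm, dot_self_cross]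
  · rwa [hvelocity, dotProduct_add, dotProduct_smul, dotProduct_comm _ u, dot_cross_self,
      smul_zero, add_zero]

end Arcs

section WronskianForms

open scoped PowerSeries Matrix

variable {K : Type*} [Field K] {F G : MvPolynomial (Fin 3) K} {d m n : ℕ}

lemma isHomogeneous_det {σ R : Type*} [CommRing R] {M : Matrix (Fin n) (Fin n) (MvPolynomial σ R)}
    {e : Fin n → ℕ} (hM : ∀ r i, (M r i).IsHomogeneous (e r)) :
    M.det.IsHomogeneous (∑ r, e r) := by
  rw [Matrix.det_apply]
  refine IsHomogeneous.sum _ _ _ fun τ _ ↦ ?_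
  have hprod : (∏ i, M (τ i) i).IsHomogeneous (∑ i, e (τ i)) :=
    IsHomogeneous.prod _ _ _ fun i _ ↦ hM _ _
  rw [Equiv.sum_comp τ e] at hprod
  exact zsmul_mem (K := homogeneousSubmodule σ R (∑ r, e r)) hprod _

/-- The `i`-th of the three derivations `G ↦ (∇G ⨯ ∇F) i`. All three differentiate along the curve
`F = 0`: they annihilate `F`. -/
noncomputable def curveDerivation (F : MvPolynomial (Fin 3) K) (i : Fin 3) :
    Derivation K (MvPolynomial (Fin 3) K) (MvPolynomial (Fin 3) K) :=
  pderiv (i + 2) F • pderiv (i + 1) - pderiv (i + 1) F • pderiv (i + 2)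

lemma curveDerivation_apply (F G : MvPolynomial (Fin 3) K) (i : Fin 3) :
    curveDerivation F i G = ((fun k ↦ pderiv k G) ⨯₃ fun k ↦ pderiv k F) i := by
  fin_cases i <;>
    simp [curveDerivation, cross_apply, mul_comm (pderiv _ F)]

lemma isHomogeneous_curveDerivation_iterate (hF : F.IsHomogeneous d) (hG : G.IsHomogeneous m)
    (hd : 2 ≤ d) (hm : 1 ≤ m) (i : Fin 3) (j : ℕ) :
    ((curveDerivation F i)^[j] G).IsHomogeneous (m + j * (d - 2)) := by
  induction j with
  | zero => simpa using hG
  | succ j ih =>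
    rw [Function.iterate_succ_apply']
    have hdeg : m + (j + 1) * (d - 2) = d - 1 + (m + j * (d - 2) - 1) := by
      rw [add_one_mul]
      omega
    rw [hdeg]
    exact (hF.pderiv.mul ih.pderiv).sub (hF.pderiv.mul ih.pderiv)

/-- The counterpart of `frobeniusWronskian` for forms: the iterated derivatives along the curve
`F = 0` are taken with `curveDerivation F i`. -/
noncomputable def wronskianForm (q : ℕ) (F : MvPolynomial (Fin 3) K)
    (f : Fin (n + 1) → MvPolynomial (Fin 3) K) (i : Fin 3) : MvPolynomial (Fin 3) K :=
  (Matrix.of (Fin.cons (fun l ↦ f l ^ q) fun j : Fin n ↦ fun l ↦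
    (curveDerivation F i)^[j] (f l))).det

lemma isHomogeneous_wronskianForm (hF : F.IsHomogeneous d)
    {f : Fin (n + 1) → MvPolynomial (Fin 3) K} (hf : ∀ l, (f l).IsHomogeneous m)
    (hd : 2 ≤ d) (hm : 1 ≤ m) (q : ℕ) (i : Fin 3) :
    (wronskianForm q F f i).IsHomogeneous (m * q + (n * m + n.choose 2 * (d - 2))) := by
  have hdet := isHomogeneous_det (e := Fin.cons (m * q) fun j : Fin n ↦ m + j * (d - 2))
    (M := Matrix.of (Fin.cons (fun l ↦ f l ^ q) fun j : Fin n ↦ fun l ↦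
      (curveDerivation F i)^[j] (f l)))
    fun r l ↦ Fin.cases ((hf l).pow q)
      (fun j ↦ isHomogeneous_curveDerivation_iterate hF (hf l) hd hm i j) r
  rw [Fin.sum_univ_succ] at hdet
  simpa [wronskianForm, Finset.sum_add_distrib, ← Finset.sum_mul, sum_val_fin] using hdet

lemma exists_triangular_theta_pow (A : K⟦X⟧) (B : ℕ → K⟦X⟧) (j : ℕ) :
    ∃ c : ℕ → K⟦X⟧, c j = A ^ j ∧ (∀ l, j < l → c l = 0) ∧
      ∀ g : ℕ → K⟦X⟧, (∀ k, g (k + 1) = A * theta K (g k) - B k * g k) →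
        g j = ∑ l ∈ Finset.range (j + 1), c l * ((theta K).toLinearMap ^ l) (g 0) := by
  induction j with
  | zero => exact ⟨Pi.single 0 1, by simp, fun l hl ↦ by simp [hl.ne'], fun g _ ↦ by simp⟩
  | succ j ih =>
    obtain ⟨c, hcj, hc0, hc⟩ := ih
    refine ⟨fun l ↦ A * (theta K (c l) + Nat.casesOn l 0 c) - B j * c l, ?_, fun l hl ↦ ?_,
      fun g hg ↦ ?_⟩
    · simp [hc0, hcj, pow_succ']
    · obtain ⟨l, rfl⟩ := Nat.exists_eq_add_of_lt (Nat.zero_lt_of_lt hl)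
      simp [hc0 l (by omega), hc0 (l + 1) (by omega)]
    · have htheta : theta K (g j) = ∑ l ∈ Finset.range (j + 1 + 1),
          (theta K (c l) + Nat.casesOn l 0 c) * ((theta K).toLinearMap ^ l) (g 0) := by
        simp only [add_mul, Finset.sum_add_distrib]
        rw [hc g hg, map_sum, Finset.sum_range_succ _ (j + 1), hc0 (j + 1) (by omega),
          Finset.sum_range_succ' (fun l ↦ (Nat.casesOn l 0 c : K⟦X⟧) * _)]
        simp [Finset.sum_add_distrib, pow_succ', mul_comm, add_comm]
      have hlast : g j =
          ∑ l ∈ Finset.range (j + 1 + 1), c l * ((theta K).toLinearMap ^ l) (g 0) := by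
        rw [hc g hg, Finset.sum_range_succ _ (j + 1), hc0 (j + 1) (by omega), zero_mul, add_zero]
      rw [hg, htheta, hlast]
      simp only [sub_mul, Finset.sum_sub_distrib, Finset.mul_sum, mul_assoc]

lemma det_frobenius_theta_rows (q : ℕ) (A : K⟦X⟧) (B : ℕ → K⟦X⟧) {g : Fin (n + 1) → ℕ → K⟦X⟧}
    (hg : ∀ i j, g i (j + 1) = A * theta K (g i j) - B j * g i j) :
    (Matrix.of (Fin.cons (fun i ↦ g i 0 ^ q) fun j : Fin n ↦ fun i ↦ g i j)).det =
      A ^ n.choose 2 * (frobeniusWronskian q fun i ↦ g i 0).det := by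
  choose c hdiag hupper hc using exists_triangular_theta_pow A B
  let T : Matrix (Fin (n + 1)) (Fin (n + 1)) K⟦X⟧ := Matrix.of
    (Fin.cons (Fin.cons 1 0) fun j : Fin n ↦ Fin.cons 0 fun l : Fin n ↦ c j l)
  have hfac : Matrix.of (Fin.cons (fun i ↦ g i 0 ^ q) fun j : Fin n ↦ fun i ↦ g i j) =
      T * frobeniusWronskian q fun i ↦ g i 0 := by
    ext1 r i
    rw [Matrix.mul_apply, Fin.sum_univ_succ]
    refine Fin.cases ?_ (fun j ↦ ?_) r
    · simp [T, frobeniusWronskian_zero]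
    · simp only [T, Matrix.of_apply, Fin.cons_succ, Fin.cons_zero, frobeniusWronskian_succ,
        zero_mul, zero_add]
      rw [hc j (g i) (hg i), Fin.sum_univ_eq_sum_range
        fun l ↦ c j l * ((theta K).toLinearMap ^ l) (g i 0)]
      refine Finset.sum_subset (Finset.range_subset_range.2 j.2) fun l _ hl ↦ ?_
      rw [hupper j l (by simpa using hl), zero_mul]
  have hT : T.IsLowerTriangular := by
    intro r s
    refine Fin.cases ?_ (fun r ↦ ?_) r <;> refine Fin.cases ?_ (fun s ↦ ?_) s
    · intro h
      exact absurd h (lt_irrefl _)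
    · simp [T]
    · simp [T]
    · intro h
      exact hupper r s (Fin.succ_lt_succ_iff.1 h)
  rw [hfac, Matrix.det_mul, Matrix.det_of_isLowerTriangular _ hT, Fin.prod_univ_succ]
  simp [T, hdiag, Finset.prod_pow_eq_pow_sum, sum_val_fin]

lemma exists_eq_smul_cross {R : Type*} [CommRing R] {g x y : Fin 3 → R} (hx : x ⬝ᵥ g = 0)
    (hy : g ⬝ᵥ y = 0) {k : Fin 3} (hk : IsUnit ((x ⨯₃ y) k)) : ∃ a : R, g = a • (x ⨯₃ y) := by
  have hcross : g ⨯₃ (x ⨯₃ y) = 0 := by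
    rw [cross_cross_eq_smul_sub_smul', hx, hy, zero_smul, zero_smul, sub_zero]
  obtain ⟨w, hw⟩ := hk.exists_right_inv
  have hswap : ∀ i, g i * (x ⨯₃ y) k = g k * (x ⨯₃ y) i := by
    generalize x ⨯₃ y = v at hcross
    rw [cross_apply] at hcross
    have h0 := congrFun hcross 0
    have h1 := congrFun hcross 1
    have h2 := congrFun hcross 2
    simp only [Matrix.cons_val, Pi.zero_apply, sub_eq_zero] at h0 h1 h2
    intro i
    fin_cases i <;> fin_cases k <;> first | rfl | assumption | (symm; assumption)
  refine ⟨g k * w, funext fun i ↦ ?_⟩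
  calc g i = g i * (x ⨯₃ y) k * w := by rw [mul_assoc, hw, mul_one]
    _ = g k * w * (x ⨯₃ y) i := by rw [hswap, mul_right_comm]

variable {x : Fin 3 → K⟦X⟧}

lemma dotProduct_aeval_pderiv (hG : G.IsHomogeneous m) (x : Fin 3 → K⟦X⟧) :
    (x ⬝ᵥ fun i ↦ aeval x (pderiv i G)) = (m : K⟦X⟧) * aeval x G := by
  simpa [dotProduct] using congrArg (aeval x) hG.sum_X_mul_pderiv

lemma IsRegularArc.cross_derivative_ne_zero (hx : IsRegularArc x) :
    (PowerSeries.constantCoeff ∘ x) ⨯₃ (PowerSeries.coeff 1 ∘ x) ≠ 0 := by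
  obtain ⟨c, hc, hc'⟩ := hx.exists_param
  rw [crossProduct_ne_zero_iff_linearIndependent, LinearIndependent.pair_iff' hx.center_ne_zero]
  intro a ha
  exact hc' (by rw [← ha, dotProduct_smul, hc, smul_zero])

lemma IsRegularArc.exists_isUnit_cross_derivative (hx : IsRegularArc x) :
    ∃ k, IsUnit ((x ⨯₃ (PowerSeries.derivative K ∘ x)) k) := by
  obtain ⟨k, hk⟩ := Function.ne_iff.1 hx.cross_derivative_ne_zero
  refine ⟨k, (PowerSeries.isUnit_iff_constantCoeff.2 (Ne.isUnit fun h ↦ hk ?_))⟩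
  have hcoeff : PowerSeries.coeff 1 ∘ x =
      fun i ↦ PowerSeries.constantCoeff (PowerSeries.derivative K (x i)) := by
    ext i
    rw [← PowerSeries.coeff_zero_eq_constantCoeff_apply, PowerSeries.coeff_derivative]
    simp
  rw [Pi.zero_apply, ← h, hcoeff]
  fin_cases k <;> simp [cross_apply]

lemma IsRegularArc.exists_aeval_pderiv_eq_smul_cross (hx : IsRegularArc x) (hF : F.IsHomogeneous d)
    (hFx : aeval x F = 0) (hgrad : ∃ i, aeval x (pderiv i F) ≠ 0) :
    ∃ a : K⟦X⟧, a ≠ 0 ∧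
      (fun i ↦ aeval x (pderiv i F)) = a • (x ⨯₃ (PowerSeries.derivative K ∘ x)) := by
  obtain ⟨k, hk⟩ := hx.exists_isUnit_cross_derivative
  obtain ⟨a, ha⟩ := exists_eq_smul_cross (g := fun i ↦ aeval x (pderiv i F))
    (by rw [dotProduct_aeval_pderiv hF, hFx, mul_zero])
    (by simpa [dotProduct, hFx] using (derivation_aeval (PowerSeries.derivative K) x F).symm) hk
  obtain ⟨i, hi⟩ := hgrad
  refine ⟨a, ?_, ha⟩
  rintro rfl
  exact hi (by simpa using congrFun ha i)

lemma X_mul_aeval_curveDerivation {a : K⟦X⟧}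
    (ha : (fun i ↦ aeval x (pderiv i F)) = a • (x ⨯₃ (PowerSeries.derivative K ∘ x)))
    (hG : G.IsHomogeneous m) (i : Fin 3) :
    PowerSeries.X * aeval x (curveDerivation F i G) =
      a * (x i * theta K (aeval x G) - (m : K⟦X⟧) * theta K (x i) * aeval x G) := by
  have hmap : aeval x (curveDerivation F i G) =
      ((fun k ↦ aeval x (pderiv k G)) ⨯₃ fun k ↦ aeval x (pderiv k F)) i := by
    rw [curveDerivation_apply]
    fin_cases i <;> simp [cross_apply]
  have hchain : (fun k ↦ aeval x (pderiv k G)) ⬝ᵥ (PowerSeries.derivative K ∘ x) =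
      PowerSeries.derivative K (aeval x G) := by
    simp [derivation_aeval, dotProduct]
  rw [hmap, ha, map_smul, cross_cross_eq_smul_sub_smul', hchain, dotProduct_aeval_pderiv hG]
  simp only [Pi.smul_apply, Pi.sub_apply, smul_eq_mul, Function.comp_apply, theta_apply]
  ring

lemma X_pow_mul_aeval_wronskianForm (hF : F.IsHomogeneous d) (hd : 2 ≤ d) (hm : 1 ≤ m) {a : K⟦X⟧}
    (ha : (fun i ↦ aeval x (pderiv i F)) = a • (x ⨯₃ (PowerSeries.derivative K ∘ x)))
    {f : Fin (n + 1) → MvPolynomial (Fin 3) K} (hf : ∀ l, (f l).IsHomogeneous m) (q : ℕ)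
    (i : Fin 3) :
    PowerSeries.X ^ n.choose 2 * aeval x (wronskianForm q F f i) =
      (a * x i) ^ n.choose 2 * (frobeniusWronskian q fun l ↦ aeval x (f l)).det := by
  have hdet := det_frobenius_theta_rows q (a * x i)
    (fun j ↦ a * x i * (j : K⟦X⟧) + a * ((m + j * (d - 2) : ℕ) : K⟦X⟧) * theta K (x i))
    (g := fun l j ↦ PowerSeries.X ^ j * aeval x ((curveDerivation F i)^[j] (f l))) (by
      intro l j
      have hstep := X_mul_aeval_curveDerivation ha
        (isHomogeneous_curveDerivation_iterate hF (hf l) hd hm i j) i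
      rw [Function.iterate_succ_apply', theta_X_pow_mul]
      linear_combination PowerSeries.X ^ j * hstep)
  simp only [pow_zero, one_mul, Function.iterate_zero, id_eq] at hdet
  let A : Fin (n + 1) → K⟦X⟧ := Fin.cons 1 fun j : Fin n ↦ PowerSeries.X ^ (j : ℕ)
  have hfac : Matrix.of (Fin.cons (fun l ↦ aeval x (f l) ^ q) fun j : Fin n ↦ fun l ↦
        PowerSeries.X ^ (j : ℕ) * aeval x ((curveDerivation F i)^[j] (f l))) =
      Matrix.diagonal A * (aeval x).mapMatrix (Matrix.of (Fin.cons (fun l ↦ f l ^ q)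
        fun j : Fin n ↦ fun l ↦ (curveDerivation F i)^[j] (f l))) := by
    ext1 r l
    rw [Matrix.diagonal_mul]
    refine Fin.cases ?_ (fun j ↦ ?_) r <;> simp [A]
  rw [← hdet, hfac, Matrix.det_mul, Matrix.det_diagonal, Fin.prod_univ_succ, ← AlgHom.map_det]
  simp [A, Finset.prod_pow_eq_pow_sum, sum_val_fin, wronskianForm]

end WronskianForms

section StohrVoloch

open scoped PowerSeries

variable {K : Type*} [Field K] {F G : MvPolynomial (Fin 3) K} {d m n r : ℕ}
  {x : Fin 3 → K⟦X⟧} {f : Fin (n + 1) → MvPolynomial (Fin 3) K}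

lemma IsRegularArc.le_mul_of_X_pow_dvd_aeval (hx : IsRegularArc x) (hd : 1 < d)
    (hF : F.IsHomogeneous d) (hirr : Irreducible F) (hFx : aeval x F = 0) (hG : G.IsHomogeneous m)
    (hFG : ¬ F ∣ G) {a : ℕ} (ha : PowerSeries.X ^ a ∣ aeval x G) : a ≤ m * d := by
  have hsystem : IsArcSystem fun _ : Unit ↦ x :=
    ⟨fun _ ↦ hx, fun i j hij ↦ (hij (Subsingleton.elim i j)).elim⟩
  simpa using sum_le_mul_of_pow_dvd_aeval hsystem hd hF hirr (fun _ ↦ hFx) hG hFG fun _ ↦ ha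

lemma IsRegularArc.dvd_of_aeval_eq_zero (hx : IsRegularArc x) (hd : 1 < d)
    (hF : F.IsHomogeneous d) (hirr : Irreducible F) (hFx : aeval x F = 0) (hG : G.IsHomogeneous m)
    (hGx : aeval x G = 0) : F ∣ G := by
  by_contra hFG
  have := hx.le_mul_of_X_pow_dvd_aeval hd hF hirr hFx hG hFG (a := m * d + 1)
    (hGx ▸ dvd_zero _)
  omega

lemma IsRegularArc.exists_aeval_pderiv_ne_zero (hx : IsRegularArc x) (hd : 1 < d)
    (hF : F.IsHomogeneous d) (hirr : Irreducible F) (hFx : aeval x F = 0) (hdK : (d : K) ≠ 0) :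
    ∃ k, aeval x (pderiv k F) ≠ 0 := by
  by_contra! h
  have hpderiv : ∀ k, pderiv k F = 0 := by
    intro k
    by_contra hk
    exact not_dvd_of_isHomogeneous_of_lt hF hirr.ne_zero hF.pderiv hk (by omega)
      (hx.dvd_of_aeval_eq_zero hd hF hirr hFx hF.pderiv (h k))
  have heuler := hF.sum_X_mul_pderiv
  simp only [hpderiv, mul_zero, Finset.sum_const_zero, nsmul_eq_mul] at heuler
  have hdC : (C (d : K) : MvPolynomial (Fin 3) K) ≠ 0 := C_ne_zero.2 hdK
  rw [map_natCast] at hdC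
  exact mul_ne_zero hdC hirr.ne_zero heuler.symm

lemma exists_forms_X_pow_dvd_aeval (hFx : aeval x F = 0)
    (hdim : n + r ≤ Module.finrank K (formClasses F (homogeneousSubmodule (Fin 3) K m))) :
    ∃ f : Fin n → MvPolynomial (Fin 3) K, (∀ l, (f l).IsHomogeneous m) ∧
      (∀ l, PowerSeries.X ^ r ∣ aeval x (f l)) ∧
      LinearIndependent K fun l ↦ Ideal.Quotient.mkₐ K (Ideal.span {F}) (f l) := by
  let Φ : MvPolynomial (Fin 3) K ⧸ Ideal.span {F} →ₐ[K] K⟦X⟧ :=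
    Ideal.Quotient.liftₐ (Ideal.span {F}) (aeval x) fun a ha ↦ by
      obtain ⟨q, rfl⟩ := Ideal.mem_span_singleton.1 ha
      rw [map_mul, hFx, zero_mul]
  let φ : MvPolynomial (Fin 3) K ⧸ Ideal.span {F} →ₗ[K] Fin r → K :=
    LinearMap.pi fun j ↦ PowerSeries.coeff j ∘ₗ Φ.toLinearMap
  obtain ⟨v, hv⟩ := exists_linearIndependent_of_le_finrank
    (le_finrank_inf_ker (formClasses F (homogeneousSubmodule (Fin 3) K m)) φ (N := n)
      (by simpa using hdim))
  choose f hf hfv using fun l ↦ (v l).2.1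
  refine ⟨f, hf, fun l ↦ PowerSeries.X_pow_dvd_iff.2 fun j hj ↦ ?_, ?_⟩
  · have hφ : φ (v l) = 0 := (v l).2.2
    rw [← hfv] at hφ
    exact congrFun hφ ⟨j, hj⟩
  · rw [show (fun l ↦ Ideal.Quotient.mkₐ K (Ideal.span {F}) (f l)) = fun l ↦ (v l).1 from
      funext hfv]
    exact hv.map' (Submodule.subtype _) (Submodule.ker_subtype _)

lemma eq_zero_of_dvd_sum_smul
    (hf : LinearIndependent K fun l ↦ Ideal.Quotient.mkₐ K (Ideal.span {F}) (f l))
    {c : Fin (n + 1) → K} (hc : F ∣ ∑ l, c l • f l) : c = 0 := by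
  rw [← mk_span_singleton_eq_zero_iff, map_sum] at hc
  simp only [map_smul] at hc
  exact funext (Fintype.linearIndependent_iff.1 hf c hc)

lemma isHomogeneous_sum_smul (hf : ∀ l, (f l).IsHomogeneous m) (c : Fin (n + 1) → K) :
    (∑ l, c l • f l).IsHomogeneous m :=
  sum_mem (S := homogeneousSubmodule (Fin 3) K m) fun l _ ↦ Submodule.smul_mem _ _ (hf l)

lemma IsRegularArc.dvd_X_pow_mul_wronskianForm_sub (hx : IsRegularArc x) (hd : 1 < d)
    (hF : F.IsHomogeneous d) (hirr : Irreducible F) (hFx : aeval x F = 0) (hdK : (d : K) ≠ 0)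
    (hm : 1 ≤ m) (hf : ∀ l, (f l).IsHomogeneous m) (q : ℕ) (i j : Fin 3) :
    F ∣ X i ^ n.choose 2 * wronskianForm q F f j - X j ^ n.choose 2 * wronskianForm q F f i := by
  obtain ⟨a, -, ha⟩ := hx.exists_aeval_pderiv_eq_smul_cross hF hFx
    (hx.exists_aeval_pderiv_ne_zero hd hF hirr hFx hdK)
  have hhom (i j : Fin 3) := (isHomogeneous_X_pow (R := K) i (n.choose 2)).mul
    (isHomogeneous_wronskianForm hF hf hd hm q j)
  refine hx.dvd_of_aeval_eq_zero hd hF hirr hFx ((hhom i j).sub (hhom j i)) ?_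
  refine (mul_eq_zero_iff_left
    (pow_ne_zero (n.choose 2) (PowerSeries.X_ne_zero (R := K)))).1 ?_
  have hi := X_pow_mul_aeval_wronskianForm hF hd hm ha hf q i
  have hj := X_pow_mul_aeval_wronskianForm hF hd hm ha hf q j
  rw [mul_pow] at hi hj
  simp only [map_sub, map_mul, map_pow, aeval_X]
  linear_combination x i ^ n.choose 2 * hj - x j ^ n.choose 2 * hi

variable [Fintype K]

lemma IsRegularArc.X_pow_dvd_det_frobeniusWronskian_aeval (p : ℕ) [CharP K p]
    (hx : IsRegularArc x) (hd : 1 < d) (hF : F.IsHomogeneous d) (hirr : Irreducible F)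
    (hFx : aeval x F = 0) (hmd : m * d < p) (hf : ∀ l, (f l).IsHomogeneous m)
    (hfF : LinearIndependent K fun l ↦ Ideal.Quotient.mkₐ K (Ideal.span {F}) (f l))
    (hr : ∀ l, PowerSeries.X ^ r ∣ aeval x (f l)) :
    (frobeniusWronskian (Fintype.card K) fun l ↦ aeval x (f l)).det ≠ 0 ∧
      PowerSeries.X ^ ((Fintype.card K + n) * r + (n + 1).choose 2) ∣
        (frobeniusWronskian (Fintype.card K) fun l ↦ aeval x (f l)).det := by
  have haeval (c : Fin (n + 1) → K) :
      ∑ l, c l • aeval x (f l) = aeval x (∑ l, c l • f l) := by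
    simp only [map_sum, map_smul]
  refine X_pow_dvd_det_frobeniusWronskian p ?_ hr fun w hw hwp ↦ ?_
  · refine Fintype.linearIndependent_iff.2 fun c hc ↦ congrFun (eq_zero_of_dvd_sum_smul hfF ?_)
    exact hx.dvd_of_aeval_eq_zero hd hF hirr hFx (isHomogeneous_sum_smul hf c)
      ((haeval c).symm.trans hc)
  · obtain ⟨c, rfl⟩ := (Submodule.mem_span_range_iff_exists_fun K).1 hw
    rw [haeval] at hwp ⊢
    by_contra hne
    refine hmd.not_ge (hx.le_mul_of_X_pow_dvd_aeval hd hF hirr hFx (isHomogeneous_sum_smul hf c)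
      (fun ⟨g, hg⟩ ↦ hne ?_) hwp)
    rw [hg, map_mul, hFx, zero_mul]

lemma IsRegularArc.X_pow_dvd_aeval_wronskianForm (p : ℕ) [CharP K p]
    (hx : IsRegularArc x) (hd : 1 < d) (hF : F.IsHomogeneous d) (hirr : Irreducible F)
    (hFx : aeval x F = 0) (hdK : (d : K) ≠ 0) (hm : 1 ≤ m) (hmd : m * d < p)
    (hf : ∀ l, (f l).IsHomogeneous m)
    (hfF : LinearIndependent K fun l ↦ Ideal.Quotient.mkₐ K (Ideal.span {F}) (f l))
    (hr : ∀ l, PowerSeries.X ^ r ∣ aeval x (f l)) (i : Fin 3) :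
    PowerSeries.X ^ ((Fintype.card K + n) * r + n) ∣
      aeval x (wronskianForm (Fintype.card K) F f i) := by
  obtain ⟨a, -, ha⟩ := hx.exists_aeval_pderiv_eq_smul_cross hF hFx
    (hx.exists_aeval_pderiv_ne_zero hd hF hirr hFx hdK)
  have hdvd := ((hx.X_pow_dvd_det_frobeniusWronskian_aeval p hd hF hirr hFx hmd hf hfF
    hr).2).mul_left ((a * x i) ^ n.choose 2)
  rwa [← X_pow_mul_aeval_wronskianForm hF hd hm ha hf, Nat.choose_succ_succ' n 1,
    Nat.choose_one_right, ← add_assoc, add_comm _ (n.choose 2), pow_add,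
    mul_dvd_mul_iff_left (pow_ne_zero _ PowerSeries.X_ne_zero)] at hdvd

lemma IsRegularArc.exists_not_dvd_wronskianForm (p : ℕ) [CharP K p]
    (hx : IsRegularArc x) (hd : 1 < d) (hF : F.IsHomogeneous d) (hirr : Irreducible F)
    (hFx : aeval x F = 0) (hdK : (d : K) ≠ 0) (hm : 1 ≤ m) (hmd : m * d < p)
    (hf : ∀ l, (f l).IsHomogeneous m)
    (hfF : LinearIndependent K fun l ↦ Ideal.Quotient.mkₐ K (Ideal.span {F}) (f l)) :
    ∃ i, ¬ F ∣ wronskianForm (Fintype.card K) F f i := by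
  obtain ⟨a, ha0, ha⟩ := hx.exists_aeval_pderiv_eq_smul_cross hF hFx
    (hx.exists_aeval_pderiv_ne_zero hd hF hirr hFx hdK)
  obtain ⟨i, hi⟩ := Function.ne_iff.1 hx.center_ne_zero
  have hxi : x i ≠ 0 := fun h ↦ hi (by simp [h])
  have hdet := (hx.X_pow_dvd_det_frobeniusWronskian_aeval p hd hF hirr hFx hmd hf hfF (r := 0)
    (by simp)).1
  refine ⟨i, fun ⟨g, hg⟩ ↦
    mul_ne_zero (pow_ne_zero (n.choose 2) (mul_ne_zero ha0 hxi)) hdet ?_⟩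
  rw [← X_pow_mul_aeval_wronskianForm hF hd hm ha hf, hg, map_mul, hFx, zero_mul, mul_zero]

variable {ι : Type*} [Fintype ι] {x : ι → Fin 3 → K⟦X⟧}

lemma IsArcSystem.mul_card_add_le (p : ℕ) [CharP K p] (hx : IsArcSystem x) (hd : 1 < d)
    (hF : F.IsHomogeneous d) (hirr : Irreducible F) (hFx : ∀ i, aeval (x i) F = 0) (hm : 1 ≤ m)
    (hmd : m * d < p) (i₀ : ι)
    (hdim : n + 1 + r ≤ Module.finrank K (formClasses F (homogeneousSubmodule (Fin 3) K m))) :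
    n * Fintype.card ι + (Fintype.card K + n) * r + n.choose 2 * d ≤
      (m * Fintype.card K + (n * m + n.choose 2 * (d - 2))) * d := by
  classical
  have hdK : (d : K) ≠ 0 := fun h ↦
    (Nat.le_of_dvd (by omega) ((CharP.cast_eq_zero_iff K p d).1 h)).not_gt
      ((Nat.le_mul_of_pos_left d hm).trans_lt hmd)
  obtain ⟨f, hf, hfr, hfF⟩ := exists_forms_X_pow_dvd_aeval (hFx i₀) hdim
  have hbezout := sum_add_mul_le_mul_of_pow_dvd_aeval hx hd hF hirr hFx
    (a := fun i ↦ (Fintype.card K + n) * (if i = i₀ then r else 0) + n)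
    (isHomogeneous_wronskianForm hF hf hd hm (Fintype.card K))
    ((hx.regular i₀).dvd_X_pow_mul_wronskianForm_sub hd hF hirr (hFx i₀) hdK hm hf _)
    ((hx.regular i₀).exists_not_dvd_wronskianForm p hd hF hirr (hFx i₀) hdK hm hmd hf hfF)
    fun k i ↦ (hx.regular i).X_pow_dvd_aeval_wronskianForm p hd hF hirr (hFx i) hdK hm hmd hf hfF
      (fun l ↦ by
        split_ifs with hi
        · exact hi ▸ hfr l
        · simp) k
  simpa [Finset.sum_add_distrib, mul_comm n, add_comm] using hbezout

lemma two_mul_le_of_wronskian_degree_bound {q g N r m d : ℕ} (hg : 0 < g) (hd : 2 ≤ d)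
    (hdg : d * d + 2 = 3 * d + 2 * g) (hr : r + 5 * g = m * d) (hq : 16 * g ^ 2 ≤ q)
    (h : 4 * g * N + (q + 4 * g) * r + (4 * g).choose 2 * d ≤
      (m * q + (4 * g * m + (4 * g).choose 2 * (d - 2))) * d) :
    2 * N ≤ 3 * q + 2 := by
  qify [hd, Nat.cast_choose_two] at *
  have hmul : g * (4 * N) ≤ g * (5 * q + 16 * g ^ 2 + 4 : ℚ) := by
    linear_combination h - (q + 4 * g) * hr + 2 * g * (4 * g - 1) * hdg
  have := le_of_mul_le_mul_left hmul hg
  linarith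

lemma IsArcSystem.two_mul_card_le (p : ℕ) [CharP K p] (hx : IsArcSystem x) (hd : 3 ≤ d)
    (hF : F.IsHomogeneous d) (hirr : Irreducible F) (hFx : ∀ i, aeval (x i) F = 0)
    (hp : 4 * (d - 1) ^ 2 * (d - 2) ^ 2 ≤ p) :
    2 * Fintype.card ι ≤ 3 * Fintype.card K + 2 := by
  obtain hι | ⟨⟨i₀⟩⟩ := isEmpty_or_nonempty ι
  · simp
  obtain ⟨δ, rfl⟩ := Nat.exists_eq_add_of_le' hd
  obtain ⟨g, hg⟩ : ∃ g, (δ + 2) * (δ + 1) = 2 * g :=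
    (Nat.even_mul_pred_self (δ + 2)).two_dvd
  have hg0 : 0 < g := by nlinarith
  replace hp : 16 * g ^ 2 ≤ p := by
    rw [show δ + 3 - 1 = δ + 2 by omega, show δ + 3 - 2 = δ + 1 by omega] at hp
    calc 16 * g ^ 2 = 4 * (2 * g) ^ 2 := by ring
      _ = 4 * (δ + 2) ^ 2 * (δ + 1) ^ 2 := by rw [← hg]; ring
      _ ≤ p := hp
  have hmd : (δ + 3 + 2 * δ) * (δ + 3) < p := by nlinarith
  obtain ⟨r, hr⟩ : ∃ r, (δ + 3 + 2 * δ) * (δ + 3) = 5 * g + r :=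
    Nat.exists_eq_add_of_le (by nlinarith)
  have hdim : Module.finrank K
      (formClasses F (homogeneousSubmodule (Fin 3) K (δ + 3 + 2 * δ))) = 4 * g + 1 + r := by
    rw [finrank_formClasses_homogeneousSubmodule hF hirr.ne_zero]
    qify [Nat.cast_choose_two] at hg hr ⊢
    linear_combination hr - hg / 2
  have hpq : p ≤ Fintype.card K := Nat.le_of_dvd Fintype.card_pos
    ((CharP.cast_eq_zero_iff K p _).1 (Nat.cast_card_eq_zero K))
  exact two_mul_le_of_wronskian_degree_bound hg0 (by omega) (by nlinarith) (by omega)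
    (hp.trans hpq) (hx.mul_card_add_le p (by omega) hF hirr hFx (by omega) hmd i₀ hdim.ge)

end StohrVoloch

section Polar

open scoped PowerSeries Polynomial Matrix

/-- The first polar of the form `F` with respect to the point `P`. The points of `F = 0` on its
zero locus are those whose tangent line passes through `P`. -/
noncomputable def polar {R σ : Type*} [CommRing R] [Fintype σ] (P : σ → R)
    (F : MvPolynomial σ R) : MvPolynomial σ R :=
  ∑ i, C (P i) * pderiv i F

lemma isHomogeneous_polar {R σ : Type*} [CommRing R] [Fintype σ] {F : MvPolynomial σ R} {d : ℕ}
    (hF : F.IsHomogeneous d) (P : σ → R) : (polar P F).IsHomogeneous (d - 1) :=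
  IsHomogeneous.sum _ _ _ fun _ _ ↦ hF.pderiv.C_mul _

lemma eval_polar {R σ : Type*} [CommRing R] [Fintype σ] (P Q : σ → R) (F : MvPolynomial σ R) :
    eval Q (polar P F) = (fun i ↦ eval Q (pderiv i F)) ⬝ᵥ P := by
  simp [polar, dotProduct, mul_comm]

lemma onTangentLine_iff_eval_polar_eq_zero {R : Type*} [CommRing R] {F : MvPolynomial (Fin 3) R}
    {Q P : Fin 3 → R} : OnTangentLine F Q P ↔ eval Q (polar P F) = 0 := by
  rw [OnTangentLine, eval_polar, dotProduct, Fin.sum_univ_three]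

lemma derivative_aeval_line {R σ : Type*} [CommRing R] [Fintype σ] (P Q : σ → R)
    (F : MvPolynomial σ R) :
    Polynomial.derivative
        (aeval (fun i ↦ Polynomial.C (Q i) + Polynomial.C (P i) * Polynomial.X) F) =
      aeval (fun i ↦ Polynomial.C (Q i) + Polynomial.C (P i) * Polynomial.X) (polar P F) := by
  have := derivation_aeval (Polynomial.derivative' (R := R))
    (fun i ↦ Polynomial.C (Q i) + Polynomial.C (P i) * Polynomial.X) F
  simpa [polar, algHom_C, Polynomial.algebraMap_eq, mul_comm (aeval _ _)] using this

variable {K : Type*} [Field K] {F : MvPolynomial (Fin 3) K} {d : ℕ}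

lemma isRegularArc_line {P Q : Fin 3 → K} (hQP : LinearIndependent K ![Q, P]) :
    IsRegularArc fun i ↦ PowerSeries.C (Q i) + PowerSeries.C (P i) * PowerSeries.X := by
  have hcenter : PowerSeries.constantCoeff ∘
      (fun i ↦ PowerSeries.C (Q i) + PowerSeries.C (P i) * PowerSeries.X) = Q :=
    funext fun i ↦ by simp
  have hvelocity : PowerSeries.coeff 1 ∘
      (fun i ↦ PowerSeries.C (Q i) + PowerSeries.C (P i) * PowerSeries.X) = P :=
    funext fun i ↦ by simp
  have hQ : Q ≠ 0 := hQP.ne_zero 0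
  refine ⟨by rwa [hcenter], ?_⟩
  rw [hcenter, hvelocity]
  refine exists_dotProduct_eq_zero_and_ne_zero fun hP ↦ ?_
  obtain ⟨a, ha⟩ := Submodule.mem_span_singleton.1 hP
  exact (LinearIndependent.pair_iff' hQ).1 hQP a ha

lemma aeval_line_eq_zero_of_polar_eq_zero (p : ℕ) [CharP K p] (hF : F.IsHomogeneous d)
    (hdp : d < p) {P Q : Fin 3 → K} (hFQ : eval Q F = 0) (hpolar : polar P F = 0) :
    aeval (fun i ↦ Polynomial.C (Q i) + Polynomial.C (P i) * Polynomial.X) F = 0 := by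
  let y : Fin 3 → K[X] := fun i ↦ Polynomial.C (Q i) + Polynomial.C (P i) * Polynomial.X
  have hderiv : Polynomial.derivative (aeval y F) = 0 := by
    rw [derivative_aeval_line, hpolar, map_zero]
  have hdeg : (aeval y F).natDegree < p := by
    refine (aeval_natDegree_le F hF.totalDegree_le y (n := 1) fun i ↦ ?_).trans_lt (by simpa)
    simp only [y]
    compute_degree
  have hcoeff : (aeval y F).coeff 0 = eval Q F := by
    rw [← Polynomial.constantCoeff_apply, map_aeval]
    exact congrArg₂ (eval₂ · · F) (RingHom.ext fun _ ↦ by simp) (funext fun _ ↦ by simp [y])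
  rw [eq_C_of_derivative_eq_zero_of_natDegree_lt p hderiv hdeg, hcoeff, hFQ, Polynomial.C_0]

lemma polar_ne_zero (p : ℕ) [CharP K p] (hF : F.IsHomogeneous d) (hirr : Irreducible F)
    (hd : 1 < d) (hdp : d < p) {P Q : Fin 3 → K} (hQP : LinearIndependent K ![Q, P])
    (hFQ : eval Q F = 0) : polar P F ≠ 0 := by
  intro hpolar
  let x : Fin 3 → K⟦X⟧ := fun i ↦ PowerSeries.C (Q i) + PowerSeries.C (P i) * PowerSeries.X
  have hFx : aeval x F = 0 := by
    have := congrArg (Polynomial.coeToPowerSeries.ringHom (R := K))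
      (aeval_line_eq_zero_of_polar_eq_zero p hF hdp hFQ hpolar)
    rw [map_zero, map_aeval] at this
    rw [← this]
    exact congrArg₂ (eval₂ · · F) (RingHom.ext fun _ ↦ by simp) (funext fun _ ↦ by simp [x])
  have hlinx : aeval x (linForm (Q ⨯₃ P)) = 0 := by
    simp only [linForm, x, Fin.sum_univ_three, cross_apply, map_add, map_mul, map_sub, algHom_C,
      aeval_X, PowerSeries.algebraMap_eq, Matrix.cons_val_zero, Matrix.cons_val_one,
      Matrix.cons_val]
    ring
  have hlin : linForm (Q ⨯₃ P) ≠ 0 := by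
    obtain ⟨i, hi⟩ := Function.ne_iff.1 (crossProduct_ne_zero_iff_linearIndependent.2 hQP)
    intro h
    refine hi ?_
    simpa [linForm, Pi.single_apply] using congrArg (eval (Pi.single i 1)) h
  exact not_dvd_of_isHomogeneous_of_lt hF hirr.ne_zero (isHomogeneous_linForm _) hlin hd
    ((isRegularArc_line hQP).dvd_of_aeval_eq_zero hd hF hirr hFx (isHomogeneous_linForm _) hlinx)

variable {ι : Type*} {x : ι → Fin 3 → K⟦X⟧}

lemma IsArcSystem.exists_linearIndependent_pair [Nontrivial ι] (hx : IsArcSystem x)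
    {P : Fin 3 → K} (hP : P ≠ 0) :
    ∃ i, LinearIndependent K ![PowerSeries.constantCoeff ∘ x i, P] := by
  obtain ⟨i, j, hij⟩ := exists_pair_ne ι
  by_contra! h
  have hprop (k : ι) : ∃ a : K, a • (PowerSeries.constantCoeff ∘ x k) = P := by
    simpa [LinearIndependent.pair_iff' (hx.regular k).center_ne_zero] using h k
  obtain ⟨a, ha⟩ := hprop i
  obtain ⟨b, hb⟩ := hprop j
  have ha0 : a ≠ 0 := by
    rintro rfl
    exact hP (by rw [← ha, zero_smul])
  refine hx.separated hij (Submodule.mem_span_singleton.2 ⟨a⁻¹ * b, ?_⟩)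
  rw [mul_smul, hb, ← ha, inv_smul_smul₀ ha0]

lemma IsArcSystem.card_filter_eval_polar_eq_zero_le [Nontrivial ι] [Fintype ι] [DecidableEq K]
    (p : ℕ) [CharP K p] (hx : IsArcSystem x) (hF : F.IsHomogeneous d) (hirr : Irreducible F)
    (hd : 1 < d) (hdp : d < p) (hFx : ∀ i, aeval (x i) F = 0) {P : Fin 3 → K} (hP : P ≠ 0) :
    (Finset.univ.filter fun i ↦ eval (PowerSeries.constantCoeff ∘ x i) (polar P F) = 0).card ≤
      (d - 1) * d := by
  obtain ⟨i, hi⟩ := hx.exists_linearIndependent_pair hP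
  have hpolar : polar P F ≠ 0 :=
    polar_ne_zero p hF hirr hd hdp hi (by rw [← constantCoeff_aeval, hFx, map_zero])
  rw [Finset.card_filter]
  refine sum_le_mul_of_pow_dvd_aeval hx hd hF hirr hFx (isHomogeneous_polar hF P)
    (not_dvd_of_isHomogeneous_of_lt hF hirr.ne_zero (isHomogeneous_polar hF P) hpolar (by omega))
    fun j ↦ ?_
  split_ifs with hj
  · rwa [pow_one, PowerSeries.X_dvd_iff, constantCoeff_aeval]
  · rw [pow_zero]
    exact one_dvd _

end Polar

section TangentFilling

open scoped PowerSeries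

lemma eval_smul_of_isHomogeneous {R σ : Type*} [CommSemiring R] {G : MvPolynomial σ R} {e : ℕ}
    (hG : G.IsHomogeneous e) (c : R) (Q : σ → R) : eval (c • Q) G = c ^ e * eval Q G := by
  rw [eval_eq, eval_eq, Finset.mul_sum]
  refine Finset.sum_congr rfl fun m hm ↦ ?_
  have hdeg : ∑ i ∈ m.support, m i = e := by
    rw [← Finsupp.degree_apply, Finsupp.degree_eq_weight_one]
    exact hG (mem_support_iff.1 hm)
  simp only [Pi.smul_apply, smul_eq_mul, mul_pow, Finset.prod_mul_distrib,
    Finset.prod_pow_eq_pow_sum, hdeg]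
  ring

universe u

variable {K : Type u} [Field K] {F : MvPolynomial (Fin 3) K} {d : ℕ}

lemma SmoothPoint.smul {Q : Fin 3 → K} (hQ : SmoothPoint F Q) (hF : F.IsHomogeneous d) {c : K}
    (hc : c ≠ 0) : SmoothPoint F (c • Q) := by
  obtain ⟨hQ0, hFQ, i, hi⟩ := hQ
  refine ⟨smul_ne_zero hc hQ0, ?_, i, ?_⟩
  · rw [eval_smul_of_isHomogeneous hF, hFQ, mul_zero]
  · rw [eval_smul_of_isHomogeneous hF.pderiv]
    exact mul_ne_zero (pow_ne_zero _ hc) hi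

lemma OnTangentLine.smul {Q P : Fin 3 → K} (hQP : OnTangentLine F Q P) (hF : F.IsHomogeneous d)
    (c : K) : OnTangentLine F (c • Q) P := by
  rw [onTangentLine_iff_eval_polar_eq_zero] at hQP ⊢
  rw [eval_smul_of_isHomogeneous (isHomogeneous_polar hF P), hQP, mul_zero]

lemma TangentFilling.exists_isArcSystem [Finite K] (hT : TangentFilling F)
    (hF : F.IsHomogeneous d) :
    ∃ (ι : Type u) (_ : Fintype ι) (x : ι → Fin 3 → K⟦X⟧), IsArcSystem x ∧
      (∀ i, aeval (x i) F = 0) ∧ (∀ i, SmoothPoint F (PowerSeries.constantCoeff ∘ x i)) ∧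
      ∀ P ≠ 0, ∃ i, OnTangentLine F (PowerSeries.constantCoeff ∘ x i) P := by
  classical
  let ι := {Q : Projectivization K (Fin 3 → K) // SmoothPoint F Q.rep}
  choose x hcenter hregular hFx using fun Q : ι ↦
    exists_isRegularArc hF Q.2.1 Q.2.2.1 (Function.ne_iff.2 Q.2.2.2)
  refine ⟨ι, Fintype.ofFinite ι, x, ⟨hregular, fun Q Q' hne hmem ↦ hne ?_⟩, hFx, fun Q ↦ ?_,
    fun P hP ↦ ?_⟩
  · obtain ⟨a, ha⟩ := Submodule.mem_span_singleton.1 hmem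
    rw [hcenter, hcenter] at ha
    refine Subtype.ext ?_
    rw [← Q.1.mk_rep, ← Q'.1.mk_rep, Projectivization.mk_eq_mk_iff']
    exact ⟨a, ha⟩
  · rw [hcenter]
    exact Q.2
  · obtain ⟨Q, hQ, hQP⟩ := hT P hP
    obtain ⟨a, ha⟩ := Projectivization.exists_smul_eq_mk_rep K Q hQ.1
    rw [Units.smul_def] at ha
    refine ⟨⟨.mk K Q hQ.1, ha ▸ hQ.smul hF a.ne_zero⟩, ?_⟩
    rw [hcenter, ← ha]
    exact hQP.smul hF a

lemma IsArcSystem.three_mul_le_two_mul_card {p : ℕ} [Fact p.Prime] {ι : Type*} [Fintype ι]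
    {F : MvPolynomial (Fin 3) (ZMod p)} {x : ι → Fin 3 → (ZMod p)⟦X⟧} (hx : IsArcSystem x)
    (hd : 1 < d) (hF : F.IsHomogeneous d) (hirr : Irreducible F)
    (hFx : ∀ i, aeval (x i) F = 0) (hdp : (d - 1) * d < p)
    (hgrad : ∀ i, ∃ k, eval (PowerSeries.constantCoeff ∘ x i) (pderiv k F) ≠ 0)
    (hcover : ∀ P ≠ 0, ∃ i, OnTangentLine F (PowerSeries.constantCoeff ∘ x i) P) :
    3 * (p + 1) ≤ 2 * Fintype.card ι := by
  simp only [onTangentLine_iff_eval_polar_eq_zero] at hcover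
  let L (i : ι) : Module.Dual (ZMod p) (Fin 3 → ZMod p) :=
    dotProductEquiv (ZMod p) (Fin 3)
      fun k ↦ eval (PowerSeries.constantCoeff ∘ x i) (pderiv k F)
  have hL (i : ι) (P : Fin 3 → ZMod p) :
      L i P = eval (PowerSeries.constantCoeff ∘ x i) (polar P F) := by
    rw [eval_polar]
    rfl
  have hL0 (i : ι) : L i ≠ 0 := by
    rw [ne_eq, EmbeddingLike.map_eq_zero_iff]
    exact Function.ne_iff.2 (hgrad i)
  have hnontrivial : Nontrivial ι := by
    by_contra hι
    rw [not_nontrivial_iff_subsingleton] at hι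
    obtain ⟨i, -⟩ := hcover 1 one_ne_zero
    refine hL0 i (LinearMap.ext fun P ↦ ?_)
    obtain rfl | hP := eq_or_ne P 0
    · simp
    obtain ⟨j, hj⟩ := hcover P hP
    rw [Subsingleton.elim i j, hL, hj, LinearMap.zero_apply]
  have hdp' : d < p := (Nat.le_mul_of_pos_left d (by omega)).trans_lt hdp
  have := dual_blokhuis (s := Finset.univ) (L := L) (by omega) (by simp) (fun i _ ↦ hL0 i)
    (fun P hP ↦ by simpa [hL] using hcover P hP) fun P hP ↦ by
      simpa only [hL] using (hx.card_filter_eval_polar_eq_zero_le p hF hirr hd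
        hdp' hFx hP).trans_lt hdp
  simpa using this

end TangentFilling

lemma mul_lt_of_four_mul_sq_mul_sq_le {d n : ℕ} (hd : 3 ≤ d)
    (hn : 4 * (d - 1) ^ 2 * (d - 2) ^ 2 ≤ n) : (d - 1) * d < n := by
  obtain ⟨e, rfl⟩ := Nat.exists_eq_add_of_le' hd
  calc (e + 2) * (e + 3) < 4 * (e + 2) ^ 2 * 1 := by nlinarith
    _ ≤ 4 * (e + 2) ^ 2 * (e + 1) ^ 2 := by gcongr; exact Nat.one_le_pow _ _ e.succ_pos
    _ ≤ n := hn

theorem low_degree_not_tangent_filling_over_prime_field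
    (p : ℕ) [Fact p.Prime] (d : ℕ) (hd : 3 ≤ d)
    (F : MvPolynomial (Fin 3) (ZMod p)) (hF : F.IsHomogeneous d)
    (hirr : Irreducible F)
    (hp : 4 * (d - 1) ^ 2 * (d - 2) ^ 2 ≤ p) :
    ¬ TangentFilling F := by
  intro hT
  obtain ⟨ι, _, x, hx, hFx, hsmooth, hcover⟩ := hT.exists_isArcSystem hF
  have hdp : (d - 1) * d < p := mul_lt_of_four_mul_sq_mul_sq_le hd hp
  have hlower : 3 * (p + 1) ≤ 2 * Fintype.card ι :=
    hx.three_mul_le_two_mul_card (by omega) hF hirr hFx hdp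
      (fun i ↦ (hsmooth i).2.2) hcover
  have hupper : 2 * Fintype.card ι ≤ 3 * p + 2 := by
    simpa only [ZMod.card] using hx.two_mul_card_le p hd hF hirr hFx hp
  omega
end

section
/- Let C ⊂ ℙ² be a plane curve of degree d ≥ 2 over a finite field 𝔽_q of characteristic p, defined by a homogeneous polynomial F ∈ 𝔽_q[x,y,z] of degree d that is irreducible over the algebraic closure of 𝔽_q. If p > d, then the set of bitangent lines of C (lines in ℙ² over the algebraic closure that are tangent to C at two or more distinct smooth points) is finite and has cardinality at most (1/2)·d²·(d-1)². -/
open MvPolynomial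

/-- The coefficient vector of the tangent line to the curve `{F = 0}` at the point with
coordinates `Q`, namely the gradient of `F` at `Q`. -/
noncomputable def tangentVec {K : Type*} [CommRing K] (F : MvPolynomial (Fin 3) K) (Q : Fin 3 → K) :
    Fin 3 → K :=
  fun i => eval Q (pderiv i F)

/-- The line of the projective plane whose coefficient vector is (a representative of) `L`
is bitangent to the curve `{F = 0}`: it is the tangent line of `F` at two distinct smooth
points. Lines are regarded as points of the dual projective plane, i.e. elements of the
projectivization of `K³`. -/
def IsBitangent {K : Type*} [Field K] (F : MvPolynomial (Fin 3) K)
    (L : Projectivization K (Fin 3 → K)) : Prop :=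
  ∃ (Q₁ Q₂ : Fin 3 → K) (h₁ : SmoothPoint F Q₁) (h₂ : SmoothPoint F Q₂),
    Projectivization.mk K Q₁ h₁.1 ≠ Projectivization.mk K Q₂ h₂.1 ∧
    ∃ (hv₁ : tangentVec F Q₁ ≠ 0) (hv₂ : tangentVec F Q₂ ≠ 0),
      L = Projectivization.mk K (tangentVec F Q₁) hv₁ ∧
      L = Projectivization.mk K (tangentVec F Q₂) hv₂

/-!
The Gauss map `P ↦ ∇F(P)` sends the curve `F = 0` onto its dual curve, whose ideal is the preimage
of `(F)` under the substitution of the partial derivatives of `F` for the variables. The homogeneous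
coordinate ring of the dual curve grows at most as fast as that of `F = 0` rescaled by `d - 1`, so
comparing Hilbert functions shows that the ideal is generated by one form `G`, of degree
`g ≤ d * (d - 1)`.

The dual curve is not a point: if the gradient had a constant direction along the curve, then the
restrictions of `F` to the tangent lines would satisfy a recursion for their coefficients which,
as `d!` is invertible, forces them to vanish, so the curve would contain its tangent lines.

By Euler's identity and its derivative along the curve, a point `P` of the curve is orthogonal to
both `∇F(P)` and its derivative, and so is `∇G(∇F(P))`. Hence `∇G(∇F(P))` is proportional to `P`:
the point can be recovered from its tangent line unless `∇G` vanishes there, and at the points of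
contact of a bitangent `∇G(∇F)` does vanish. Some `∂ᵢG(∇F)`, a form of degree `(d - 1) * (g - 1)`,
is not divisible by `F`, and by Bézout it has at most `d * (d - 1) * (g - 1)` zeros on the curve;
each bitangent uses up two of them, and each point of contact determines its bitangent.
-/

namespace PlaneCurve

open Module
open scoped LinearAlgebra.Projectivization Matrix

attribute [local instance] MvPolynomial.gradedAlgebra

section LinearAlgebra

variable {k V W U : Type*} [Field k] [AddCommGroup V] [Module k V] [AddCommGroup W] [Module k W]
  [AddCommGroup U] [Module k U]

lemma finrank_map_add_finrank_inf_ker (f : V →ₗ[k] W) (N : Submodule k V)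
    [FiniteDimensional k N] :
    finrank k (N.map f) + finrank k (N ⊓ LinearMap.ker f : Submodule k V) = finrank k N := by
  have hker : finrank k (N ⊓ LinearMap.ker f : Submodule k V) =
      finrank k (LinearMap.ker (f.domRestrict N)) := by
    rw [LinearMap.ker_domRestrict, ← Submodule.map_comap_subtype, N.finrank_map_subtype_eq]
  rw [hker, ← LinearMap.range_domRestrict, LinearMap.finrank_range_add_finrank_ker]

lemma finrank_map_le_of_inf_ker_le {f : V →ₗ[k] W} {g : V →ₗ[k] U} {N : Submodule k V}
    [FiniteDimensional k N] (h : N ⊓ LinearMap.ker f ≤ LinearMap.ker g) :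
    finrank k (N.map g) ≤ finrank k (N.map f) := by
  have hf := finrank_map_add_finrank_inf_ker f N
  have hg := finrank_map_add_finrank_inf_ker g N
  have : FiniteDimensional k (N ⊓ LinearMap.ker g : Submodule k V) :=
    Submodule.finiteDimensional_inf_left _ _
  have := Submodule.finrank_mono (le_inf inf_le_left h : N ⊓ LinearMap.ker f ≤ _)
  omega

end LinearAlgebra

section HilbertFunction

variable {σ k : Type*} [Field k]

/-- The Hilbert function of `k[σ] ⧸ I`: the dimension of its degree `n` part, taken to be the image
of the forms of degree `n`, so that `I` need not be homogeneous. -/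
noncomputable def hilbertFunction (I : Ideal (MvPolynomial σ k)) (n : ℕ) : ℕ :=
  finrank k ((homogeneousSubmodule σ k n).map (Ideal.Quotient.mkₐ k I).toLinearMap)

variable {I J : Ideal (MvPolynomial σ k)}

lemma ker_mkₐ_toLinearMap (I : Ideal (MvPolynomial σ k)) :
    LinearMap.ker (Ideal.Quotient.mkₐ k I).toLinearMap = I.restrictScalars k := by
  ext f
  simp [Ideal.Quotient.eq_zero_iff_mem]

lemma homogeneousComponent_add_mul_of_isHomogeneous {H : MvPolynomial σ k} {h : ℕ}
    (hH : H.IsHomogeneous h) (f : MvPolynomial σ k) (n : ℕ) :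
    homogeneousComponent (n + h) (f * H) = homogeneousComponent n f * H := by
  simpa [← decomposition.decompose'_apply] using
    DirectSum.coe_decompose_mul_add_of_right_mem (homogeneousSubmodule σ k) (i := n) (a := f) hH

lemma exists_isHomogeneous_sub_mul_mem (hI : I.IsHomogeneous (homogeneousSubmodule σ k))
    {H f : MvPolynomial σ k} {h n : ℕ} (hH : H.IsHomogeneous h) (hf : f.IsHomogeneous (n + h))
    (hfI : f ∈ I ⊔ Ideal.span {H}) : ∃ c, c.IsHomogeneous n ∧ f - c * H ∈ I := by
  obtain ⟨a, ha, b, hb, rfl⟩ := Submodule.mem_sup.1 hfI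
  obtain ⟨c, rfl⟩ := Ideal.mem_span_singleton'.1 hb
  refine ⟨homogeneousComponent n c, homogeneousComponent_isHomogeneous n c, ?_⟩
  rw [← homogeneousComponent_add_mul_of_isHomogeneous hH, ← homogeneousComponent_eq_self hf,
    map_add, add_sub_cancel_right]
  exact homogeneousComponent_mem_of_mem hI ha _

variable [Finite σ]

instance (n : ℕ) : FiniteDimensional k (homogeneousSubmodule σ k n) :=
  Module.Finite.of_fg (homogeneousSubmodule_fg σ k n)

lemma hilbertFunction_add_finrank_inf (I : Ideal (MvPolynomial σ k)) (n : ℕ) :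
    hilbertFunction I n +
      finrank k (homogeneousSubmodule σ k n ⊓ I.restrictScalars k : Submodule k _) =
      finrank k (homogeneousSubmodule σ k n) := by
  rw [← ker_mkₐ_toLinearMap]
  exact finrank_map_add_finrank_inf_ker _ _

lemma finrank_map_homogeneousSubmodule_le {V : Type*} [AddCommGroup V] [Module k V]
    (L : MvPolynomial σ k →ₗ[k] V) {n : ℕ} (hL : ∀ f ∈ I, f.IsHomogeneous n → L f = 0) :
    finrank k ((homogeneousSubmodule σ k n).map L) ≤ hilbertFunction I n := by
  apply finrank_map_le_of_inf_ker_le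
  rw [ker_mkₐ_toLinearMap]
  exact fun f hf => hL f hf.2 hf.1

lemma hilbertFunction_anti (n : ℕ) (h : I ≤ J) : hilbertFunction J n ≤ hilbertFunction I n :=
  finrank_map_homogeneousSubmodule_le _ fun _ hf _ => Ideal.Quotient.eq_zero_iff_mem.2 (h hf)

lemma hilbertFunction_bot (n : ℕ) :
    hilbertFunction (⊥ : Ideal (MvPolynomial σ k)) n = finrank k (homogeneousSubmodule σ k n) := by
  have := hilbertFunction_add_finrank_inf (⊥ : Ideal (MvPolynomial σ k)) n
  rwa [Submodule.restrictScalars_bot, inf_bot_eq, finrank_bot] at this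

lemma hilbertFunction_sup_span_singleton_add
    (hI : I.IsHomogeneous (homogeneousSubmodule σ k)) {H : MvPolynomial σ k} {h : ℕ}
    (hH : H.IsHomogeneous h) (hreg : ∀ f, f * H ∈ I → f ∈ I) (n : ℕ) :
    hilbertFunction (I ⊔ Ideal.span {H}) (n + h) + hilbertFunction I n =
      hilbertFunction I (n + h) := by
  set π := (Ideal.Quotient.mkₐ k I).toLinearMap
  set J := I ⊔ Ideal.span {H}
  set N : Submodule k (MvPolynomial σ k) :=
    homogeneousSubmodule σ k (n + h) ⊓ J.restrictScalars k
  have : FiniteDimensional k N := Submodule.finiteDimensional_inf_left _ _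
  let μ := LinearMap.mulRight k H
  have hNI : N ⊓ LinearMap.ker π = homogeneousSubmodule σ k (n + h) ⊓ I.restrictScalars k := by
    rw [ker_mkₐ_toLinearMap, inf_assoc,
      inf_eq_right.2 (show I.restrictScalars k ≤ J.restrictScalars k from le_sup_left (a := I))]
  have hmap : N.map π = (homogeneousSubmodule σ k n).map (π ∘ₗ μ) := by
    ext y
    constructor
    · rintro ⟨f, ⟨hf, hfJ⟩, rfl⟩
      obtain ⟨c, hc, hcf⟩ := exists_isHomogeneous_sub_mul_mem hI hH hf hfJ
      exact ⟨c, hc, (Ideal.Quotient.eq.2 hcf).symm⟩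
    · rintro ⟨c, hc, rfl⟩
      exact ⟨c * H, ⟨hc.mul hH, Ideal.mul_mem_left _ _
        (Ideal.mem_sup_right (Ideal.mem_span_singleton_self H))⟩, rfl⟩
  have hker : LinearMap.ker (π ∘ₗ μ) = LinearMap.ker π := by
    ext f
    simp only [LinearMap.mem_ker, LinearMap.comp_apply, μ, LinearMap.mulRight_apply]
    exact Ideal.Quotient.eq_zero_iff_mem.trans
      (Iff.intro (hreg f) (I.mul_mem_right H) |>.trans Ideal.Quotient.eq_zero_iff_mem.symm)
  have hn : finrank k (N.map π) = hilbertFunction I n := by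
    rw [hmap]
    exact le_antisymm (finrank_map_le_of_inf_ker_le (hker ▸ inf_le_right))
      (finrank_map_le_of_inf_ker_le (hker ▸ inf_le_right))
  have hN := finrank_map_add_finrank_inf_ker π N
  have hJ : hilbertFunction J (n + h) + finrank k N = _ := hilbertFunction_add_finrank_inf J (n + h)
  have hI := hilbertFunction_add_finrank_inf I (n + h)
  rw [hNI] at hN
  omega

lemma finrank_homogeneousSubmodule (σ k : Type*) [Field k] [Fintype σ] (n : ℕ) :
    finrank k (homogeneousSubmodule σ k n) = (Fintype.card σ + n - 1).choose n := by
  classical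
  have hs : {e : σ →₀ ℕ | e.degree = n} = ((Finset.univ : Finset σ).finsuppAntidiag n : Set _) := by
    ext e
    simp [Finset.mem_finsuppAntidiag, Finsupp.degree_eq_sum]
  rw [homogeneousSubmodule_eq_finsupp_supported, hs,
    (AddMonoidAlgebra.supportedEquivFinsupp (R := k) (S := k) _).finrank_eq,
    Module.finrank_finsupp_self]
  simp [Finset.card_finsuppAntidiag_nat_eq_choose]

lemma two_mul_finrank_homogeneousSubmodule_fin_three (k : Type*) [Field k] (n : ℕ) :
    2 * finrank k (homogeneousSubmodule (Fin 3) k n) = (n + 1) * (n + 2) := by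
  rw [finrank_homogeneousSubmodule, Fintype.card_fin, show 3 + n - 1 = n + 2 by omega,
    Nat.choose_symm_add, Nat.choose_two_right,
    Nat.mul_div_cancel' (Nat.even_mul_pred_self _).two_dvd, show n + 2 - 1 = n + 1 from rfl,
    mul_comm]

variable {k : Type*} [Field k] {F G H : MvPolynomial (Fin 3) k} {g h : ℕ}

lemma two_mul_hilbertFunction_span_singleton (hG : G.IsHomogeneous g) (hG0 : G ≠ 0) (n : ℕ) :
    2 * hilbertFunction (Ideal.span {G}) (n + g) = g * (2 * n + g + 3) := by
  have key := hilbertFunction_sup_span_singleton_add (Ideal.IsHomogeneous.bot _) hG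
    (by simp [hG0]) n
  rw [bot_sup_eq, hilbertFunction_bot, hilbertFunction_bot] at key
  have h₁ := two_mul_finrank_homogeneousSubmodule_fin_three k n
  have h₂ := two_mul_finrank_homogeneousSubmodule_fin_three k (n + g)
  nlinarith

lemma hilbertFunction_span_singleton_sup_span_singleton (hG : G.IsHomogeneous g) (hGp : Prime G)
    (hH : H.IsHomogeneous h) (hGH : ¬ G ∣ H) (n : ℕ) :
    hilbertFunction (Ideal.span {G} ⊔ Ideal.span {H}) (n + g + h) = g * h := by
  have key := hilbertFunction_sup_span_singleton_add
    (Ideal.homogeneous_span _ _ (by simpa using ⟨g, hG⟩)) hH (I := Ideal.span {G})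
    (fun f hf => by
      rw [Ideal.mem_span_singleton] at hf ⊢
      exact (hGp.dvd_or_dvd hf).resolve_right hGH) (n + g)
  have h₁ := two_mul_hilbertFunction_span_singleton hG hGp.ne_zero n
  have h₂ := two_mul_hilbertFunction_span_singleton hG hGp.ne_zero (n + h)
  rw [add_right_comm] at h₂
  nlinarith

end HilbertFunction

section Proportional

/-- The vectors `v` and `w` are linearly dependent, expressed by the vanishing of the `2 × 2` minors
so that it makes sense over rings. -/
def Proportional {ι A : Type*} [Mul A] (v w : ι → A) : Prop :=
  ∀ i j, v i * w j = v j * w i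

lemma Proportional.symm {ι A : Type*} [CommMagma A] {v w : ι → A} (h : Proportional v w) :
    Proportional w v := fun i j => by rw [mul_comm, h j i, mul_comm]

lemma Proportional.trans {ι A : Type*} [CommRing A] [IsDomain A] {u w x : ι → A}
    (hu : Proportional u w) (hx : Proportional x w) (hw : w ≠ 0) : Proportional u x := by
  obtain ⟨l, hl⟩ := Function.ne_iff.1 hw
  exact fun i j => mul_right_cancel₀ hl
    (by linear_combination x j * hu i l - x i * hu j l + u l * hx j i)

lemma proportional_cross {A : Type*} [CommRing A] {a b v : Fin 3 → A} (ha : a ⬝ᵥ v = 0)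
    (hb : b ⬝ᵥ v = 0) : Proportional v (a ⨯₃ b) := by
  have hv : v ⨯₃ (a ⨯₃ b) = 0 := by
    rw [cross_cross_eq_smul_sub_smul', dotProduct_comm, hb, ha, zero_smul, zero_smul, sub_zero]
  generalize a ⨯₃ b = w at hv
  have h0 := congrFun hv 0
  have h1 := congrFun hv 1
  have h2 := congrFun hv 2
  simp only [cross_apply, Matrix.cons_val, Pi.zero_apply] at h0 h1 h2
  intro i j
  fin_cases i <;> fin_cases j <;> grind

lemma mk_eq_mk_iff_proportional {k σ : Type*} [Field k] {v w : σ → k} (hv : v ≠ 0) (hw : w ≠ 0) :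
    Projectivization.mk k v hv = Projectivization.mk k w hw ↔ Proportional v w := by
  rw [Projectivization.mk_eq_mk_iff']
  constructor
  · rintro ⟨c, rfl⟩ i j
    simp only [Pi.smul_apply, smul_eq_mul]
    ring
  · intro h
    obtain ⟨i, hi⟩ := Function.ne_iff.1 hw
    refine ⟨v i / w i, funext fun j => ?_⟩
    rw [Pi.smul_apply, smul_eq_mul, div_mul_eq_mul_div, h, mul_div_cancel_right₀ _ hi]

end Proportional

section ProjectivePoints

variable {σ k : Type*} [Field k]

lemma eval_smul_of_isHomogeneous {f : MvPolynomial σ k} {n : ℕ} (hf : f.IsHomogeneous n) (c : k)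
    (v : σ → k) : eval (c • v) f = c ^ n * eval v f := by
  rw [eval_eq, eval_eq, Finset.mul_sum]
  refine Finset.sum_congr rfl fun e he => ?_
  rw [hf.degree_eq_sum_deg_support he]
  simp only [Pi.smul_apply, smul_eq_mul, mul_pow, Finset.prod_mul_distrib,
    Finset.prod_pow_eq_pow_sum]
  ring

/-- The locus in projective space where the form `f` vanishes. It is read off the chosen
representatives, so it is meaningful for homogeneous `f` only. -/
def projectiveZeros (f : MvPolynomial σ k) : Set (ℙ k (σ → k)) :=
  {P | eval P.rep f = 0}

lemma mk_mem_projectiveZeros_iff {f : MvPolynomial σ k} {n : ℕ} (hf : f.IsHomogeneous n)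
    {v : σ → k} (hv : v ≠ 0) : Projectivization.mk k v hv ∈ projectiveZeros f ↔ eval v f = 0 := by
  obtain ⟨c, hc⟩ := Projectivization.exists_smul_eq_mk_rep k v hv
  rw [projectiveZeros, Set.mem_ofPred_eq, ← hc, Units.smul_def, eval_smul_of_isHomogeneous hf]
  simp

lemma exists_linear_form_separating {P Q : ℙ k (σ → k)} (h : P ≠ Q) :
    ∃ f : MvPolynomial σ k, f.IsHomogeneous 1 ∧ eval P.rep f ≠ 0 ∧ eval Q.rep f = 0 := by
  rw [← P.mk_rep, ← Q.mk_rep, Ne, mk_eq_mk_iff_proportional, Proportional] at h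
  push Not at h
  obtain ⟨i, j, hij⟩ := h
  refine ⟨C (Q.rep j) * X i - C (Q.rep i) * X j,
    (isHomogeneous_C_mul_X _ _).sub (isHomogeneous_C_mul_X _ _), ?_, ?_⟩
  · simpa [sub_eq_zero, mul_comm] using hij
  · simp [mul_comm]

lemma exists_form_separating (s : Finset (ℙ k (σ → k))) {P : ℙ k (σ → k)} (hP : P ∉ s) {n : ℕ}
    (hn : s.card ≤ n) :
    ∃ f : MvPolynomial σ k, f.IsHomogeneous n ∧ eval P.rep f ≠ 0 ∧ ∀ Q ∈ s, eval Q.rep f = 0 := by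
  classical
  induction s using Finset.induction_on generalizing n with
  | empty =>
    obtain ⟨i, hi⟩ := Function.ne_iff.1 P.rep_nonzero
    exact ⟨X i ^ n, isHomogeneous_X_pow i n, by simpa using fun h => absurd h hi, by simp⟩
  | insert Q s hQ ih =>
    rw [Finset.card_insert_of_notMem hQ] at hn
    obtain ⟨m, rfl⟩ : ∃ m, n = m + 1 := ⟨n - 1, by omega⟩
    rw [Finset.mem_insert, not_or] at hP
    obtain ⟨f, hf, hfP, hfs⟩ := ih hP.2 (Nat.le_of_succ_le_succ hn)
    obtain ⟨l, hl, hlP, hlQ⟩ := exists_linear_form_separating hP.1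
    refine ⟨f * l, hf.mul hl, by simp [hfP, hlP], fun R hR => ?_⟩
    obtain rfl | hR := Finset.mem_insert.1 hR
    · simp [hlQ]
    · simp [hfs R hR]

lemma card_le_hilbertFunction [Finite σ] {I : Ideal (MvPolynomial σ k)} (s : Finset (ℙ k (σ → k)))
    (hs : ∀ P ∈ s, ∀ f ∈ I, eval P.rep f = 0) {n : ℕ} (hn : s.card ≤ n) :
    s.card ≤ hilbertFunction I n := by
  classical
  let L : MvPolynomial σ k →ₗ[k] s → k := LinearMap.pi fun P => (aeval P.1.rep).toLinearMap
  have hL (f : MvPolynomial σ k) (P : s) : L f P = eval P.1.rep f := by simp [L, aeval_eq_eval]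
  have hsurj : (homogeneousSubmodule σ k n).map L = ⊤ := by
    rw [eq_top_iff, ← (Pi.basisFun k s).span_eq, Submodule.span_le]
    rintro _ ⟨P, rfl⟩
    obtain ⟨f, hf, hfP, hfs⟩ := exists_form_separating (s.erase P.1) (Finset.notMem_erase P.1 s)
      (s.card_erase_le.trans hn)
    refine ⟨C (eval P.1.rep f)⁻¹ * f, hf.C_mul _, funext fun Q => ?_⟩
    obtain rfl | hQP := eq_or_ne Q P
    · simp [hL, hfP]
    · simp [hL, hQP, hfs Q.1 (Finset.mem_erase.2 ⟨Subtype.coe_injective.ne hQP, Q.2⟩)]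
  calc s.card = finrank k ((homogeneousSubmodule σ k n).map L) := by
        rw [hsurj, finrank_top, finrank_fintype_fun_eq_card, Fintype.card_coe]
    _ ≤ hilbertFunction I n := finrank_map_homogeneousSubmodule_le L fun f hf _ =>
        funext fun P => (hL f P).trans (hs P.1 P.2 f hf)

theorem encard_projectiveZeros_inter_le {G H : MvPolynomial (Fin 3) k} {g h : ℕ}
    (hG : G.IsHomogeneous g) (hGp : Prime G) (hH : H.IsHomogeneous h) (hGH : ¬ G ∣ H) :
    (projectiveZeros G ∩ projectiveZeros H).encard ≤ (g * h : ℕ) := by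
  by_contra! hlt
  obtain ⟨t, hts, ht⟩ := Set.exists_subset_encard_eq (Order.add_one_le_of_lt hlt)
  have htfin : t.Finite := Set.finite_of_encard_eq_coe (k := g * h + 1) (by rw [ht]; rfl)
  lift t to Finset (ℙ k (Fin 3 → k)) using htfin
  have hcard : t.card = g * h + 1 := by
    rw [Set.encard_coe_eq_coe_finsetCard] at ht
    exact_mod_cast ht
  have hvanish : ∀ P ∈ t, ∀ f ∈ Ideal.span {G} ⊔ Ideal.span {H}, eval P.rep f = 0 := by
    intro P hP
    have hle : Ideal.span {G} ⊔ Ideal.span {H} ≤ RingHom.ker (eval P.rep) := by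
      simpa [Ideal.span_le, RingHom.mem_ker, projectiveZeros] using hts hP
    exact fun f hf => hle hf
  have := card_le_hilbertFunction t hvanish (n := g * h + 1 + g + h) (by omega)
  rw [hilbertFunction_span_singleton_sup_span_singleton hG hGp hH hGH] at this
  omega

end ProjectivePoints

section Derivations

variable {σ R A : Type*} [CommRing R] [CommRing A] [Algebra R A]

lemma derivation_aeval_eq_sum [Fintype σ] (D : Derivation R A A) (a : σ → A)
    (f : MvPolynomial σ R) :
    D (aeval a f) = ∑ i, aeval a (pderiv i f) * D (a i) := by
  classical
  induction f using MvPolynomial.induction_on with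
  | C r => simp [← algebraMap_eq]
  | add p q hp hq => simp only [map_add, hp, hq, add_mul, Finset.sum_add_distrib]
  | mul_X p j hp =>
    simp only [map_mul, aeval_X, Derivation.leibniz, hp, pderiv_X, map_add, smul_eq_mul, add_mul,
      Finset.sum_add_distrib, Finset.mul_sum]
    congr 1
    · simp [Pi.single_apply, apply_ite]
    · exact Finset.sum_congr rfl fun i _ => by ring

/-- The derivation induced on `A ⧸ I` by a derivation of `A` that preserves the ideal `I`. -/
def quotientDerivation (D : Derivation R A A) (I : Ideal A) (hD : ∀ f ∈ I, D f ∈ I) :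
    Derivation R (A ⧸ I) (A ⧸ I) :=
  Derivation.mk' ((I.restrictScalars R).mapQ (I.restrictScalars R) D.toLinearMap hD) <| by
    rintro ⟨a⟩ ⟨b⟩
    exact congrArg (Ideal.Quotient.mk I) (D.leibniz a b)

/-- The derivation of `A[X]` that acts on coefficients by `D` and kills `X`. -/
noncomputable def coeffDerivation (D : Derivation R A A) :
    Derivation R (Polynomial A) (Polynomial A) :=
  PolynomialModule.equivPolynomialSelf.compDer D.mapCoeffs

lemma coeff_coeffDerivation (D : Derivation R A A) (p : Polynomial A) (n : ℕ) :
    (coeffDerivation D p).coeff n = D (p.coeff n) :=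
  rfl

lemma coeffDerivation_C (D : Derivation R A A) (a : A) :
    coeffDerivation D (Polynomial.C a) = Polynomial.C (D a) := by
  ext n
  simp only [coeff_coeffDerivation, Polynomial.coeff_C, apply_ite D, map_zero]

lemma coeffDerivation_X (D : Derivation R A A) :
    coeffDerivation D (Polynomial.X : Polynomial A) = 0 := by
  ext n
  simp [coeff_coeffDerivation, Polynomial.coeff_X, apply_ite D]

/-- The polynomial in `t` obtained by restricting `f` to the line `t ↦ x + t v`. -/
noncomputable def restrictToLine (x v : σ → A) : MvPolynomial σ R →ₐ[R] Polynomial A :=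
  aeval fun i => Polynomial.C (x i) + Polynomial.C (v i) * Polynomial.X

lemma eval_restrictToLine (x v : σ → A) (t : A) (f : MvPolynomial σ R) :
    (restrictToLine x v f).eval t = aeval (fun i => x i + v i * t) f := by
  have h : ((Polynomial.aeval t).restrictScalars R).comp (restrictToLine x v) =
      aeval fun i => x i + v i * t := by
    ext i
    simp [restrictToLine]
  rw [← h, AlgHom.comp_apply, AlgHom.restrictScalars_apply, Polynomial.coe_aeval_eq_eval]

lemma natDegree_restrictToLine_le (x v : σ → A) (f : MvPolynomial σ R) :
    (restrictToLine x v f).natDegree ≤ f.totalDegree := by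
  have hdeg : (map (algebraMap R A) f).totalDegree ≤ f.totalDegree :=
    Finset.sup_mono (support_map_subset _ f)
  rw [restrictToLine, ← aeval_map_algebraMap A, ← mul_one f.totalDegree]
  exact aeval_natDegree_le _ hdeg _ fun i => by compute_degree

lemma natCast_ne_zero_of_natCast_factorial_ne_zero {d m : ℕ} (hfac : (d.factorial : A) ≠ 0)
    (hm0 : 0 < m) (hm : m ≤ d) : (m : A) ≠ 0 := fun h => hfac <| by
  obtain ⟨c, hc⟩ := Nat.dvd_factorial hm0 hm
  rw [hc, Nat.cast_mul, h, zero_mul]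

lemma linearIndependent_pair_of_mul_derivation_ne {k A : Type*} [Field k] [CommRing A] [IsDomain A]
    [Algebra k A] (D : Derivation k A A) {x y : A} (h : x * D y ≠ y * D x) :
    LinearIndependent k ![x, y] := by
  rw [← sub_ne_zero] at h
  refine LinearIndependent.pair_iff.2 fun s t hst => ?_
  have hD := congrArg D hst
  rw [map_add, D.map_smul, D.map_smul, map_zero] at hD
  rw [Algebra.smul_def, Algebra.smul_def] at hst hD
  constructor <;> refine (smul_eq_zero_iff_left h).1 ?_ <;> rw [Algebra.smul_def]
  · linear_combination D y * hst - y * hD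
  · linear_combination x * hD - D x * hst

section Stationary

variable [Finite σ] (D : Derivation R A A) {x : σ → A} {c : σ}

/-- When the direction of the vector `D x` is constant along `D`, the derivation
`D x_c ∂_D - (D x_c + t D² x_c) ∂_t` of `A[t]` kills `x + t D x`, hence the restriction of `f`. -/
lemma coeff_restrictToLine_rec (hstat : ∀ i, D (x c) * D (D (x i)) = D (x i) * D (D (x c)))
    (f : MvPolynomial σ R) (j : ℕ) :
    let P := restrictToLine x (fun i => D (x i)) f
    D (x c) * D (P.coeff j) =
      D (x c) * (P.coeff (j + 1) * (j + 1)) + D (D (x c)) * (P.coeff j * j) := by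
  intro P
  let E : Derivation R (Polynomial A) (Polynomial A) :=
    Polynomial.C (D (x c)) • coeffDerivation D -
      (Polynomial.C (D (x c)) + Polynomial.C (D (D (x c))) * Polynomial.X) •
        Polynomial.derivative'.restrictScalars R
  have hE_apply (p : Polynomial A) : E p = Polynomial.C (D (x c)) * coeffDerivation D p -
      (Polynomial.C (D (x c)) + Polynomial.C (D (D (x c))) * Polynomial.X) *
        Polynomial.derivative p := rfl
  have hE : E P = 0 := by
    have := Fintype.ofFinite σ
    refine (derivation_aeval_eq_sum E _ f).trans (Finset.sum_eq_zero fun i _ => ?_)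
    suffices E (Polynomial.C (x i) + Polynomial.C (D (x i)) * Polynomial.X) = 0 by
      rw [this, mul_zero]
    have := congrArg Polynomial.C (hstat i)
    simp only [map_mul] at this
    simp only [hE_apply, map_add, Derivation.leibniz, smul_eq_mul, coeffDerivation_C,
      coeffDerivation_X, Polynomial.derivative_C, Polynomial.derivative_C_mul_X]
    linear_combination Polynomial.X * this
  have hX : (Polynomial.C (D (D (x c))) * Polynomial.X * Polynomial.derivative P).coeff j =
      D (D (x c)) * (P.coeff j * j) := by
    cases j <;> simp [mul_assoc, Polynomial.coeff_derivative]
  have := congrArg (Polynomial.coeff · j) hE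
  simp only [hE_apply, add_mul, Polynomial.coeff_sub, Polynomial.coeff_add, Polynomial.coeff_C_mul,
    Polynomial.coeff_zero, Polynomial.coeff_derivative, coeff_coeffDerivation, hX] at this
  exact sub_eq_zero.1 this

lemma restrictToLine_eq_zero [IsDomain A] (hc : D (x c) ≠ 0)
    (hstat : ∀ i, D (x c) * D (D (x i)) = D (x i) * D (D (x c)))
    {f : MvPolynomial σ R} (hf : aeval x f = 0) (hfac : (f.totalDegree.factorial : A) ≠ 0) :
    restrictToLine x (fun i => D (x i)) f = 0 := by
  ext j
  obtain hlt | hj := lt_or_ge f.totalDegree j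
  · exact Polynomial.coeff_eq_zero_of_natDegree_lt
      ((natDegree_restrictToLine_le _ _ _).trans_lt hlt)
  induction j with
  | zero =>
    rw [Polynomial.coeff_zero_eq_eval_zero, eval_restrictToLine]
    simpa using hf
  | succ j ih =>
    have hrec := coeff_restrictToLine_rec D hstat f j
    have hj0 : (j + 1 : A) ≠ 0 := by
      exact_mod_cast natCast_ne_zero_of_natCast_factorial_ne_zero hfac j.succ_pos hj
    simpa [ih (by omega), hc, hj0] using hrec

end Stationary

end Derivations

section Divisibility

variable {σ k : Type*} [Field k] {F f : MvPolynomial σ k}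

lemma not_dvd_of_isHomogeneous_of_lt {d m : ℕ} (hF : F.IsHomogeneous d) (hf : f.IsHomogeneous m)
    (hlt : m < d) (hf0 : f ≠ 0) : ¬ F ∣ f := fun h => by
  have hF0 : F ≠ 0 := by
    rintro rfl
    exact hf0 (zero_dvd_iff.1 h)
  have := totalDegree_le_of_dvd_of_isDomain h hf0
  rw [hF.totalDegree hF0, hf.totalDegree hf0] at this
  omega

lemma not_dvd_pderiv {d : ℕ} (hF : F.IsHomogeneous d) {i : σ} (hi : pderiv i F ≠ 0) :
    ¬ F ∣ pderiv i F := by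
  have hd : d ≠ 0 := by
    rintro rfl
    rw [totalDegree_eq_zero_iff_eq_C.1 (Nat.le_zero.1 hF.totalDegree_le), pderiv_C] at hi
    exact hi rfl
  exact not_dvd_of_isHomogeneous_of_lt hF hF.pderiv (Nat.sub_one_lt hd) hi

lemma exists_eval_ne_zero_of_not_dvd [Finite σ] [IsAlgClosed k] (hF : Prime F) (h : ¬ F ∣ f) :
    ∃ Q : σ → k, eval Q F = 0 ∧ eval Q f ≠ 0 := by
  have := (Ideal.span_singleton_prime hF.ne_zero).2 hF
  rw [← Ideal.mem_span_singleton, ← IsPrime.vanishingIdeal_zeroLocus (K := k) (Ideal.span {F}),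
    mem_vanishingIdeal_iff] at h
  push Not at h
  obtain ⟨Q, hQ, hf⟩ := h
  refine ⟨Q, ?_, by rwa [aeval_eq_eval] at hf⟩
  simpa [aeval_eq_eval] using hQ F (Ideal.mem_span_singleton_self F)

end Divisibility

section Lines

variable {k : Type*} [Field k] {F : MvPolynomial (Fin 3) k} {d : ℕ}

/-- The linear form with coefficient vector `L`. -/
noncomputable def linearForm (L : Fin 3 → k) : MvPolynomial (Fin 3) k :=
  ∑ i, C (L i) * X i

lemma isHomogeneous_linearForm (L : Fin 3 → k) : (linearForm L).IsHomogeneous 1 :=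
  IsHomogeneous.sum _ _ _ fun _ _ => isHomogeneous_C_mul_X _ _

lemma eval_linearForm (L Q : Fin 3 → k) : eval Q (linearForm L) = L ⬝ᵥ Q := by
  simp [linearForm, dotProduct]

lemma linearForm_ne_zero {L : Fin 3 → k} (hL : L ≠ 0) : linearForm L ≠ 0 := fun h => hL <| by
  ext i
  simpa [eval_linearForm] using congrArg (eval (Pi.single i 1)) h

lemma exists_eval_add_smul_ne_zero [Infinite k] (hF : F.IsHomogeneous d) (hFp : Prime F)
    (hd : 2 ≤ d) {Q v : Fin 3 → k} (hQv : Q ⨯₃ v ≠ 0) : ∃ t : k, eval (Q + t • v) F ≠ 0 := by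
  by_contra! hall
  have hcross (t : k) : (Q + t • v) ⨯₃ v = Q ⨯₃ v := by simp
  have hne (t : k) : Q + t • v ≠ 0 := fun h => hQv (by rw [← hcross t, h, map_zero]; rfl)
  let P (t : k) : ℙ k (Fin 3 → k) := Projectivization.mk k _ (hne t)
  have hP_mem (t : k) : P t ∈ projectiveZeros F ∩ projectiveZeros (linearForm (Q ⨯₃ v)) := by
    refine ⟨(mk_mem_projectiveZeros_iff hF _).2 (hall t),
      (mk_mem_projectiveZeros_iff (isHomogeneous_linearForm _) _).2 ?_⟩
    rw [eval_linearForm, dotProduct_comm, add_dotProduct, smul_dotProduct, dot_self_cross,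
      dot_cross_self, smul_zero, add_zero]
  have hP_inj : Function.Injective P := fun t s hts => by
    obtain ⟨c, hc⟩ := (Projectivization.mk_eq_mk_iff' k _ _ _ _).1 hts
    have hc1 : c = 1 := by
      have := congrArg (· ⨯₃ v) hc
      simp only [map_smul, LinearMap.smul_apply, hcross] at this
      exact smul_left_injective k hQv (by simpa using this)
    have hv : v ≠ 0 := by
      rintro rfl
      exact hQv (map_zero _)
    rw [hc1, one_smul, add_right_inj] at hc
    exact (smul_left_injective k hv hc).symm
  have hbound := encard_projectiveZeros_inter_le hF hFp (isHomogeneous_linearForm (Q ⨯₃ v))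
    (not_dvd_of_isHomogeneous_of_lt hF (isHomogeneous_linearForm _) hd (linearForm_ne_zero hQv))
  exact (Set.infinite_range_of_injective hP_inj).mono (Set.range_subset_iff.2 hP_mem)
    (Set.finite_of_encard_le_coe hbound)

end Lines

section Nondegeneracy

variable {k : Type*} [Field k] {F : MvPolynomial (Fin 3) k} {d : ℕ}

/-- The homogeneous coordinate ring of the plane curve `F = 0`. -/
abbrev CoordinateRing (F : MvPolynomial (Fin 3) k) : Type _ :=
  MvPolynomial (Fin 3) k ⧸ Ideal.span {F}

lemma isDomain_coordinateRing (hF : Prime F) : IsDomain (CoordinateRing F) :=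
  have := (Ideal.span_singleton_prime hF.ne_zero).2 hF
  inferInstance

/-- The derivation `F₁ ∂₀ - F₀ ∂₁` of the coordinate ring of `F = 0`, where `Fᵢ = ∂ᵢ F`: a vector
field tangent to the curve. -/
noncomputable def tangentDerivation (F : MvPolynomial (Fin 3) k) :
    Derivation k (CoordinateRing F) (CoordinateRing F) :=
  quotientDerivation (pderiv 1 F • pderiv 0 - pderiv 0 F • pderiv 1) (Ideal.span {F}) <| by
    simp only [Ideal.mem_span_singleton]
    rintro _ ⟨c, rfl⟩
    refine ⟨pderiv 1 F * pderiv 0 c - pderiv 0 F * pderiv 1 c, ?_⟩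
    simp only [Derivation.sub_apply, Derivation.smul_apply, Derivation.leibniz, smul_eq_mul]
    ring

lemma tangentDerivation_mk (F f : MvPolynomial (Fin 3) k) :
    tangentDerivation F (Ideal.Quotient.mk _ f) =
      Ideal.Quotient.mk _ (pderiv 1 F * pderiv 0 f - pderiv 0 F * pderiv 1 f) :=
  rfl

lemma aeval_mk_X (I : Ideal (MvPolynomial (Fin 3) k)) (f : MvPolynomial (Fin 3) k) :
    aeval (fun i => Ideal.Quotient.mk I (X i)) f = Ideal.Quotient.mk I f :=
  (DFunLike.congr_fun (aeval_unique (Ideal.Quotient.mkₐ k I)) f).symm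

lemma eval_eq_zero_of_mk_eq_zero {f : MvPolynomial (Fin 3) k}
    (hf : Ideal.Quotient.mk (Ideal.span {F}) f = 0) {Q : Fin 3 → k} (hQ : eval Q F = 0) :
    eval Q f = 0 := by
  obtain ⟨c, rfl⟩ := Ideal.mem_span_singleton.1 (Ideal.Quotient.eq_zero_iff_mem.1 hf)
  rw [map_mul, hQ, zero_mul]

lemma eval_add_smul_eq_zero_of_restrictToLine_eq_zero {v : Fin 3 → MvPolynomial (Fin 3) k}
    {f : MvPolynomial (Fin 3) k} (hf : restrictToLine
      (fun i => Ideal.Quotient.mk (Ideal.span {F}) (X i)) (fun i => Ideal.Quotient.mk _ (v i))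
      f = 0)
    {Q : Fin 3 → k} (hQ : eval Q F = 0) (t : k) : eval (Q + t • fun i => eval Q (v i)) f = 0 := by
  have hmk : Ideal.Quotient.mk (Ideal.span {F}) (aeval (fun i => X i + v i * C t) f) = 0 := by
    have := eval_restrictToLine (fun i => Ideal.Quotient.mk (Ideal.span {F}) (X i))
      (fun i => Ideal.Quotient.mk _ (v i)) (Ideal.Quotient.mk _ (C t)) f
    rw [hf, Polynomial.eval_zero] at this
    rw [this, ← Ideal.Quotient.mkₐ_eq_mk k, comp_aeval_apply]
    simp only [map_add, map_mul]
  have heval := eval_eq_zero_of_mk_eq_zero hmk hQ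
  simp only [← aeval_eq_eval] at heval ⊢
  rw [comp_aeval_apply] at heval
  simpa [mul_comm, Pi.add_def, Pi.smul_def, aeval_eq_eval] using heval

lemma exists_eval_pderiv_ne_zero [IsAlgClosed k] (hF : F.IsHomogeneous d) (hFp : Prime F)
    (hd : 2 ≤ d) (hdk : (d : k) ≠ 0) :
    ∃ Q : Fin 3 → k, eval Q F = 0 ∧ Q 2 ≠ 0 ∧
      (eval Q (pderiv 0 F) ≠ 0 ∨ eval Q (pderiv 1 F) ≠ 0) := by
  have hX : ¬ F ∣ X 2 := not_dvd_of_isHomogeneous_of_lt hF (isHomogeneous_X k 2) hd (X_ne_zero 2)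
  obtain ⟨i, hi, hFi⟩ : ∃ i, (i = 0 ∨ i = 1) ∧ ¬ F ∣ pderiv i F := by
    have hpderiv (i : Fin 3) (h : F ∣ pderiv i F) : pderiv i F = 0 :=
      by_contra fun h0 => not_dvd_pderiv hF h0 h
    by_contra! hall
    have h0 := hpderiv 0 (hall 0 (.inl rfl))
    have h1 := hpderiv 1 (hall 1 (.inr rfl))
    have hEuler := hF.sum_X_mul_pderiv
    rw [Fin.sum_univ_three, h0, h1, mul_zero, mul_zero, zero_add, zero_add] at hEuler
    have h2 := hpderiv 2 <| (hFp.dvd_or_dvd (hEuler ▸ dvd_nsmul_of_dvd d dvd_rfl)).resolve_left hX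
    rw [h2, mul_zero, ← Nat.cast_smul_eq_nsmul k] at hEuler
    exact (smul_ne_zero hdk hFp.ne_zero) hEuler.symm
  obtain ⟨Q, hQ, hQi⟩ := exists_eval_ne_zero_of_not_dvd hFp
    (fun h => (hFp.dvd_or_dvd h).elim hX hFi)
  rw [map_mul, eval_X, mul_ne_zero_iff] at hQi
  exact ⟨Q, hQ, hQi.1, hi.imp (by rintro rfl; exact hQi.2) (by rintro rfl; exact hQi.2)⟩

/-- The vector field along which `tangentDerivation F` differentiates. -/
noncomputable def tangentField (F : MvPolynomial (Fin 3) k) : Fin 3 → MvPolynomial (Fin 3) k :=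
  ![pderiv 1 F, -pderiv 0 F, 0]

lemma tangentDerivation_mk_X (F : MvPolynomial (Fin 3) k) (i : Fin 3) :
    tangentDerivation F (Ideal.Quotient.mk _ (X i)) = Ideal.Quotient.mk _ (tangentField F i) := by
  fin_cases i <;> simp [tangentDerivation_mk, tangentField]

lemma restrictToLine_tangentField_eq_zero (hF : F.IsHomogeneous d) (hFp : Prime F)
    (hfac : (d.factorial : k) ≠ 0) {Q : Fin 3 → k} (hQ : eval Q F = 0) {c : Fin 3}
    (hc : eval Q (tangentField F c) ≠ 0)
    (hstat : Ideal.Quotient.mk _ (pderiv 0 F) *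
        tangentDerivation F (Ideal.Quotient.mk _ (pderiv 1 F)) =
      Ideal.Quotient.mk _ (pderiv 1 F) *
        tangentDerivation F (Ideal.Quotient.mk _ (pderiv 0 F))) :
    restrictToLine (fun i => Ideal.Quotient.mk (Ideal.span {F}) (X i))
      (fun i => Ideal.Quotient.mk _ (tangentField F i)) F = 0 := by
  have := isDomain_coordinateRing hFp
  simp only [← tangentDerivation_mk_X]
  refine restrictToLine_eq_zero (tangentDerivation F) (c := c) ?_ (fun i => ?_) ?_ ?_
  · rw [tangentDerivation_mk_X]
    exact fun h => hc (eval_eq_zero_of_mk_eq_zero h hQ)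
  · simp only [tangentDerivation_mk_X]
    fin_cases i <;> fin_cases c <;>
      simp only [tangentField, Fin.zero_eta, Fin.mk_one, Fin.reduceFinMk, Matrix.cons_val, map_neg,
        map_zero] <;>
      first | ring1 | linear_combination -hstat | linear_combination hstat
  · rw [aeval_mk_X, Ideal.Quotient.mk_singleton_self]
  · rw [hF.totalDegree hFp.ne_zero, ← map_natCast (algebraMap k (CoordinateRing F))]
    exact (map_ne_zero_iff _ (FaithfulSMul.algebraMap_injective k (CoordinateRing F))).2 hfac

/-- If the tangent direction were stationary along the curve, then the curve would contain its
tangent lines. -/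
theorem gradient_not_stationary [IsAlgClosed k] (hF : F.IsHomogeneous d) (hFp : Prime F)
    (hd : 2 ≤ d) (hfac : (d.factorial : k) ≠ 0) :
    Ideal.Quotient.mk _ (pderiv 0 F) * tangentDerivation F (Ideal.Quotient.mk _ (pderiv 1 F)) ≠
      Ideal.Quotient.mk _ (pderiv 1 F) *
        tangentDerivation F (Ideal.Quotient.mk _ (pderiv 0 F)) := by
  intro hstat
  obtain ⟨Q, hQ, hQ2, hQi⟩ := exists_eval_pderiv_ne_zero hF hFp hd
    (natCast_ne_zero_of_natCast_factorial_ne_zero hfac (by omega) le_rfl)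
  obtain ⟨c, hc⟩ : ∃ c, eval Q (tangentField F c) ≠ 0 :=
    hQi.elim (fun h => ⟨1, by simpa [tangentField] using h⟩) (fun h => ⟨0, h⟩)
  have hQv : Q ⨯₃ (fun i => eval Q (tangentField F i)) ≠ 0 := fun h => by
    have h0 : eval Q (pderiv 0 F) = 0 := by
      simpa [tangentField, cross_apply, hQ2] using congrFun h 0
    have h1 : eval Q (pderiv 1 F) = 0 := by
      simpa [tangentField, cross_apply, hQ2] using congrFun h 1
    exact hQi.elim (· h0) (· h1)
  obtain ⟨t, ht⟩ := exists_eval_add_smul_ne_zero hF hFp hd hQv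
  exact ht (eval_add_smul_eq_zero_of_restrictToLine_eq_zero
    (restrictToLine_tangentField_eq_zero hF hFp hfac hQ hc hstat) hQ t)

end Nondegeneracy

section MinimalRelations

variable {σ k K : Type*} [Field k] [Field K] [Algebra k K]

lemma exists_homogeneousComponent_ne_zero {f : MvPolynomial σ k} (hf : f ≠ 0) :
    ∃ n ≤ f.totalDegree, homogeneousComponent n f ≠ 0 := by
  by_contra! h
  rw [← sum_homogeneousComponent f] at hf
  exact hf (Finset.sum_eq_zero fun n hn => h n (Nat.lt_succ_iff.1 (Finset.mem_range.1 hn)))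

lemma exists_isHomogeneous_forall_le_totalDegree {I : Ideal (MvPolynomial σ k)}
    (hI : I.IsHomogeneous (homogeneousSubmodule σ k)) (hI0 : I ≠ ⊥) :
    ∃ (g : ℕ) (G : MvPolynomial σ k), G.IsHomogeneous g ∧ G ∈ I ∧ G ≠ 0 ∧
      ∀ f ∈ I, f ≠ 0 → g ≤ f.totalDegree := by
  classical
  have hcomp {f : MvPolynomial σ k} (hf : f ∈ I) (hf0 : f ≠ 0) : ∃ n ≤ f.totalDegree,
      ∃ G : MvPolynomial σ k, G.IsHomogeneous n ∧ G ∈ I ∧ G ≠ 0 := by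
    obtain ⟨n, hn, hne⟩ := exists_homogeneousComponent_ne_zero hf0
    exact ⟨n, hn, _, homogeneousComponent_isHomogeneous n f,
      homogeneousComponent_mem_of_mem hI hf n, hne⟩
  obtain ⟨f, hf, hf0⟩ := Submodule.exists_mem_ne_zero_of_ne_bot hI0
  obtain ⟨n, -, hn⟩ := hcomp hf hf0
  have hex : ∃ n, ∃ G : MvPolynomial σ k, G.IsHomogeneous n ∧ G ∈ I ∧ G ≠ 0 := ⟨n, hn⟩
  obtain ⟨G, hG, hGI, hG0⟩ := Nat.find_spec hex
  refine ⟨Nat.find hex, G, hG, hGI, hG0, fun f hf hf0 => ?_⟩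
  obtain ⟨n, hle, hn⟩ := hcomp hf hf0
  exact (Nat.find_min' hex hn).trans hle

variable {a : σ → K} {F : MvPolynomial σ k}

lemma pderiv_ne_zero_of_natCast_ne_zero {m : σ →₀ ℕ} (hm : m ∈ F.support) {i : σ}
    (hi : (m i : k) ≠ 0) : pderiv i F ≠ 0 := fun h => by
  have hmi : m i ≠ 0 := fun h0 => hi (by rw [h0, Nat.cast_zero])
  have hcoeff := coeff_pderiv (i := i) F (m - Finsupp.single i 1)
  have hcast : (m - Finsupp.single i 1 : σ →₀ ℕ) i + (1 : k) = m i := by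
    rw [Finsupp.tsub_apply, Finsupp.single_eq_same]
    exact_mod_cast congrArg (Nat.cast (R := k)) (Nat.succ_pred hmi)
  rw [h, coeff_zero, hcast,
    tsub_add_cancel_of_le (Finsupp.single_le_iff.2 (Nat.one_le_iff_ne_zero.2 hmi))] at hcoeff
  exact mul_ne_zero (mem_support_iff.1 hm) hi hcoeff.symm

lemma exists_pderiv_ne_zero_of_forall_totalDegree_le [PerfectField k]
    (hmin : ∀ f : MvPolynomial σ k, f ≠ 0 → aeval a f = 0 → F.totalDegree ≤ f.totalDegree)
    (hF0 : F ≠ 0) (hFa : aeval a F = 0) : ∃ i, pderiv i F ≠ 0 := by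
  obtain h0 | ⟨p, hp, hpk⟩ := CharP.exists' k
  · obtain ⟨m, hm, i, hi⟩ : ∃ m ∈ F.support, ∃ i, m i ≠ 0 := by
      by_contra! h
      have hFC := totalDegree_eq_zero_iff_eq_C.1 (F.totalDegree_eq_zero_iff.2 h)
      rw [hFC, aeval_C, map_eq_zero] at hFa
      exact hF0 (by rw [hFC, hFa, C_0])
    exact ⟨i, pderiv_ne_zero_of_natCast_ne_zero hm (Nat.cast_ne_zero.2 hi)⟩
  · have : CharP K p := .of_ringHom_of_ne_zero (algebraMap k K) p hp.out.ne_zero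
    have : ExpChar k p := .prime hp.out
    have hpow (s : Finset K) (hs : LinearIndepOn k id (s : Set K)) :
        LinearIndepOn k (· ^ p) (s : Set K) := by
      refine hs.map_of_injective_injective (frobeniusEquiv k p).symm
        (frobenius K p).toAddMonoidHom ?_ ?_ fun r m => ?_
      · simp
      · simp
      · change ((frobeniusEquiv k p).symm r • m) ^ p = r • m ^ p
        rw [smul_pow, frobeniusEquiv_symm_pow_p]
    obtain ⟨i, m, hm, hpm⟩ :=
      exists_mem_support_not_dvd_of_forall_totalDegree_le p hp.out hpow hmin hF0 hFa
    exact ⟨i, pderiv_ne_zero_of_natCast_ne_zero hm fun h =>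
      hpm ((CharP.cast_eq_zero_iff k p _).1 h)⟩

variable [IsAlgClosed k]

lemma transcendental_div_of_linearIndependent {x y : K} (h : LinearIndependent k ![x, y]) :
    Transcendental k (x / y) := fun halg => by
  have hbot := IntermediateField.eq_bot_of_isAlgClosed_of_isAlgebraic (algebraicClosure k K)
  obtain ⟨c, hc⟩ := IntermediateField.mem_bot.1 (hbot ▸ mem_algebraicClosure_iff.2 halg)
  have hy : y ≠ 0 := h.ne_zero 1
  rw [LinearIndependent.pair_symm_iff, LinearIndependent.pair_iff' hy] at h
  exact h c (by rw [Algebra.smul_def, hc, div_mul_cancel₀ _ hy])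

lemma linearIndependent_pow_mul_pow {x y : K} (h : LinearIndependent k ![x, y]) (n : ℕ) :
    LinearIndependent k fun i : Fin (n + 1) => x ^ (i : ℕ) * y ^ (n - i) := by
  have hy : y ≠ 0 := h.ne_zero 1
  have hpow : LinearIndependent k fun i : ℕ => (x / y) ^ i := by
    simpa [Function.comp_def] using (Polynomial.basisMonomials k).linearIndependent.map'
      (Polynomial.aeval (x / y)).toLinearMap (LinearMap.ker_eq_bot.2
        (transcendental_iff_injective.1 (transcendental_div_of_linearIndependent h)))
  have hmul := (hpow.comp _ (Fin.val_injective (n := n + 1))).map' (LinearMap.mulLeft k (y ^ n))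
    (LinearMap.ker_eq_bot.2 (mul_right_injective₀ (pow_ne_zero n hy)))
  have heq (i : Fin (n + 1)) : y ^ n * (x / y) ^ (i : ℕ) = x ^ (i : ℕ) * y ^ (n - i) := by
    rw [← pow_sub_mul_pow y (Nat.lt_succ_iff.1 i.2), mul_assoc, ← mul_pow, mul_div_cancel₀ x hy,
      mul_comm]
  exact (funext heq : (fun i : Fin (n + 1) => y ^ n * (x / y) ^ (i : ℕ)) = _) ▸ hmul

lemma succ_le_hilbertFunction [Finite σ] {I : Ideal (MvPolynomial σ k)}
    (hI : ∀ f ∈ I, aeval a f = 0) {i j : σ} (h : LinearIndependent k ![a i, a j]) (n : ℕ) :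
    n + 1 ≤ hilbertFunction I n := by
  let L := (aeval (R := k) a).toLinearMap
  refine le_trans ?_ (finrank_map_homogeneousSubmodule_le L fun f hf _ => hI f hf)
  let w (s : Fin (n + 1)) : (homogeneousSubmodule σ k n).map L :=
    ⟨a i ^ (s : ℕ) * a j ^ (n - s), X i ^ (s : ℕ) * X j ^ (n - s), by
      have := (isHomogeneous_X_pow (R := k) i s).mul (isHomogeneous_X_pow j (n - s))
      rwa [Nat.add_sub_cancel' (Nat.lt_succ_iff.1 s.2)] at this, by simp [L]⟩
  have hw : LinearIndependent k w :=
    .of_comp (Submodule.subtype _) (linearIndependent_pow_mul_pow h n)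
  simpa using hw.fintype_card_le_finrank

end MinimalRelations

section Substitution

variable {σ τ k : Type*} [Field k] {p : σ → MvPolynomial τ k} {m : ℕ}

lemma homogeneousComponent_aeval_mul (hm : m ≠ 0) (hp : ∀ i, (p i).IsHomogeneous m)
    (f : MvPolynomial σ k) (n : ℕ) :
    homogeneousComponent (m * n) (aeval p f) = aeval p (homogeneousComponent n f) := by
  nth_rw 1 [← sum_homogeneousComponent f]
  have hcomp (l : ℕ) : (aeval p (homogeneousComponent l f)).IsHomogeneous (m * l) :=
    (homogeneousComponent_isHomogeneous l f).aeval p hp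
  simp only [map_sum, homogeneousComponent_of_mem (hcomp _), Nat.mul_right_inj hm,
    Finset.sum_ite_eq, Finset.mem_range, Nat.lt_succ_iff]
  split_ifs with h
  · rfl
  · rw [homogeneousComponent_eq_zero n f (not_le.1 h), map_zero]

lemma isHomogeneous_comap_aeval (hm : m ≠ 0) (hp : ∀ i, (p i).IsHomogeneous m)
    {J : Ideal (MvPolynomial τ k)} (hJ : J.IsHomogeneous (homogeneousSubmodule τ k)) :
    (J.comap (aeval (R := k) p)).IsHomogeneous (homogeneousSubmodule σ k) := fun n f hf => by
  rw [← DirectSum.Decomposition.decompose'_eq, decomposition.decompose'_apply, Ideal.mem_comap,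
    ← homogeneousComponent_aeval_mul hm hp]
  exact homogeneousComponent_mem_of_mem hJ hf _

lemma hilbertFunction_comap_aeval_le [Finite σ] [Finite τ] (hp : ∀ i, (p i).IsHomogeneous m)
    (J : Ideal (MvPolynomial τ k)) (n : ℕ) :
    hilbertFunction (J.comap (aeval (R := k) p)) n ≤ hilbertFunction J (m * n) := by
  let L := (Ideal.Quotient.mkₐ k J).toLinearMap ∘ₗ (aeval (R := k) p).toLinearMap
  calc hilbertFunction (J.comap (aeval (R := k) p)) n
      ≤ finrank k ((homogeneousSubmodule σ k n).map L) := by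
        refine finrank_map_le_of_inf_ker_le fun f hf => ?_
        rw [ker_mkₐ_toLinearMap]
        exact Ideal.mem_comap.2 (Ideal.Quotient.eq_zero_iff_mem.1 hf.2)
    _ ≤ hilbertFunction J (m * n) := by
        rw [Submodule.map_comp]
        refine Submodule.finrank_mono (Submodule.map_mono ?_)
        rintro _ ⟨f, hf, rfl⟩
        exact IsHomogeneous.aeval hf p hp

end Substitution

section Growth

variable {k : Type*} [Field k] {F G : MvPolynomial (Fin 3) k} {d g m : ℕ}

lemma ne_bot_of_hilbertFunction_le (hF : F.IsHomogeneous d) (hF0 : F ≠ 0) (hm : m ≠ 0)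
    {I : Ideal (MvPolynomial (Fin 3) k)}
    (hI : ∀ n, hilbertFunction I n ≤ hilbertFunction (Ideal.span {F}) (m * n)) : I ≠ ⊥ := by
  rintro rfl
  have hle := hI (2 * d * m + d)
  obtain ⟨r, hr⟩ : ∃ r, m * (2 * d * m + d) = r + d :=
    Nat.exists_eq_add_of_le' (le_mul_of_one_le_of_le (Nat.one_le_iff_ne_zero.2 hm) (by omega))
  have hplane := two_mul_finrank_homogeneousSubmodule_fin_three k (2 * d * m + d)
  have hcurve := two_mul_hilbertFunction_span_singleton hF hF0 r
  rw [hilbertFunction_bot, hr] at hle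
  have hquad : (2 * d * m + d + 1) * (2 * d * m + d + 2) ≤ d * (2 * r + d + 3) := by omega
  have hcancel : d * (2 * r + d + 3) + d * d = 2 * d * (m * (2 * d * m + d)) + 3 * d := by
    rw [hr]
    ring
  nlinarith [hquad, Nat.zero_le (d * d), Nat.zero_le (d * m), Nat.zero_le (d * (2 * d * m + d))]

lemma le_mul_of_hilbertFunction_span_singleton_le (hF : F.IsHomogeneous d) (hF0 : F ≠ 0)
    (hG : G.IsHomogeneous g) (hG0 : G ≠ 0) (hm : m ≠ 0)
    (h : ∀ n, hilbertFunction (Ideal.span {G}) n ≤ hilbertFunction (Ideal.span {F}) (m * n)) :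
    g ≤ d * m := by
  by_contra! hlt
  have hle := h (d * m * g + 2 * d + g)
  obtain ⟨r, hr⟩ : ∃ r, m * (d * m * g + 2 * d + g) = r + d :=
    Nat.exists_eq_add_of_le' (le_mul_of_one_le_of_le (Nat.one_le_iff_ne_zero.2 hm) (by omega))
  have hGn := two_mul_hilbertFunction_span_singleton hG hG0 (d * m * g + 2 * d)
  have hFn := two_mul_hilbertFunction_span_singleton hF hF0 r
  rw [hr] at hle
  have hlin : g * (2 * (d * m * g + 2 * d) + g + 3) ≤ d * (2 * r + d + 3) := by omega
  nlinarith [hlin, Nat.mul_le_mul_right (2 * (d * m * g + 2 * d)) hlt]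

lemma le_span_singleton_of_lt_hilbertFunction {I : Ideal (MvPolynomial (Fin 3) k)}
    (hI : I.IsHomogeneous (homogeneousSubmodule (Fin 3) k)) (hgrowth : ∀ n, n < hilbertFunction I n)
    (hG : G.IsHomogeneous g) (hGp : Prime G) (hGI : G ∈ I) : I ≤ Ideal.span {G} := by
  have hforms {h : ℕ} {H : MvPolynomial (Fin 3) k} (hH : H.IsHomogeneous h) (hHI : H ∈ I) :
      G ∣ H := by
    by_contra hGH
    have hle := hilbertFunction_anti (g * h + g + h) (I := Ideal.span {G} ⊔ Ideal.span {H})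
      (sup_le ((Ideal.span_singleton_le_iff_mem I).2 hGI)
        ((Ideal.span_singleton_le_iff_mem I).2 hHI))
    rw [hilbertFunction_span_singleton_sup_span_singleton hG hGp hH hGH] at hle
    have := hgrowth (g * h + g + h)
    omega
  intro f hf
  rw [← sum_homogeneousComponent f]
  exact sum_mem fun n _ => Ideal.mem_span_singleton.2 <|
    hforms (homogeneousComponent_isHomogeneous n f) (homogeneousComponent_mem_of_mem hI hf n)

end Growth

section DualCurve

variable {k : Type*} [Field k] {F : MvPolynomial (Fin 3) k} {d : ℕ}

/-- The Gauss map of the curve `F = 0` on polynomials: substitution of the partial derivatives of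
`F` for the variables. -/
noncomputable def gradHom (F : MvPolynomial (Fin 3) k) :
    MvPolynomial (Fin 3) k →ₐ[k] MvPolynomial (Fin 3) k :=
  aeval fun i => pderiv i F

/-- The ideal of the dual curve of `F = 0`, the closure of its image under the Gauss map. -/
noncomputable def dualIdeal (F : MvPolynomial (Fin 3) k) : Ideal (MvPolynomial (Fin 3) k) :=
  (Ideal.span {F}).comap (gradHom F)

lemma mem_dualIdeal_iff_dvd {f : MvPolynomial (Fin 3) k} : f ∈ dualIdeal F ↔ F ∣ gradHom F f :=
  Ideal.mem_span_singleton

lemma gradHom_X (F : MvPolynomial (Fin 3) k) (i : Fin 3) : gradHom F (X i) = pderiv i F :=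
  aeval_X _ i

lemma mk_gradHom (F f : MvPolynomial (Fin 3) k) :
    Ideal.Quotient.mk (Ideal.span {F}) (gradHom F f) =
      aeval (fun i => Ideal.Quotient.mk (Ideal.span {F}) (pderiv i F)) f :=
  comp_aeval_apply _ (Ideal.Quotient.mkₐ k (Ideal.span {F})) f

lemma mem_dualIdeal_iff_aeval_eq_zero (K : Type*) [Field K] [Algebra k K]
    [Algebra (CoordinateRing F) K] [IsScalarTower k (CoordinateRing F) K]
    [FaithfulSMul (CoordinateRing F) K] {f : MvPolynomial (Fin 3) k} :
    f ∈ dualIdeal F ↔ aeval (fun i => algebraMap (CoordinateRing F) K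
      (Ideal.Quotient.mk _ (pderiv i F))) f = 0 := by
  have hcomp := aeval_algebraMap_apply K
    (fun i => (Ideal.Quotient.mk (Ideal.span {F}) (pderiv i F) : CoordinateRing F)) f
  rw [Function.comp_def, ← mk_gradHom] at hcomp
  rw [hcomp, FaithfulSMul.algebraMap_eq_zero_iff, Ideal.Quotient.eq_zero_iff_mem]
  rfl

theorem exists_dualIdeal_eq_span_singleton [IsAlgClosed k] (hF : F.IsHomogeneous d) (hFp : Prime F)
    (hd : 2 ≤ d) (hfac : (d.factorial : k) ≠ 0) :
    ∃ (g : ℕ) (G : MvPolynomial (Fin 3) k), G.IsHomogeneous g ∧ dualIdeal F = Ideal.span {G} ∧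
      g ≤ d * (d - 1) ∧ ∃ i, pderiv i G ≠ 0 := by
  have hd1 : d - 1 ≠ 0 := by omega
  have hpd (i : Fin 3) : (pderiv i F).IsHomogeneous (d - 1) := hF.pderiv
  have hhom : (dualIdeal F).IsHomogeneous (homogeneousSubmodule (Fin 3) k) :=
    isHomogeneous_comap_aeval hd1 hpd (Ideal.homogeneous_span _ _ (by simpa using ⟨d, hF⟩))
  have hupper (n : ℕ) : hilbertFunction (dualIdeal F) n ≤
      hilbertFunction (Ideal.span {F}) ((d - 1) * n) := hilbertFunction_comap_aeval_le hpd _ n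
  obtain ⟨g, G, hG, hGI, hG0, hmin⟩ := exists_isHomogeneous_forall_le_totalDegree hhom
    (ne_bot_of_hilbertFunction_le hF hFp.ne_zero hd1 hupper)
  have := isDomain_coordinateRing hFp
  let K := FractionRing (CoordinateRing F)
  let a (i : Fin 3) : K := algebraMap _ K (Ideal.Quotient.mk (Ideal.span {F}) (pderiv i F))
  have hmem (f : MvPolynomial (Fin 3) k) : f ∈ dualIdeal F ↔ aeval a f = 0 :=
    mem_dualIdeal_iff_aeval_eq_zero K
  have hmin' (f : MvPolynomial (Fin 3) k) (hf0 : f ≠ 0) (hf : aeval a f = 0) :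
      G.totalDegree ≤ f.totalDegree := by
    rw [hG.totalDegree hG0]
    exact hmin f ((hmem f).2 hf) hf0
  have hGa := (hmem G).1 hGI
  have hindep : LinearIndependent k ![a 0, a 1] := by
    have := (linearIndependent_pair_of_mul_derivation_ne _
      (gradient_not_stationary hF hFp hd hfac)).map_injOn
      (IsScalarTower.toAlgHom k (CoordinateRing F) K).toLinearMap
      (FaithfulSMul.algebraMap_injective (CoordinateRing F) K).injOn
    rwa [← FinVec.map_eq] at this
  have hspan : dualIdeal F = Ideal.span {G} :=
    (le_span_singleton_of_lt_hilbertFunction hhom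
      (succ_le_hilbertFunction (fun f hf => (hmem f).1 hf) hindep) hG
      (irreducible_of_forall_totalDegree_le hmin' hG0 hGa).prime hGI).antisymm
      ((Ideal.span_singleton_le_iff_mem _).2 hGI)
  exact ⟨g, G, hG, hspan, le_mul_of_hilbertFunction_span_singleton_le hF hFp.ne_zero hG hG0 hd1
    (hspan ▸ hupper), exists_pderiv_ne_zero_of_forall_totalDegree_le hmin' hG0 hGa⟩

end DualCurve

section Biduality

variable {k : Type*} [Field k] {F G : MvPolynomial (Fin 3) k} {d g : ℕ}

lemma mk_grad_dotProduct_mk_X (hF : F.IsHomogeneous d) :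
    (fun i => (Ideal.Quotient.mk (Ideal.span {F}) (pderiv i F))) ⬝ᵥ
      (fun i => Ideal.Quotient.mk (Ideal.span {F}) (X i)) = 0 := by
  simp_rw [dotProduct, ← map_mul, ← map_sum, mul_comm _ (X _), hF.sum_X_mul_pderiv, map_nsmul,
    Ideal.Quotient.mk_singleton_self, nsmul_zero]

/-- Reflexivity of the dual curve: a point of the curve is the tangent line of the dual curve at its
tangent line. -/
theorem biduality [IsAlgClosed k] (hF : F.IsHomogeneous d) (hFp : Prime F) (hd : 2 ≤ d)
    (hfac : (d.factorial : k) ≠ 0) (hG : G.IsHomogeneous g) (hGF : G ∈ dualIdeal F) :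
    Proportional (fun i => Ideal.Quotient.mk (Ideal.span {F}) (gradHom F (pderiv i G)))
      (fun i => Ideal.Quotient.mk (Ideal.span {F}) (X i)) := by
  have := isDomain_coordinateRing hFp
  let mk := Ideal.Quotient.mk (Ideal.span {F})
  let D := tangentDerivation F
  have hG0 : mk (gradHom F G) = 0 := Ideal.Quotient.eq_zero_iff_mem.2 hGF
  have hau : (fun i => mk (pderiv i F)) ⬝ᵥ (fun i => mk (gradHom F (pderiv i G))) = 0 := by
    simp_rw [dotProduct, ← gradHom_X F, ← map_mul, ← map_sum]
    rw [hG.sum_X_mul_pderiv, map_nsmul, map_nsmul, hG0, nsmul_zero]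
  have hbu : (fun i => D (mk (pderiv i F))) ⬝ᵥ (fun i => mk (gradHom F (pderiv i G))) = 0 := by
    rw [dotProduct_comm, dotProduct]
    simp_rw [mk, mk_gradHom]
    rw [← derivation_aeval_eq_sum, ← mk_gradHom, hG0, map_zero]
  have hbx : (fun i => D (mk (pderiv i F))) ⬝ᵥ (fun i => mk (X i)) = 0 := by
    have hD := congrArg D (mk_grad_dotProduct_mk_X hF)
    simp only [dotProduct, Fin.sum_univ_three, map_add, Derivation.leibniz, D,
      tangentDerivation_mk_X, smul_eq_mul, map_zero, tangentField, Matrix.cons_val, map_neg] at hD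
    simp only [dotProduct, Fin.sum_univ_three, D, mk]
    linear_combination hD
  refine (proportional_cross hau hbu).trans (proportional_cross (mk_grad_dotProduct_mk_X hF) hbx)
    fun h => gradient_not_stationary hF hFp hd hfac ?_
  simpa [cross_apply, sub_eq_zero] using congrFun h 2

lemma eval_gradHom (F f : MvPolynomial (Fin 3) k) (Q : Fin 3 → k) :
    eval Q (gradHom F f) = eval (tangentVec F Q) f := by
  simp only [← aeval_eq_eval, gradHom, comp_aeval_apply]
  rfl

lemma proportional_eval_tangentVec [IsAlgClosed k] (hF : F.IsHomogeneous d) (hFp : Prime F)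
    (hd : 2 ≤ d) (hfac : (d.factorial : k) ≠ 0) (hG : G.IsHomogeneous g) (hGF : G ∈ dualIdeal F)
    {Q : Fin 3 → k} (hQ : eval Q F = 0) :
    Proportional (fun i => eval (tangentVec F Q) (pderiv i G)) Q := fun i j => by
  have h := biduality hF hFp hd hfac hG hGF i j
  rw [← map_mul, ← map_mul, ← sub_eq_zero, ← map_sub] at h
  simpa [eval_gradHom, sub_eq_zero] using eval_eq_zero_of_mk_eq_zero h hQ

end Biduality

section Bitangents

lemma two_mul_encard_le_of_rightUnique {α β : Type*} {Z : Set α} {B : Set β} {R : α → β → Prop}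
    (hR : Relator.RightUnique R) (hB : ∀ b ∈ B, ∃ x ∈ Z, ∃ y ∈ Z, x ≠ y ∧ R x b ∧ R y b) :
    2 * B.encard ≤ Z.encard := by
  choose x hxZ y hyZ hxy hx hy using hB
  have hinj : Function.Injective (Sum.elim (fun b : B => (⟨x b b.2, hxZ b b.2⟩ : Z))
      fun b : B => ⟨y b b.2, hyZ b b.2⟩) := by
    refine Function.Injective.sumElim (fun b c h => ?_) (fun b c h => ?_) fun b c h => ?_ <;>
      rw [Subtype.mk.injEq] at h
    · exact Subtype.ext (hR (hx b b.2) (h ▸ hx c c.2))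
    · exact Subtype.ext (hR (hy b b.2) (h ▸ hy c c.2))
    · obtain rfl : b = c := Subtype.ext (hR (hx b b.2) (h ▸ hy c c.2))
      exact hxy b b.2 h
  calc 2 * B.encard = ENat.card (B ⊕ B) := by rw [ENat.card_sum, two_mul]; rfl
    _ ≤ Z.encard := ENat.card_le_card_of_injective hinj

variable {k : Type*} [Field k] {F G : MvPolynomial (Fin 3) k} {d g : ℕ}

/-- The projective line with coefficient vector `L` is the tangent line of the curve `F = 0` at its
smooth point `P`. -/
def IsTangentAt (F : MvPolynomial (Fin 3) k) (P L : ℙ k (Fin 3 → k)) : Prop :=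
  P ∈ projectiveZeros F ∧ ∃ hv : tangentVec F P.rep ≠ 0, L = Projectivization.mk k _ hv

lemma isTangentAt_rightUnique (F : MvPolynomial (Fin 3) k) :
    Relator.RightUnique (IsTangentAt F) := by
  rintro P _ _ ⟨-, _, rfl⟩ ⟨-, _, rfl⟩
  rfl

lemma tangentVec_smul (hF : F.IsHomogeneous d) (c : k) (Q : Fin 3 → k) :
    tangentVec F (c • Q) = c ^ (d - 1) • tangentVec F Q :=
  funext fun _ => eval_smul_of_isHomogeneous hF.pderiv c Q

lemma isTangentAt_mk (hF : F.IsHomogeneous d) {Q : Fin 3 → k} (hQ : Q ≠ 0) (hFQ : eval Q F = 0)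
    (hv : tangentVec F Q ≠ 0) :
    IsTangentAt F (Projectivization.mk k Q hQ) (Projectivization.mk k _ hv) := by
  obtain ⟨c, hc⟩ := Projectivization.exists_smul_eq_mk_rep k Q hQ
  have hrep := tangentVec_smul hF c Q
  rw [← Units.smul_def, hc] at hrep
  have hcd : (c : k) ^ (d - 1) ≠ 0 := pow_ne_zero _ c.ne_zero
  refine ⟨(mk_mem_projectiveZeros_iff hF hQ).2 hFQ, hrep ▸ smul_ne_zero hcd hv, ?_⟩
  rw [Projectivization.mk_eq_mk_iff']
  exact ⟨(c ^ (d - 1))⁻¹, by simp [hrep, hcd]⟩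

lemma exists_isTangentAt_of_isBitangent (hF : F.IsHomogeneous d) {L : ℙ k (Fin 3 → k)}
    (hL : IsBitangent F L) : ∃ P₁ P₂, P₁ ≠ P₂ ∧ IsTangentAt F P₁ L ∧ IsTangentAt F P₂ L := by
  obtain ⟨Q₁, Q₂, h₁, h₂, hne, hv₁, hv₂, hL₁, hL₂⟩ := hL
  exact ⟨_, _, hne, hL₁ ▸ isTangentAt_mk hF h₁.1 h₁.2.1 hv₁,
    hL₂ ▸ isTangentAt_mk hF h₂.1 h₂.2.1 hv₂⟩

lemma eval_pderiv_tangentVec_eq_zero [IsAlgClosed k] (hF : F.IsHomogeneous d) (hFp : Prime F)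
    (hd : 2 ≤ d) (hfac : (d.factorial : k) ≠ 0) (hG : G.IsHomogeneous g) (hGF : G ∈ dualIdeal F)
    {P₁ P₂ L : ℙ k (Fin 3 → k)} (hP : P₁ ≠ P₂) (h₁ : IsTangentAt F P₁ L)
    (h₂ : IsTangentAt F P₂ L) (i : Fin 3) : eval (tangentVec F P₁.rep) (pderiv i G) = 0 := by
  obtain ⟨hFP₁, hv₁, hL₁⟩ := h₁
  obtain ⟨hFP₂, hv₂, hL₂⟩ := h₂
  by_contra hi
  obtain ⟨c, hc⟩ := (Projectivization.mk_eq_mk_iff' k _ _ hv₂ hv₁).1 (hL₂.symm.trans hL₁)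
  have hc0 : c ^ (g - 1) ≠ 0 := pow_ne_zero _ fun h0 => hv₂ (by rw [← hc, h0, zero_smul])
  have hP₁ := proportional_eval_tangentVec hF hFp hd hfac hG hGF hFP₁
  have hP₂ : Proportional (fun i => eval (tangentVec F P₁.rep) (pderiv i G)) P₂.rep := by
    intro i j
    have := proportional_eval_tangentVec hF hFp hd hfac hG hGF hFP₂ i j
    simp only [← hc, eval_smul_of_isHomogeneous hG.pderiv] at this
    exact mul_left_cancel₀ hc0 (by linear_combination this)
  refine hP ?_
  rw [← P₁.mk_rep, ← P₂.mk_rep, mk_eq_mk_iff_proportional]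
  exact hP₁.symm.trans hP₂.symm fun h => hi (congrFun h i)

lemma two_mul_encard_isBitangent_le [IsAlgClosed k] (hF : F.IsHomogeneous d) (hFp : Prime F)
    (hd : 2 ≤ d) (hfac : (d.factorial : k) ≠ 0) (hG : G.IsHomogeneous g)
    (hspan : dualIdeal F = Ideal.span {G}) {i : Fin 3} (hi : pderiv i G ≠ 0) :
    2 * {L | IsBitangent F L}.encard ≤ (d * ((d - 1) * (g - 1)) : ℕ) := by
  have hGF : G ∈ dualIdeal F := hspan ▸ Ideal.mem_span_singleton_self G
  have hFH : ¬ F ∣ gradHom F (pderiv i G) := by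
    rw [← mem_dualIdeal_iff_dvd, hspan, Ideal.mem_span_singleton]
    exact not_dvd_pderiv hG hi
  have hH : (gradHom F (pderiv i G)).IsHomogeneous ((d - 1) * (g - 1)) :=
    hG.pderiv.aeval _ fun _ => hF.pderiv
  have hmem {P₁ P₂ L} (hne : P₁ ≠ P₂) (h₁ : IsTangentAt F P₁ L) (h₂ : IsTangentAt F P₂ L) :
      P₁ ∈ projectiveZeros F ∩ projectiveZeros (gradHom F (pderiv i G)) :=
    ⟨h₁.1, (eval_gradHom ..).trans
      (eval_pderiv_tangentVec_eq_zero hF hFp hd hfac hG hGF hne h₁ h₂ i)⟩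
  refine (two_mul_encard_le_of_rightUnique (isTangentAt_rightUnique F) fun L hL => ?_).trans
    (encard_projectiveZeros_inter_le hF hFp hH hFH)
  obtain ⟨P₁, P₂, hne, h₁, h₂⟩ := exists_isTangentAt_of_isBitangent hF hL
  exact ⟨P₁, hmem hne h₁ h₂, P₂, hmem hne.symm h₂ h₁, hne, h₁, h₂⟩

lemma natCast_factorial_ne_zero_of_lt_ringChar (h : d < ringChar k) : (d.factorial : k) ≠ 0 := by
  have : Fact (ringChar k).Prime :=
    ⟨(CharP.char_is_prime_or_zero k (ringChar k)).resolve_right (by omega)⟩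
  exact ((IsUnit.natCast_factorial_iff_of_charP (ringChar k)).2 h).ne_zero

end Bitangents

end PlaneCurve

open PlaneCurve

theorem bitangents_finite_and_bounded_general {k : Type*} [Field k] [IsAlgClosed k] {d : ℕ}
    (hd : 2 ≤ d) {F : MvPolynomial (Fin 3) k} (hF : F.IsHomogeneous d) (hirr : Irreducible F)
    (hfac : (d.factorial : k) ≠ 0) :
    {L : Projectivization k (Fin 3 → k) | IsBitangent F L}.Finite ∧
    2 * {L : Projectivization k (Fin 3 → k) | IsBitangent F L}.ncard ≤ d ^ 2 * (d - 1) ^ 2 := by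
  obtain ⟨g, G, hG, hspan, hg, i, hi⟩ :=
    exists_dualIdeal_eq_span_singleton hF hirr.prime hd hfac
  have hcount := two_mul_encard_isBitangent_le hF hirr.prime hd hfac hG hspan hi
  have hfin : {L | IsBitangent F L}.Finite :=
    Set.finite_of_encard_le_coe ((le_mul_of_one_le_left' one_le_two).trans hcount)
  refine ⟨hfin, ?_⟩
  rw [← hfin.cast_ncard_eq] at hcount
  calc 2 * {L | IsBitangent F L}.ncard ≤ d * ((d - 1) * (g - 1)) := by exact_mod_cast hcount
    _ ≤ d * ((d - 1) * (d * (d - 1))) := by gcongr; omega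
    _ = d ^ 2 * (d - 1) ^ 2 := by ring

theorem bitangents_finite_and_bounded
    (K : Type*) [Field K] [Fintype K] (d : ℕ) (hd : 2 ≤ d)
    (F : MvPolynomial (Fin 3) K) (hF : F.IsHomogeneous d)
    (hirr : Irreducible (MvPolynomial.map (algebraMap K (AlgebraicClosure K)) F))
    (hpd : d < ringChar K) :
    {L : Projectivization (AlgebraicClosure K) (Fin 3 → AlgebraicClosure K) |
        IsBitangent (MvPolynomial.map (algebraMap K (AlgebraicClosure K)) F) L}.Finite ∧
    2 * {L : Projectivization (AlgebraicClosure K) (Fin 3 → AlgebraicClosure K) |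
        IsBitangent (MvPolynomial.map (algebraMap K (AlgebraicClosure K)) F) L}.ncard
      ≤ d ^ 2 * (d - 1) ^ 2 :=
  bitangents_finite_and_bounded_general hd (hF.map _) hirr
    (natCast_factorial_ne_zero_of_lt_ringChar (Algebra.ringChar_eq K (AlgebraicClosure K) ▸ hpd))
end
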